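/- arXiv:math/9905016 — 4 statements merged into one kernel-verified Lean document; each statement's English description precedes it below -/
import Mathlib

section
/- Assume the Open Colouring Axiom (OCA). Then there is no Boolean-algebra embedding (injective Boolean homomorphism) of the measure algebra ℳ into P(ℕ)/fin. -/
open Set MeasureTheory
open scoped ENNReal

namespace Paper

/-- The Open Colouring Axiom: for every separable metrizable space `X` and every
partition `[X]² = K₀ ∪ K₁` of the unordered pairs with `K₀` open (coded here as a
symmetric open set `K ⊆ X × X` off the diagonal), either there is an uncountable
`K₀`-homogeneous set, or `X` is a countable union of `K₁`-homogeneous sets. -/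
def OCA : Prop :=
  ∀ (X : Type) [MetricSpace X] [TopologicalSpace.SeparableSpace X],
    ∀ K : Set (X × X), IsOpen K → (∀ a b : X, (a, b) ∈ K → (b, a) ∈ K) →
      (∀ a : X, (a, a) ∉ K) →
      (∃ Y : Set X, ¬Y.Countable ∧ ∀ a ∈ Y, ∀ b ∈ Y, a ≠ b → (a, b) ∈ K) ∨
      (∃ Y : ℕ → Set X, (⋃ n, Y n) = Set.univ ∧
        ∀ (n : ℕ), ∀ a ∈ Y n, ∀ b ∈ Y n, a ≠ b → (a, b) ∉ K)

/-- `X` and `Y` agree modulo a finite set. -/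
def AlmostEq {α : Type} (X Y : Set α) : Prop := (symmDiff X Y).Finite

/-- the "equal mod finite" setoid on `Set α` -/
def finSetoid (α : Type) : Setoid (Set α) where
  r X Y := (symmDiff X Y).Finite
  iseqv := by
    constructor
    · intro X; simp
    · intro X Y h; rwa [symmDiff_comm]
    · intro X Y Z h1 h2
      exact (h1.union h2).subset (symmDiff_triangle X Y Z)

/-- the quotient Boolean algebra `P(α)/fin` -/
def PFin (α : Type) : Type := Quotient (finSetoid α)

/-- the class of `X` in `P(α)/fin` -/
def PFin.mk {α : Type} (X : Set α) : PFin α := Quotient.mk (finSetoid α) X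

/-- join in `P(α)/fin` -/
def PFin.sup {α : Type} : PFin α → PFin α → PFin α :=
  Quotient.lift₂ (fun X Y => PFin.mk (X ∪ Y))
    (by
      intro X Y X' Y' hX hY
      refine Quotient.sound ?_
      have hX' : (symmDiff X X').Finite := hX
      have hY' : (symmDiff Y Y').Finite := hY
      show (symmDiff (X ∪ Y) (X' ∪ Y')).Finite
      refine (hX'.union hY').subset ?_
      intro x hx
      simp only [Set.mem_symmDiff, Set.mem_union] at hx ⊢
      tauto)

/-- meet in `P(α)/fin` -/
def PFin.inf {α : Type} : PFin α → PFin α → PFin α :=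
  Quotient.lift₂ (fun X Y => PFin.mk (X ∩ Y))
    (by
      intro X Y X' Y' hX hY
      refine Quotient.sound ?_
      have hX' : (symmDiff X X').Finite := hX
      have hY' : (symmDiff Y Y').Finite := hY
      show (symmDiff (X ∩ Y) (X' ∩ Y')).Finite
      refine (hX'.union hY').subset ?_
      intro x hx
      simp only [Set.mem_symmDiff, Set.mem_inter_iff, Set.mem_union] at hx ⊢
      tauto)

/-- complement in `P(α)/fin` -/
def PFin.compl {α : Type} : PFin α → PFin α :=
  Quotient.lift (fun X => PFin.mk Xᶜ)
    (by
      intro X Y h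
      refine Quotient.sound ?_
      have h' : (symmDiff X Y).Finite := h
      show (symmDiff Xᶜ Yᶜ).Finite
      have e : symmDiff Xᶜ Yᶜ = symmDiff X Y := by
        ext x; simp only [Set.mem_symmDiff, Set.mem_compl_iff]; tauto
      rw [e]; exact h')

/-- bottom of `P(α)/fin` -/
def PFin.bot {α : Type} : PFin α := PFin.mk (∅ : Set α)

/-- top of `P(α)/fin` -/
def PFin.top {α : Type} : PFin α := PFin.mk (Set.univ : Set α)

/-- the Cantor set `2^ω` -/
abbrev Cant : Type := ℕ → Bool

/-- the space `C = ω × 2^ω` -/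
abbrev CSp : Type := ℕ × Cant

/-- the cylinder set `[s] = {x : s ⊂ x}` determined by a finite binary sequence -/
def cyl (s : List Bool) : Set Cant := {x | ∀ i : Fin s.length, x i.1 = s.get i}

/-- the basic clopen set `{n} × [s]` of `C` -/
def basic (n : ℕ) (s : List Bool) : Set CSp := {n} ×ˢ cyl s

lemma measurableSet_cyl (s : List Bool) : MeasurableSet (cyl s) := by
  have h : cyl s = ⋂ i : Fin s.length, (fun x : Cant => x i.1) ⁻¹' {s.get i} := by
    ext x; simp [cyl]
  rw [h]
  exact MeasurableSet.iInter fun i => (measurable_pi_apply i.1) (measurableSet_singleton _)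

lemma measurableSet_basic (n : ℕ) (s : List Bool) : MeasurableSet (basic n s) :=
  (measurableSet_singleton n).prod (measurableSet_cyl s)

/-- a measure on `C` is the right one when it gives each basic set `{n} × [s]`
measure `2^{-|s|}` (this determines the measure on all Borel sets). -/
def IsMeasureOK (μ : Measure CSp) : Prop :=
  ∀ (n : ℕ) (s : List Bool), μ (basic n s) = (2 : ℝ≥0∞)⁻¹ ^ s.length

/-- Borel subsets of `C` -/
abbrev BSet : Type := {A : Set CSp // MeasurableSet A}

/-- the "equal modulo a null set" setoid on Borel sets of `C` -/
def measSetoid (μ : Measure CSp) : Setoid BSet where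
  r A B := μ (symmDiff (A : Set CSp) (B : Set CSp)) = 0
  iseqv := by
    constructor
    · intro A; simp
    · intro A B h; rwa [symmDiff_comm]
    · intro A B C h1 h2
      exact measure_mono_null (symmDiff_triangle (A : Set CSp) (B : Set CSp) (C : Set CSp))
        (measure_union_null h1 h2)

/-- the measure algebra `ℳ = Bor(C)/𝒩` -/
def MAlg (μ : Measure CSp) : Type := Quotient (measSetoid μ)

/-- the class of a Borel set in the measure algebra -/
def MAlg.mk (μ : Measure CSp) (A : BSet) : MAlg μ := Quotient.mk (measSetoid μ) A

variable {μ : Measure CSp}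

/-- join in the measure algebra -/
def MAlg.sup : MAlg μ → MAlg μ → MAlg μ :=
  Quotient.lift₂ (fun A B : BSet => MAlg.mk μ ⟨(A : Set CSp) ∪ (B : Set CSp), A.2.union B.2⟩)
    (by
      intro A B A' B' hA hB
      refine Quotient.sound ?_
      have hA' : μ (symmDiff (A : Set CSp) (A' : Set CSp)) = 0 := hA
      have hB' : μ (symmDiff (B : Set CSp) (B' : Set CSp)) = 0 := hB
      show μ (symmDiff ((A : Set CSp) ∪ (B : Set CSp)) ((A' : Set CSp) ∪ (B' : Set CSp))) = 0
      refine measure_mono_null ?_ (measure_union_null hA' hB')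
      intro x hx
      simp only [Set.mem_symmDiff, Set.mem_union] at hx ⊢
      tauto)

/-- meet in the measure algebra -/
def MAlg.inf : MAlg μ → MAlg μ → MAlg μ :=
  Quotient.lift₂ (fun A B : BSet => MAlg.mk μ ⟨(A : Set CSp) ∩ (B : Set CSp), A.2.inter B.2⟩)
    (by
      intro A B A' B' hA hB
      refine Quotient.sound ?_
      have hA' : μ (symmDiff (A : Set CSp) (A' : Set CSp)) = 0 := hA
      have hB' : μ (symmDiff (B : Set CSp) (B' : Set CSp)) = 0 := hB
      show μ (symmDiff ((A : Set CSp) ∩ (B : Set CSp)) ((A' : Set CSp) ∩ (B' : Set CSp))) = 0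
      refine measure_mono_null ?_ (measure_union_null hA' hB')
      intro x hx
      simp only [Set.mem_symmDiff, Set.mem_inter_iff, Set.mem_union] at hx ⊢
      tauto)

/-- complement in the measure algebra -/
def MAlg.compl : MAlg μ → MAlg μ :=
  Quotient.lift (fun A : BSet => MAlg.mk μ ⟨(A : Set CSp)ᶜ, A.2.compl⟩)
    (by
      intro A B h
      refine Quotient.sound ?_
      have h' : μ (symmDiff (A : Set CSp) (B : Set CSp)) = 0 := h
      show μ (symmDiff (A : Set CSp)ᶜ (B : Set CSp)ᶜ) = 0
      have e : symmDiff (A : Set CSp)ᶜ (B : Set CSp)ᶜ = symmDiff (A : Set CSp) (B : Set CSp) := by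
        ext x; simp only [Set.mem_symmDiff, Set.mem_compl_iff]; tauto
      rw [e]; exact h')

/-- bottom of the measure algebra -/
def MAlg.bot : MAlg μ := MAlg.mk μ ⟨∅, MeasurableSet.empty⟩

/-- top of the measure algebra -/
def MAlg.top : MAlg μ := MAlg.mk μ ⟨Set.univ, MeasurableSet.univ⟩

/-- `φ : ℳ → P(ℕ)/fin` is a Boolean-algebra embedding -/
structure IsEmbedding (μ : Measure CSp) (φ : MAlg μ → PFin ℕ) : Prop where
  injective : Function.Injective φ
  map_sup : ∀ a b, φ (MAlg.sup a b) = PFin.sup (φ a) (φ b)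
  map_inf : ∀ a b, φ (MAlg.inf a b) = PFin.inf (φ a) (φ b)
  map_compl : ∀ a, φ (MAlg.compl a) = PFin.compl (φ a)
  map_bot : φ MAlg.bot = PFin.bot
  map_top : φ MAlg.top = PFin.top

/-- agreement of two sequences below `l` -/
def agr {B : Type} (l : ℕ) (P Q : ℕ → B) : Prop := ∀ k < l, P k = Q k

/-- `p` below `l`, and `q` from `l` on -/
def mix {B : Type} (l : ℕ) (p q : ℕ → B) : ℕ → B := fun k => if k < l then p k else q k

lemma mix_lt {B : Type} {l k : ℕ} (p q : ℕ → B) (h : k < l) : mix l p q k = p k := by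
  simp [mix, h]

lemma mix_ge {B : Type} {l k : ℕ} (p q : ℕ → B) (h : l ≤ k) : mix l p q k = q k := by
  simp [mix, not_lt.2 h]

lemma agr_mix {B : Type} (l : ℕ) (p q : ℕ → B) : agr l p (mix l p q) :=
  fun _ hk => (mix_lt p q hk).symm

lemma agr.mono {B : Type} {l l' : ℕ} {P Q : ℕ → B} (h : agr l' P Q) (hl : l ≤ l') : agr l P Q :=
  fun k hk => h k (lt_of_lt_of_le hk hl)

lemma core {B : Type} [BooleanAlgebra B] (Yj Y1 Y2 : Set (ℕ → B)) (a : (ℕ → B) → Prop)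
    (cj : ∀ P ∈ Yj, ∃ l, ∀ Q ∈ Yj, agr l P Q → (a Q ↔ a P))
    (c1 : ∀ P ∈ Y1, ∃ l, ∀ Q ∈ Y1, agr l P Q → (a Q ↔ a P))
    (c2 : ∀ P ∈ Y2, ∃ l, ∀ Q ∈ Y2, agr l P Q → (a Q ↔ a P))
    (Ok : ℕ → B → Prop) (hObot : ∀ k, Ok k ⊥)
    (l : ℕ) (v w1 w2 t : ℕ → B) (ht : ∀ k, t k = v k ⊔ w1 k ⊔ w2 k) (hv : ∀ k, Ok k (v k))
    (dens : ∀ (L : ℕ) (V' W1' W2' : ℕ → B), (∀ k, Ok k (V' k)) → agr l v V' → agr l w1 W1' →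
      agr l w2 W2' → ∃ V W1 W2, agr L V' V ∧ agr L W1' W1 ∧ agr L W2' W2 ∧
        (V ⊔ W1 ⊔ W2) ∈ Yj ∧ W1 ∈ Y1 ∧ W2 ∈ Y2 ∧ (a (V ⊔ W1 ⊔ W2) ↔ a W1 ∨ a W2))
    (P1 : ℕ → B) (hP1 : P1 ∈ Y1) (haP1 : ¬ a P1) (hP1w : agr l w1 P1)
    (P2 : ℕ → B) (hP2 : P2 ∈ Y2) (haP2 : ¬ a P2) (hP2w : agr l w2 P2)
    (U2 : ℕ → B) (hU2 : U2 ∈ Yj) (haU2 : a U2) (hU2t : agr l t U2)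
    (S : Type) [Fintype S] (p : S → B) (hp : Finset.univ.sup p = ⊤)
    (hgood : ∀ s l2, l ≤ l2 → (∀ Q ∈ Yj, agr l2 (mix l t (fun k => U2 k ⊓ p s)) Q → a Q) →
      ∃ r l3, agr l t r ∧ l ≤ l3 ∧ (∀ k, l ≤ k → k < l3 → Ok k (r k)) ∧
        ∀ Q ∈ Yj, agr l3 r Q → a Q) : False := by
  -- density of `Yj`
  have hOmix : ∀ k, Ok k (mix l v ⊥ k) := by
    intro k
    by_cases hk : k < l
    · rw [mix_lt _ _ hk]; exact hv k
    · rw [mix_ge _ _ (not_lt.1 hk)]; exact hObot k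
  have densj : ∀ L u, agr l t u → ∃ Q ∈ Yj, agr L u Q := by
    intro L u hu
    obtain ⟨V, W1, W2, hV, hW1, hW2, hj, -, -, -⟩ := dens L (mix l v ⊥) (mix l w1 u) (mix l w2 u)
      hOmix (agr_mix _ _ _) (agr_mix _ _ _) (agr_mix _ _ _)
    refine ⟨_, hj, ?_⟩
    intro k hk
    simp only [Pi.sup_apply]
    rw [← hV k hk, ← hW1 k hk, ← hW2 k hk]
    by_cases hkl : k < l
    · rw [mix_lt _ _ hkl, mix_lt _ _ hkl, mix_lt _ _ hkl, ← ht, hu k hkl]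
    · rw [mix_ge _ _ (not_lt.1 hkl), mix_ge _ _ (not_lt.1 hkl), mix_ge _ _ (not_lt.1 hkl)]
      simp
  have h1 : ∀ L u u', l ≤ L → agr l t u → (∀ Q ∈ Yj, agr L u Q → ¬ a Q) →
      (∀ k, l ≤ k → u' k ≤ u k) → (∀ Q ∈ Y1, agr L (mix l w1 u') Q → ¬ a Q) := by
    intro L u u' hL hu hF hle Q hQ hag haQ
    obtain ⟨l1, hl1⟩ := c1 Q hQ
    obtain ⟨V, W1, W2, hV, hW1, hW2, hj, hy1, -, he⟩ := dens (max L l1) (mix l v ⊥) Q (mix l w2 u)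
      hOmix (agr_mix _ _ _) (fun k hk => by rw [← hag k (by omega), mix_lt _ _ hk]) (agr_mix _ _ _)
    have haW1 : a W1 := (hl1 W1 hy1 (hW1.mono (le_max_right _ _))).2 haQ
    refine hF _ hj ?_ (he.2 (Or.inl haW1))
    intro k hk
    have hk' : k < max L l1 := lt_of_lt_of_le hk (le_max_left _ _)
    simp only [Pi.sup_apply]
    rw [← hV k hk', ← hW1 k hk', ← hW2 k hk', ← hag k hk]
    by_cases hkl : k < l
    · rw [mix_lt _ _ hkl, mix_lt _ _ hkl, mix_lt _ _ hkl, ← ht, hu k hkl]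
    · rw [mix_ge _ _ (not_lt.1 hkl), mix_ge _ _ (not_lt.1 hkl), mix_ge _ _ (not_lt.1 hkl)]
      simp [hle k (not_lt.1 hkl)]
  have h1' : ∀ L u u', l ≤ L → agr l t u → (∀ Q ∈ Yj, agr L u Q → ¬ a Q) →
      (∀ k, l ≤ k → u' k ≤ u k) → (∀ Q ∈ Y2, agr L (mix l w2 u') Q → ¬ a Q) := by
    intro L u u' hL hu hF hle Q hQ hag haQ
    obtain ⟨l1, hl1⟩ := c2 Q hQ
    obtain ⟨V, W1, W2, hV, hW1, hW2, hj, -, hy2, he⟩ := dens (max L l1) (mix l v ⊥) (mix l w1 u) Q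
      hOmix (agr_mix _ _ _) (agr_mix _ _ _) (fun k hk => by rw [← hag k (by omega), mix_lt _ _ hk])
    have haW2 : a W2 := (hl1 W2 hy2 (hW2.mono (le_max_right _ _))).2 haQ
    refine hF _ hj ?_ (he.2 (Or.inr haW2))
    intro k hk
    have hk' : k < max L l1 := lt_of_lt_of_le hk (le_max_left _ _)
    simp only [Pi.sup_apply]
    rw [← hV k hk', ← hW1 k hk', ← hW2 k hk', ← hag k hk]
    by_cases hkl : k < l
    · rw [mix_lt _ _ hkl, mix_lt _ _ hkl, mix_lt _ _ hkl, ← ht, hu k hkl]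
    · rw [mix_ge _ _ (not_lt.1 hkl), mix_ge _ _ (not_lt.1 hkl), mix_ge _ _ (not_lt.1 hkl)]
      simp [hle k (not_lt.1 hkl)]
  have h2 : ∀ L u u', l ≤ L → (∀ Q ∈ Y1, agr L (mix l w1 u) Q → ¬ a Q) →
      (∀ Q ∈ Y2, agr L (mix l w2 u') Q → ¬ a Q) →
      (∀ Q ∈ Yj, agr L (mix l t (u ⊔ u')) Q → ¬ a Q) := by
    intro L u u' hL hF1 hF2 Q hQ hag haQ
    obtain ⟨l1, hl1⟩ := cj Q hQ
    obtain ⟨V, W1, W2, hV, hW1, hW2, hj, hy1, hy2, he⟩ := dens (max L l1) (mix l v ⊥)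
      (mix l w1 (mix L u Q)) (mix l w2 (mix L u' Q))
      hOmix (agr_mix _ _ _) (agr_mix _ _ _) (agr_mix _ _ _)
    have key : ∀ (w u W : ℕ → B), agr (max L l1) (mix l w (mix L u Q)) W →
        agr L (mix l w u) W := by
      intro w u W h k hk
      rw [← h k (lt_of_lt_of_le hk (le_max_left _ _))]
      by_cases hkl : k < l
      · rw [mix_lt _ _ hkl, mix_lt _ _ hkl]
      · rw [mix_ge _ _ (not_lt.1 hkl), mix_ge _ _ (not_lt.1 hkl), mix_lt _ _ hk]
    have n1 := hF1 W1 hy1 (key _ _ _ hW1)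
    have n2 := hF2 W2 hy2 (key _ _ _ hW2)
    have haU : a (V ⊔ W1 ⊔ W2) := by
      refine (hl1 _ hj ?_).2 haQ
      intro k hk
      have hk' : k < max L l1 := lt_of_lt_of_le hk (le_max_right _ _)
      simp only [Pi.sup_apply]
      rw [← hV k hk', ← hW1 k hk', ← hW2 k hk']
      by_cases hkl : k < l
      · rw [mix_lt _ _ hkl, mix_lt _ _ hkl, mix_lt _ _ hkl, ← ht, ← hag k (by omega),
          mix_lt _ _ hkl]
      · rw [mix_ge _ _ (not_lt.1 hkl), mix_ge _ _ (not_lt.1 hkl), mix_ge _ _ (not_lt.1 hkl)]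
        by_cases hkL : k < L
        · rw [mix_lt _ _ hkL, mix_lt _ _ hkL, ← hag k hkL, mix_ge _ _ (not_lt.1 hkl)]
          simp
        · rw [mix_ge _ _ (not_lt.1 hkL), mix_ge _ _ (not_lt.1 hkL)]
          simp
    rcases he.1 haU with h | h
    · exact n1 h
    · exact n2 h
  have h4 : ∀ L u u', l ≤ L → agr l t u → agr l t u' → (∀ Q ∈ Yj, agr L u Q → ¬ a Q) →
      (∀ Q ∈ Yj, agr L u' Q → ¬ a Q) → (∀ Q ∈ Yj, agr L (mix l t (u ⊔ u')) Q → ¬ a Q) := by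
    intro L u u' hL hu hu' hF hF'
    exact h2 L u u' hL (h1 L u u hL hu hF (fun _ _ => le_rfl))
      (h1' L u' u' hL hu' hF' (fun _ _ => le_rfl))
  have h3 : ∀ L u u', l ≤ L → agr l t u → (∀ k, l ≤ k → u' k ≤ u k) →
      (∀ Q ∈ Yj, agr L u Q → ¬ a Q) → (∀ Q ∈ Yj, agr L (mix l t u') Q → ¬ a Q) := by
    intro L u u' hL hu hle hF
    have := h2 L u' u' hL (h1 L u u' hL hu hF hle) (h1' L u u' hL hu hF hle)
    simpa using this
  -- h5
  obtain ⟨l20, hl20⟩ := cj U2 hU2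
  set l2 := max l20 l with hl2
  have hU2a : ∀ Q ∈ Yj, agr l2 U2 Q → a Q := fun Q hQ h =>
    (hl20 Q hQ (h.mono (le_max_left _ _))).2 haU2
  have h5 : ∃ s, ∀ Q ∈ Yj, agr l2 (mix l t (fun k => U2 k ⊓ p s)) Q → a Q := by
    by_contra hcon
    push Not at hcon
    choose P hPY hPag hPa using hcon
    choose M hM using fun s => cj (P s) (hPY s)
    set L := max l2 (Finset.univ.sup M) with hLdef
    have hFm : ∀ s, ∀ Q ∈ Yj, agr L (P s) Q → ¬ a Q := by
      intro s Q hQ h haQ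
      refine hPa s ((hM s Q hQ (h.mono ?_)).1 haQ)
      exact (Finset.le_sup (f := M) (Finset.mem_univ s)).trans (le_max_right _ _)
    have hPt : ∀ s, agr l t (P s) := by
      intro s k hk
      rw [← hPag s k (lt_of_lt_of_le hk (le_max_right _ _)), mix_lt _ _ hk]
    have hlL : l ≤ L := (le_max_right _ _).trans (le_max_left _ _)
    have hall : ∀ T : Finset S, T.Nonempty →
        ∀ Q ∈ Yj, agr L (mix l t (fun k => T.sup (fun s => P s k))) Q → ¬ a Q := by
      intro T hT
      induction hT using Finset.Nonempty.cons_induction with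
      | singleton s =>
        have := h3 L (P s) (P s) hlL (hPt s) (fun _ _ => le_rfl) (hFm s)
        simpa using this
      | cons s T hs hT ih =>
        have := h4 L (P s) _ hlL (hPt s) (agr_mix _ _ _) (hFm s) ih
        have e : mix l t (P s ⊔ mix l t (fun k => T.sup (fun s => P s k))) =
            mix l t (fun k => (Finset.cons s T hs).sup (fun s => P s k)) := by
          funext k
          by_cases hk : k < l
          · rw [mix_lt _ _ hk, mix_lt _ _ hk]
          · rw [mix_ge _ _ (not_lt.1 hk), mix_ge _ _ (not_lt.1 hk), Pi.sup_apply,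
              mix_ge _ _ (not_lt.1 hk), Finset.sup_cons]
        rw [e] at this
        exact this
    rcases isEmpty_or_nonempty S with hS | hS
    · -- trivial algebra
      have hbt : (⊥ : B) = ⊤ := by
        rw [← hp, Finset.univ_eq_empty, Finset.sup_empty]
      have hsub : Subsingleton B := subsingleton_of_bot_eq_top hbt
      have hsub' : Subsingleton (ℕ → B) := inferInstance
      exact haP1 (by rw [hsub'.elim P1 U2]; exact haU2)
    · obtain ⟨Q, hQ, hag⟩ := densj L (mix l t (fun k => Finset.univ.sup (fun s => P s k)))
        (agr_mix _ _ _)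
      refine hall Finset.univ Finset.univ_nonempty Q hQ hag (hU2a Q hQ ?_)
      intro k hk
      rw [← hag k (lt_of_lt_of_le hk (le_max_left _ _))]
      by_cases hkl : k < l
      · rw [mix_lt _ _ hkl, hU2t k hkl]
      · rw [mix_ge _ _ (not_lt.1 hkl)]
        have : ∀ s, P s k = U2 k ⊓ p s := by
          intro s
          rw [← hPag s k hk, mix_ge _ _ (not_lt.1 hkl)]
        simp only [this]
        rw [← Finset.sup_inf_distrib_left, hp, inf_top_eq]
  obtain ⟨s, hs⟩ := h5
  obtain ⟨r, l3, hrt, hl3, hrO, hra⟩ := hgood s l2 (le_max_right _ _) hs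
  obtain ⟨m1, hm1⟩ := c1 P1 hP1
  obtain ⟨m2, hm2⟩ := c2 P2 hP2
  obtain ⟨V, W1, W2, hV, hW1, hW2, hj, hy1, hy2, he⟩ := dens (max l3 (max m1 m2))
    (mix l v (mix l3 r ⊥)) P1 P2 (by
      intro k
      by_cases hk : k < l
      · rw [mix_lt _ _ hk]; exact hv k
      · rw [mix_ge _ _ (not_lt.1 hk)]
        by_cases hk3 : k < l3
        · rw [mix_lt _ _ hk3]; exact hrO k (not_lt.1 hk) hk3
        · rw [mix_ge _ _ (not_lt.1 hk3)]; exact hObot k) (agr_mix _ _ _) hP1w hP2w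
  have n1 : ¬ a W1 := fun h => haP1 ((hm1 W1 hy1 (hW1.mono (by omega))).1 h)
  have n2 : ¬ a W2 := fun h => haP2 ((hm2 W2 hy2 (hW2.mono (by omega))).1 h)
  have nU : ¬ a (V ⊔ W1 ⊔ W2) := fun h => (he.1 h).elim n1 n2
  set U := V ⊔ W1 ⊔ W2 with hU
  obtain ⟨l6, hl6⟩ := cj U hj
  have hFU : ∀ Q ∈ Yj, agr (max l6 l3) U Q → ¬ a Q := fun Q hQ h haQ =>
    nU ((hl6 Q hQ (h.mono (le_max_left _ _))).1 haQ)
  have hUt : agr l t U := by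
    intro k hk
    rw [hU]
    simp only [Pi.sup_apply]
    rw [← hV k (by omega), ← hW1 k (by omega), ← hW2 k (by omega), mix_lt _ _ hk, ← hP1w k hk,
      ← hP2w k hk, ht]
  have hFr := h3 (max l6 l3) U (mix l3 r U) (by omega) hUt (by
    intro k hk
    by_cases hk3 : k < l3
    · rw [mix_lt _ _ hk3, hU]
      simp only [Pi.sup_apply]
      rw [← hV k (by omega), mix_ge _ _ hk, mix_lt _ _ hk3]
      exact le_sup_left.trans le_sup_left
    · rw [mix_ge _ _ (not_lt.1 hk3)]) hFU
  obtain ⟨Q, hQ, hag⟩ := densj (max l6 l3) (mix l t (mix l3 r U)) (agr_mix _ _ _)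
  refine hFr Q hQ hag (hra Q hQ ?_)
  intro k hk
  rw [← hag k (by omega)]
  by_cases hkl : k < l
  · rw [mix_lt _ _ hkl, hrt k hkl]
  · rw [mix_ge _ _ (not_lt.1 hkl), mix_lt _ _ hk]

lemma baire_cyl {D : ℕ → Type} [∀ k, Nonempty (D k)] {ι : Type} [Countable ι]
    (Z : ι → Set (∀ k, D k)) (hcov : ∀ x, ∃ i, x ∈ Z i) :
    ∃ i l, ∃ x : ∀ k, D k, ∀ (L : ℕ) (y : ∀ k, D k), (∀ k < l, x k = y k) →
      ∃ z ∈ Z i, ∀ k < L, y k = z k := by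
  let _ : ∀ k, TopologicalSpace (D k) := fun _ => ⊥
  have : ∀ k, DiscreteTopology (D k) := fun _ => ⟨rfl⟩
  obtain ⟨i, x, hx⟩ := nonempty_interior_of_iUnion_of_closed (f := fun i => closure (Z i))
    (fun _ => isClosed_closure) (by
      refine Set.eq_univ_of_forall fun x => ?_
      obtain ⟨i, hi⟩ := hcov x
      exact Set.mem_iUnion.2 ⟨i, subset_closure hi⟩)
  have hb := PiNat.isTopologicalBasis_cylinders D
  obtain ⟨C, ⟨x0, l, rfl⟩, hxC, hC⟩ := hb.exists_subset_of_mem_open hx isOpen_interior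
  refine ⟨i, l, x, fun L y hy => ?_⟩
  have hyC : y ∈ PiNat.cylinder x0 l := by
    rw [PiNat.mem_cylinder_iff] at hxC ⊢
    intro k hk
    rw [← hy k hk, hxC k hk]
  have hycl : y ∈ closure (Z i) := interior_subset (hC hyC)
  have := mem_closure_iff.1 hycl (PiNat.cylinder y L) (hb.isOpen ⟨y, L, rfl⟩)
    (PiNat.self_mem_cylinder _ _)
  obtain ⟨z, hz, hzZ⟩ := this
  refine ⟨z, hzZ, fun k hk => ?_⟩
  rw [PiNat.mem_cylinder_iff] at hz
  exact (hz k hk).symm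

lemma dens_lemma {B : Type} [BooleanAlgebra B] (Ok : ℕ → B → Prop) (hObot : ∀ k, Ok k ⊥)
    (Y Nn : ℕ → Set (ℕ → B)) (hcov : ∀ P, (∃ i, P ∈ Y i) ∨ ∃ i, P ∈ Nn i)
    (hnd : ∀ i l P, ∃ l' ≥ l, ∃ P', agr l P P' ∧ ∀ Q, agr l' P' Q → Q ∉ Nn i)
    (R : ℕ → (ℕ → B) → (ℕ → B) → (ℕ → B) → Prop)
    (hR : ∀ V W1 W2, (∀ k, Ok k (V k)) → ∃ m, R m V W1 W2) :
    ∃ j i1 i2 m l, ∃ v w1 w2 : ℕ → B, (∀ k, Ok k (v k)) ∧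
      ∀ (L : ℕ) (V' W1' W2' : ℕ → B), (∀ k, Ok k (V' k)) → agr l v V' → agr l w1 W1' →
      agr l w2 W2' → ∃ V W1 W2, agr L V' V ∧ agr L W1' W1 ∧ agr L W2' W2 ∧
        (V ⊔ W1 ⊔ W2) ∈ Y j ∧ W1 ∈ Y i1 ∧ W2 ∈ Y i2 ∧ R m V W1 W2 := by
  let D : ℕ → Type := fun k => {b : B × B × B // Ok k b.1}
  have : ∀ k, Nonempty (D k) := fun k => ⟨⟨(⊥, ⊥, ⊥), hObot k⟩⟩
  let pV : (∀ k, D k) → ℕ → B := fun x k => (x k).1.1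
  let p1 : (∀ k, D k) → ℕ → B := fun x k => (x k).1.2.1
  let p2 : (∀ k, D k) → ℕ → B := fun x k => (x k).1.2.2
  let Z : (ℕ × ℕ × ℕ × ℕ) ⊕ (ℕ ⊕ (ℕ ⊕ ℕ)) → Set (∀ k, D k) := fun i => match i with
    | Sum.inl q => {x | (pV x ⊔ p1 x ⊔ p2 x) ∈ Y q.1 ∧ p1 x ∈ Y q.2.1 ∧ p2 x ∈ Y q.2.2.1 ∧
        R q.2.2.2 (pV x) (p1 x) (p2 x)}
    | Sum.inr (Sum.inl i) => {x | (pV x ⊔ p1 x ⊔ p2 x) ∈ Nn i}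
    | Sum.inr (Sum.inr (Sum.inl i)) => {x | p1 x ∈ Nn i}
    | Sum.inr (Sum.inr (Sum.inr i)) => {x | p2 x ∈ Nn i}
  have hZ : ∀ x, ∃ i, x ∈ Z i := by
    intro x
    rcases hcov (pV x ⊔ p1 x ⊔ p2 x) with ⟨j, hj⟩ | ⟨i, hi⟩
    · rcases hcov (p1 x) with ⟨i1, hi1⟩ | ⟨i, hi⟩
      · rcases hcov (p2 x) with ⟨i2, hi2⟩ | ⟨i, hi⟩
        · obtain ⟨m, hm⟩ := hR (pV x) (p1 x) (p2 x) (fun k => (x k).2)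
          exact ⟨Sum.inl (j, i1, i2, m), hj, hi1, hi2, hm⟩
        · exact ⟨Sum.inr (Sum.inr (Sum.inr i)), hi⟩
      · exact ⟨Sum.inr (Sum.inr (Sum.inl i)), hi⟩
    · exact ⟨Sum.inr (Sum.inl i), hi⟩
  obtain ⟨i, l, x, hx⟩ := baire_cyl Z hZ
  have main : ∀ (L : ℕ) (V' W1' W2' : ℕ → B), (∀ k, Ok k (V' k)) → agr l (pV x) V' →
      agr l (p1 x) W1' → agr l (p2 x) W2' → ∃ z ∈ Z i, agr L V' (pV z) ∧ agr L W1' (p1 z) ∧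
        agr L W2' (p2 z) := by
    intro L V' W1' W2' hO h0 h1 h2
    obtain ⟨z, hz, hag⟩ := hx L (fun k => ⟨(V' k, W1' k, W2' k), hO k⟩) (by
      intro k hk
      apply Subtype.ext
      exact Prod.ext (h0 k hk) (Prod.ext (h1 k hk) (h2 k hk)))
    refine ⟨z, hz, fun k hk => ?_, fun k hk => ?_, fun k hk => ?_⟩
    · exact congrArg (fun b : D k => b.1.1) (hag k hk)
    · exact congrArg (fun b : D k => b.1.2.1) (hag k hk)
    · exact congrArg (fun b : D k => b.1.2.2) (hag k hk)
  have hOx : ∀ k, Ok k (pV x k) := fun k => (x k).2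
  have hOx' : ∀ k, Ok k (mix l (pV x) ⊥ k) := by
    intro k
    by_cases hk : k < l
    · rw [mix_lt _ _ hk]; exact hOx k
    · rw [mix_ge _ _ (not_lt.1 hk)]; exact hObot k
  rcases i with q | i | i | i
  · refine ⟨q.1, q.2.1, q.2.2.1, q.2.2.2, l, pV x, p1 x, p2 x, hOx, ?_⟩
    intro L V' W1' W2' hO h0 h1 h2
    obtain ⟨z, ⟨hz1, hz2, hz3, hz4⟩, g0, g1, g2⟩ := main L V' W1' W2' hO h0 h1 h2
    exact ⟨pV z, p1 z, p2 z, g0, g1, g2, hz1, hz2, hz3, hz4⟩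
  · exfalso
    obtain ⟨l', hl', P', hP', hQ⟩ := hnd i l (pV x ⊔ p1 x ⊔ p2 x)
    obtain ⟨z, hz, g0, g1, g2⟩ := main l' (mix l (pV x) ⊥) (mix l (p1 x) P') (mix l (p2 x) P')
      hOx' (agr_mix _ _ _) (agr_mix _ _ _) (agr_mix _ _ _)
    refine hQ _ ?_ hz
    intro k hk
    simp only [Pi.sup_apply]
    rw [← g0 k hk, ← g1 k hk, ← g2 k hk]
    by_cases hkl : k < l
    · rw [mix_lt _ _ hkl, mix_lt _ _ hkl, mix_lt _ _ hkl, ← hP' k hkl]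
      rfl
    · rw [mix_ge _ _ (not_lt.1 hkl), mix_ge _ _ (not_lt.1 hkl), mix_ge _ _ (not_lt.1 hkl)]
      simp
  · exfalso
    obtain ⟨l', hl', P', hP', hQ⟩ := hnd i l (p1 x)
    obtain ⟨z, hz, g0, g1, g2⟩ := main l' (pV x) P' (p2 x) hOx (fun _ _ => rfl) hP'
      (fun _ _ => rfl)
    exact hQ _ g1 hz
  · exfalso
    obtain ⟨l', hl', P', hP', hQ⟩ := hnd i l (p2 x)
    obtain ⟨z, hz, g0, g1, g2⟩ := main l' (pV x) (p1 x) P' hOx (fun _ _ => rfl) (fun _ _ => rfl)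
      hP'
    exact hQ _ g2 hz

/-- a lifting of a Boolean embedding to representatives -/
structure Rep (μ : Measure CSp) (A : Set CSp → Set ℕ) : Prop where
  hU : ∀ S T, MeasurableSet S → MeasurableSet T →
    ∀ᶠ n in Filter.atTop, n ∈ A (S ∪ T) ↔ n ∈ A S ∨ n ∈ A T
  hI : ∀ S T, MeasurableSet S → MeasurableSet T →
    ∀ᶠ n in Filter.atTop, n ∈ A (S ∩ T) ↔ n ∈ A S ∧ n ∈ A T
  hE : ∀ᶠ n in Filter.atTop, n ∉ A ∅
  hN : ∀ S, MeasurableSet S → μ S ≠ 0 → ∃ᶠ n in Filter.atTop, n ∈ A S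

lemma Rep.disj {A : Set CSp → Set ℕ} (h : Rep μ A) {S T : Set CSp} (hS : MeasurableSet S)
    (hT : MeasurableSet T) (hd : S ∩ T = ∅) : ∀ᶠ n in Filter.atTop, n ∈ A S → n ∉ A T := by
  filter_upwards [h.hI S T hS hT, h.hE] with n h1 h2 h3 h4
  rw [hd] at h1
  exact h2 (h1.2 ⟨h3, h4⟩)

lemma Rep.sub {A : Set CSp → Set ℕ} (h : Rep μ A) {S T : Set CSp} (hS : MeasurableSet S)
    (hT : MeasurableSet T) (hd : S ⊆ T) : ∀ᶠ n in Filter.atTop, n ∈ A S → n ∈ A T := by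
  filter_upwards [h.hI S T hS hT] with n h1 h3
  rw [Set.inter_eq_left.2 hd] at h1
  exact (h1.1 h3).2

/-- clopen subsets of the Cantor set -/
abbrev Bc : Type := TopologicalSpace.Clopens Cant

lemma countable_Bc : Countable Bc :=
  TopologicalSpace.Clopens.countable_iff_secondCountable.2 inferInstance

/-- the open set coded by a sequence of clopen sets, along columns `c k` -/
def OO (c : ℕ → ℕ) (P : ℕ → Bc) : Set CSp := {p | ∃ k, p.1 = c k ∧ p.2 ∈ P k}

lemma measurableSet_Bc (b : Bc) : MeasurableSet (b : Set Cant) := b.2.isOpen.measurableSet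

lemma measurableSet_OO (c : ℕ → ℕ) (P : ℕ → Bc) : MeasurableSet (OO c P) := by
  have : OO c P = ⋃ k, ({c k} : Set ℕ) ×ˢ (P k : Set Cant) := by
    ext p
    simp [OO]
  rw [this]
  exact MeasurableSet.iUnion fun k => (measurableSet_singleton _).prod (measurableSet_Bc _)

lemma OO_sup (c : ℕ → ℕ) (P Q : ℕ → Bc) : OO c (P ⊔ Q) = OO c P ∪ OO c Q := by
  ext p
  constructor
  · rintro ⟨k, h1, h2⟩
    rcases h2 with h2 | h2
    · exact Or.inl ⟨k, h1, h2⟩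
    · exact Or.inr ⟨k, h1, h2⟩
  · rintro (⟨k, h1, h2⟩ | ⟨k, h1, h2⟩)
    · exact ⟨k, h1, Or.inl h2⟩
    · exact ⟨k, h1, Or.inr h2⟩

lemma isClopen_cyl (s : List Bool) : IsClopen (cyl s) := by
  have h : cyl s = ⋂ i : Fin s.length, (fun x : Cant => x i.1) ⁻¹' {s.get i} := by
    ext x; simp [cyl]
  rw [h]
  exact isClopen_iInter_of_finite fun i => (isClopen_discrete _).preimage (continuous_apply i.1)

/-- the clopen cylinder of a finite sequence -/
def cylB {N : ℕ} (s : Fin N → Bool) : Bc := ⟨cyl (List.ofFn s), isClopen_cyl _⟩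

lemma cylB_sup (N : ℕ) : Finset.univ.sup (cylB (N := N)) = ⊤ := by
  rw [eq_top_iff]
  intro x _
  have h1 : cylB (fun i : Fin N => x i) ≤ Finset.univ.sup (cylB (N := N)) :=
    Finset.le_sup (Finset.mem_univ _)
  apply h1
  show x ∈ cyl (List.ofFn _)
  intro i
  simp

lemma part2 (hμ : IsMeasureOK μ) {A : Set CSp → Set ℕ} (hA : Rep μ A) (c : ℕ → ℕ)
    (hc : Function.Injective c) (A' : (ℕ → Bc) → Set ℕ)
    (hA' : ∀ P, ∀ᶠ n in Filter.atTop, n ∈ A' P ↔ n ∈ A (OO c P))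
    (Y Nn : ℕ → Set (ℕ → Bc)) (hcov : ∀ P, (∃ i, P ∈ Y i) ∨ ∃ i, P ∈ Nn i)
    (hnd : ∀ i l P, ∃ l' ≥ l, ∃ P', agr l P P' ∧ ∀ Q, agr l' P' Q → Q ∉ Nn i)
    (hcont : ∀ i, ∀ P ∈ Y i, ∀ n, ∃ l, ∀ Q ∈ Y i, agr l P Q → (n ∈ A' Q ↔ n ∈ A' P)) :
    False := by
  classical
  have hBc := countable_Bc
  let ι : Type := ℕ × (Σ l : ℕ, Fin l → Bc) × ℕ
  have hι : Countable ι := inferInstance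
  obtain ⟨ε, hε0, hε1⟩ := ENNReal.exists_pos_sum_of_countable' (ε := 1) one_ne_zero ι
  let good : ι → ℕ → (ℕ → Bc) → Prop := fun a l' r =>
    (∀ i : Fin a.2.1.1, r i = a.2.1.2 i) ∧ a.2.1.1 ≤ l' ∧
    (∀ k, a.2.1.1 ≤ k → k < l' → μ (({c k} : Set ℕ) ×ˢ (r k : Set Cant)) ≤ ε a) ∧
    ∀ Q ∈ Y a.1, agr l' r Q → a.2.2 ∈ A' Q
  have hch : ∀ a, ∃ q : ℕ × (ℕ → Bc), (∃ l' r, good a l' r) → good a q.1 q.2 := by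
    intro a
    by_cases h : ∃ l' r, good a l' r
    · obtain ⟨l', r, hr⟩ := h
      exact ⟨(l', r), fun _ => hr⟩
    · exact ⟨(0, ⊥), fun h' => absurd h' h⟩
  choose q hq using hch
  let G : ι → ℕ → Set Cant := fun a k =>
    {y | good a (q a).1 (q a).2 ∧ a.2.1.1 ≤ k ∧ k < (q a).1 ∧ y ∈ (q a).2 k}
  have hG : ∀ a k, MeasurableSet (G a k) := by
    intro a k
    by_cases h : good a (q a).1 (q a).2 ∧ a.2.1.1 ≤ k ∧ k < (q a).1
    · have : G a k = ((q a).2 k : Set Cant) := by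
        ext y
        constructor
        · exact fun hy => hy.2.2.2
        · exact fun hy => ⟨h.1, h.2.1, h.2.2, hy⟩
      rw [this]; exact measurableSet_Bc _
    · have : G a k = ∅ := by
        ext y
        constructor
        · exact fun hy => h ⟨hy.1, hy.2.1, hy.2.2.1⟩
        · exact fun hy => hy.elim
      rw [this]; exact MeasurableSet.empty
  have hGμ : ∀ a k, μ (({c k} : Set ℕ) ×ˢ G a k) ≤ ε a := by
    intro a k
    by_cases h : good a (q a).1 (q a).2 ∧ a.2.1.1 ≤ k ∧ k < (q a).1
    · refine (measure_mono (Set.prod_mono le_rfl ?_)).trans (h.1.2.2.1 k h.2.1 h.2.2)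
      exact fun y hy => hy.2.2.2
    · have : G a k = ∅ := by
        ext y
        constructor
        · exact fun hy => h ⟨hy.1, hy.2.1, hy.2.2.1⟩
        · exact fun hy => hy.elim
      rw [this]; simp
  let O : ℕ → Set Cant := fun k => ⋃ a, G a k
  have hO : ∀ k, MeasurableSet (O k) := fun k => MeasurableSet.iUnion fun a => hG a k
  let K : Set CSp := {p | ∃ k, p.1 = c k ∧ p.2 ∉ O k}
  have hK : MeasurableSet K := by
    have : K = ⋃ k, ({c k} : Set ℕ) ×ˢ (O k)ᶜ := by
      ext p
      simp [K]
    rw [this]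
    exact MeasurableSet.iUnion fun k => (measurableSet_singleton _).prod (hO k).compl
  have hcolm : ∀ k, MeasurableSet (basic (c k) []) := fun k => measurableSet_basic _ _
  have hcol : ∀ k (p : CSp), p ∈ basic (c k) [] ↔ p.1 = c k := by
    intro k p
    simp [basic, cyl]
  have hKμ : ∀ k, μ (K ∩ basic (c k) []) ≠ 0 := by
    intro k h0
    have h1 : μ (basic (c k) []) = 1 := by rw [hμ]; simp
    have h2 : basic (c k) [] ⊆ (K ∩ basic (c k) []) ∪ ⋃ a, ({c k} : Set ℕ) ×ˢ G a k := by
      intro p hp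
      have hp1 := (hcol k p).1 hp
      by_cases hpO : p.2 ∈ O k
      · right
        obtain ⟨a, ha⟩ := Set.mem_iUnion.1 hpO
        exact Set.mem_iUnion.2 ⟨a, hp1, ha⟩
      · left
        exact ⟨⟨k, hp1, hpO⟩, hp⟩
    have h3 : (1 : ℝ≥0∞) < 1 := by
      calc (1 : ℝ≥0∞) = μ (basic (c k) []) := h1.symm
        _ ≤ μ ((K ∩ basic (c k) []) ∪ ⋃ a, ({c k} : Set ℕ) ×ˢ G a k) := measure_mono h2
        _ ≤ μ (K ∩ basic (c k) []) + μ (⋃ a, ({c k} : Set ℕ) ×ˢ G a k) := measure_union_le _ _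
        _ ≤ 0 + ∑' a, μ (({c k} : Set ℕ) ×ˢ G a k) := by
            rw [h0]; gcongr; exact measure_iUnion_le _
        _ ≤ 0 + ∑' a, ε a := by gcongr with a; exact hGμ a k
        _ < 1 := by rw [zero_add]; exact hε1
    exact lt_irrefl _ h3
  let Ok : ℕ → Bc → Prop := fun k b => (b : Set Cant) ⊆ O k
  have hObot : ∀ k, Ok k ⊥ := fun k => by
    intro y hy
    exact hy.elim
  let R : ℕ → (ℕ → Bc) → (ℕ → Bc) → (ℕ → Bc) → Prop := fun m V W1 W2 => ∀ n ≥ m,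
    (n ∈ A' (V ⊔ W1 ⊔ W2) ↔ n ∈ A' V ∨ n ∈ A' W1 ∨ n ∈ A' W2) ∧ (n ∈ A K → n ∉ A' V)
  have hR : ∀ V W1 W2, (∀ k, Ok k (V k)) → ∃ m, R m V W1 W2 := by
    intro V W1 W2 hV
    have hd : K ∩ OO c V = ∅ := by
      ext p
      constructor
      · rintro ⟨⟨k, h1, h2⟩, k', h3, h4⟩
        have : k = k' := hc (h1.symm.trans h3)
        subst this
        exact h2 (hV k h4)
      · exact fun h => h.elim
    have := (((((hA' (V ⊔ W1 ⊔ W2)).and (hA' V)).and ((hA' W1).and (hA' W2))).and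
      ((hA.hU (OO c V) (OO c W1) (measurableSet_OO _ _) (measurableSet_OO _ _)).and
      (hA.hU (OO c V ∪ OO c W1) (OO c W2) ((measurableSet_OO _ _).union (measurableSet_OO _ _))
        (measurableSet_OO _ _)))).and (hA.disj hK (measurableSet_OO c V) hd))
    obtain ⟨m, hm⟩ := Filter.eventually_atTop.1 this
    refine ⟨m, fun n hn => ?_⟩
    obtain ⟨⟨⟨⟨h1, h2⟩, h3, h4⟩, h5, h6⟩, h7⟩ := hm n hn
    rw [OO_sup, OO_sup] at h1
    rw [h1, h6, h5, h2, h3, h4]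
    exact ⟨or_assoc, h7⟩
  obtain ⟨j, i1, i2, m, l, v, w1, w2, hv, dens⟩ := dens_lemma Ok hObot Y Nn hcov hnd R hR
  have hOmix : ∀ k, Ok k (mix l v ⊥ k) := by
    intro k
    by_cases hk : k < l
    · rw [mix_lt _ _ hk]; exact hv k
    · rw [mix_ge _ _ (not_lt.1 hk)]; exact hObot k
  obtain ⟨V0, P1, P2, -, hP1a, hP2a, -, hP1, hP2, -⟩ := dens (l + 1) (mix l v ⊥) (mix l w1 ⊥)
    (mix l w2 ⊥) hOmix (agr_mix _ _ _) (agr_mix _ _ _) (agr_mix _ _ _)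
  obtain ⟨V2, X1, X2, hV2, hX1, hX2, hU2, -, -, -⟩ := dens (l + 1) (mix l v ⊥) (mix l w1 ⊤)
    (mix l w2 ⊤) hOmix (agr_mix _ _ _) (agr_mix _ _ _) (agr_mix _ _ _)
  have hbotcol : ∀ P : ℕ → Bc, P l = ⊥ → ∀ᶠ n in Filter.atTop,
      n ∈ A (basic (c l) []) → n ∉ A' P := by
    intro P hP
    have hd : basic (c l) [] ∩ OO c P = ∅ := by
      ext p
      constructor
      · rintro ⟨h1, k, h3, h4⟩
        have : l = k := hc (((hcol l p).1 h1).symm.trans h3)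
        subst this
        rw [hP] at h4
        exact h4.elim
      · exact fun h => h.elim
    filter_upwards [hA.disj (hcolm l) (measurableSet_OO c P) hd, hA' P] with n h1 h2 h3
    rw [h2]; exact h1 h3
  have hP1l : P1 l = ⊥ := by
    rw [← hP1a l (Nat.lt_succ_self l), mix_ge _ _ le_rfl]; rfl
  have hP2l : P2 l = ⊥ := by
    rw [← hP2a l (Nat.lt_succ_self l), mix_ge _ _ le_rfl]; rfl
  have hU2l : (V2 ⊔ X1 ⊔ X2) l = ⊤ := by
    have : X2 l = ⊤ := by
      rw [← hX2 l (Nat.lt_succ_self l), mix_ge _ _ le_rfl]; rfl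
    simp [this]
  have hsubc : basic (c l) [] ⊆ OO c (V2 ⊔ X1 ⊔ X2) := by
    intro p hp
    refine ⟨l, (hcol l p).1 hp, ?_⟩
    rw [hU2l]
    trivial
  have hfr := (hA.hN _ (hK.inter (hcolm l)) (hKμ l)).and_eventually
    (((((hA.hI K _ hK (hcolm l)).and (hbotcol P1 hP1l)).and (hbotcol P2 hP2l)).and
      ((hA.sub (hcolm l) (measurableSet_OO c _) hsubc).and (hA' (V2 ⊔ X1 ⊔ X2)))).and
      (Filter.eventually_ge_atTop m))
  obtain ⟨n, hn0, ⟨⟨⟨hn1, hn2⟩, hn3⟩, hn4, hn5⟩, hnm⟩ := hfr.exists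
  obtain ⟨hnK, hncol⟩ := hn1.1 hn0
  have ht : ∀ k, (v ⊔ w1 ⊔ w2) k = v k ⊔ w1 k ⊔ w2 k := fun _ => rfl
  let a : ι := (j, ⟨l, fun i => (v ⊔ w1 ⊔ w2) i⟩, n)
  obtain ⟨N, hN⟩ : ∃ N : ℕ, (2 : ℝ≥0∞)⁻¹ ^ N < ε a :=
    ENNReal.exists_inv_two_pow_lt (hε0 a).ne'
  refine core (Y j) (Y i1) (Y i2) (fun P => n ∈ A' P) (fun P hP => hcont j P hP n)
    (fun P hP => hcont i1 P hP n) (fun P hP => hcont i2 P hP n) Ok hObot l v w1 w2 (v ⊔ w1 ⊔ w2)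
    ht hv ?_ P1 hP1 (hn2 hncol) (fun k hk => ?_) P2 hP2 (hn3 hncol) (fun k hk => ?_)
    (V2 ⊔ X1 ⊔ X2) hU2 (hn5.2 (hn4 hncol)) (fun k hk => ?_) (Fin N → Bool) cylB (cylB_sup N) ?_
  · intro L V' W1' W2' h1 h2 h3 h4
    obtain ⟨V, W1, W2, g1, g2, g3, g4, g5, g6, g7⟩ := dens L V' W1' W2' h1 h2 h3 h4
    refine ⟨V, W1, W2, g1, g2, g3, g4, g5, g6, ?_⟩
    obtain ⟨g8, g9⟩ := g7 n hnm
    have := g9 hnK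
    simp only [g8, this, false_or]
  · rw [← hP1a k (by omega), mix_lt _ _ hk]
  · rw [← hP2a k (by omega), mix_lt _ _ hk]
  · simp only [Pi.sup_apply]
    rw [← hV2 k (by omega), ← hX1 k (by omega), ← hX2 k (by omega), mix_lt _ _ hk, mix_lt _ _ hk,
      mix_lt _ _ hk]
  · intro s l2 hl2 hs
    have hgd : good a l2 (mix l (v ⊔ w1 ⊔ w2) (fun k => (V2 ⊔ X1 ⊔ X2) k ⊓ cylB s)) := by
      refine ⟨fun i => mix_lt _ _ i.2, hl2, fun k hk hk2 => ?_, hs⟩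
      rw [mix_ge _ _ hk]
      refine le_trans ?_ hN.le
      have h1 : μ (basic (c k) (List.ofFn s)) = (2 : ℝ≥0∞)⁻¹ ^ N := by
        rw [hμ, List.length_ofFn]
      rw [← h1]
      refine measure_mono (Set.prod_mono le_rfl ?_)
      exact fun y hy => hy.2
    have hga : good a (q a).1 (q a).2 := hq a ⟨_, _, hgd⟩
    refine ⟨(q a).2, (q a).1, fun k hk => (hga.1 ⟨k, hk⟩).symm, hga.2.1, fun k hk hk3 => ?_,
      hga.2.2.2⟩
    intro y hy
    exact Set.mem_iUnion.2 ⟨a, hga, hk, hk3, hy⟩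

lemma oca_apply (oca : OCA) (Z E : Type) [Countable E] (e : Z → ℕ → E)
    (he : Function.Injective e) (K : Z → Z → Prop) (hsymm : ∀ a b, K a b → K b a)
    (hirr : ∀ a, ¬ K a a)
    (hopen : ∀ a b, K a b → ∃ M, ∀ a' b', agr M (e a) (e a') → agr M (e b) (e b') → K a' b') :
    (∃ Y : Set Z, ¬ Y.Countable ∧ ∀ a ∈ Y, ∀ b ∈ Y, a ≠ b → K a b) ∨
    (∃ Y : ℕ → Set Z, (∀ z, ∃ i, z ∈ Y i) ∧ ∀ i, ∀ a ∈ Y i, ∀ b ∈ Y i, ¬ K a b) := by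
  let _ : TopologicalSpace E := ⊥
  have : DiscreteTopology E := ⟨rfl⟩
  let mE : MetricSpace (ℕ → E) := TopologicalSpace.metrizableSpaceMetric (ℕ → E)
  let mZ : MetricSpace Z := MetricSpace.induced e he mE
  have hcont : Continuous e := continuous_induced_dom
  have hsc : SecondCountableTopology Z :=
    TopologicalSpace.secondCountableTopology_induced Z (ℕ → E) e
  have hsep : TopologicalSpace.SeparableSpace Z := inferInstance
  have hKo : IsOpen {p : Z × Z | K p.1 p.2} := by
    rw [isOpen_iff_mem_nhds]
    rintro ⟨a, b⟩ hab
    obtain ⟨M, hM⟩ := hopen a b hab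
    have hcyl : ∀ z : Z, {w : Z | agr M (e z) (e w)} ∈ nhds z := by
      intro z
      have ho : IsOpen {f : ℕ → E | agr M (e z) f} := by
        have : {f : ℕ → E | agr M (e z) f} = ⋂ k ∈ Finset.range M, {f | e z k = f k} := by
          ext f
          simp [agr]
        rw [this]
        refine isOpen_biInter_finset fun k _ => ?_
        exact (isOpen_discrete {t : E | e z k = t}).preimage (continuous_apply k)
      exact (ho.preimage hcont).mem_nhds (fun _ _ => rfl)
    refine Filter.mem_of_superset (prod_mem_nhds (hcyl a) (hcyl b)) ?_
    rintro ⟨a', b'⟩ ⟨h1, h2⟩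
    exact hM a' b' h1 h2
  rcases oca Z {p : Z × Z | K p.1 p.2} hKo (fun a b h => hsymm a b h) (fun a h => hirr a h) with
    h | ⟨Y, hY, hYK⟩
  · exact Or.inl h
  · right
    refine ⟨Y, fun z => Set.mem_iUnion.1 (hY ▸ Set.mem_univ z), fun i a ha b hb hK => ?_⟩
    by_cases hab : a = b
    · subst hab; exact hirr a hK
    · exact hYK i a ha b hb hab hK

/-- code of the restriction of `x` to `k` -/
def cc (x : Cant) (k : ℕ) : ℕ := Encodable.encode (List.ofFn fun i : Fin k => x i)

lemma cc_eq {x y : Cant} {k k' : ℕ} (h : cc x k = cc y k') : k = k' ∧ ∀ i < k, x i = y i := by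
  have h1 := Encodable.encode_injective h
  have h2 : k = k' := by
    have := congrArg List.length h1
    simpa using this
  subst h2
  refine ⟨rfl, fun i hi => ?_⟩
  have := congrFun (List.ofFn_injective h1) ⟨i, hi⟩
  exact this

lemma cc_congr {x y : Cant} {k : ℕ} (h : ∀ i < k, x i = y i) : cc x k = cc y k := by
  have : (fun i : Fin k => x i) = fun i : Fin k => y i := funext fun i => h i i.2
  rw [cc, cc, this]

/-- the colouring -/
def KK (A : Set CSp → Set ℕ) (z z' : Cant × (ℕ → Bc)) : Prop :=
  z.1 ≠ z'.1 ∧ (∀ k, (∀ i < k, z.1 i = z'.1 i) → z.2 k = z'.2 k) ∧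
  ∃ n, ¬ ((n ∈ A (OO (cc z.1) z.2) ∧ n ∈ A (OO (cc z'.1) ⊤)) ↔
    (n ∈ A (OO (cc z'.1) z'.2) ∧ n ∈ A (OO (cc z.1) ⊤)))

lemma KK_symm (A : Set CSp → Set ℕ) (z z' : Cant × (ℕ → Bc)) (h : KK A z z') : KK A z' z := by
  obtain ⟨h1, h2, n, hn⟩ := h
  refine ⟨h1.symm, fun k hk => (h2 k fun i hi => (hk i hi).symm).symm, n, fun h => hn h.symm⟩

lemma no_homog {A : Set CSp → Set ℕ} (hA : Rep μ A) (Y : Set (Cant × (ℕ → Bc)))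
    (hYK : ∀ a ∈ Y, ∀ b ∈ Y, a ≠ b → KK A a b) : Y.Countable := by
  classical
  have hBc := countable_Bc
  let T : Set (ℕ × Bc) := {q | ∃ z ∈ Y, ∃ k, q.1 = cc z.1 k ∧ q.2 = z.2 k}
  let U : Set CSp := ⋃ q ∈ T, ({q.1} : Set ℕ) ×ˢ (q.2 : Set Cant)
  have hU : MeasurableSet U := MeasurableSet.biUnion (Set.to_countable T) fun q _ =>
    (measurableSet_singleton _).prod (measurableSet_Bc _)
  have hUi : ∀ z ∈ Y, U ∩ OO (cc z.1) ⊤ = OO (cc z.1) z.2 := by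
    intro z hz
    ext p
    constructor
    · rintro ⟨hpU, k, hk, -⟩
      simp only [U, Set.mem_iUnion] at hpU
      obtain ⟨q, ⟨z', hz', k', hq1, hq2⟩, hp1, hp2⟩ := hpU
      have hp1' : p.1 = q.1 := hp1
      have hp2' : p.2 ∈ q.2 := hp2
      have e : cc z.1 k = cc z'.1 k' := by rw [← hk, hp1', hq1]
      obtain ⟨rfl, hag⟩ := cc_eq e
      refine ⟨k, hk, ?_⟩
      by_cases hzz : z = z'
      · rw [hzz, ← hq2]; exact hp2'
      · rw [(hYK z hz z' hz' hzz).2.1 k hag, ← hq2]; exact hp2'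
    · rintro ⟨k, hk, hp⟩
      refine ⟨?_, k, hk, trivial⟩
      simp only [U, Set.mem_iUnion]
      exact ⟨(cc z.1 k, z.2 k), ⟨z, hz, k, rfl, rfl⟩, hk, hp⟩
  have hm : ∀ z : Y, ∃ m, ∀ n ≥ m, n ∈ A (OO (cc z.1.1) z.1.2) ↔
      n ∈ A U ∧ n ∈ A (OO (cc z.1.1) ⊤) := by
    intro z
    have := hA.hI U (OO (cc z.1.1) ⊤) hU (measurableSet_OO _ _)
    rw [hUi z.1 z.2] at this
    exact Filter.eventually_atTop.1 this
  choose m hm using hm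
  let g : Y → ℕ × Finset ℕ × Finset ℕ := fun z =>
    (m z, (Finset.range (m z)).filter (fun n => n ∈ A (OO (cc z.1.1) z.1.2)),
      (Finset.range (m z)).filter (fun n => n ∈ A (OO (cc z.1.1) ⊤)))
  have hg : Function.Injective g := by
    intro z z' hzz
    by_contra hne
    obtain ⟨-, -, n, hn⟩ := hYK z.1 z.2 z'.1 z'.2 (fun h => hne (Subtype.ext h))
    apply hn
    simp only [g, Prod.mk.injEq] at hzz
    obtain ⟨e1, e2, e3⟩ := hzz
    by_cases hnm : n < m z
    · have hnm' : n < m z' := e1 ▸ hnm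
      have f2 := Finset.ext_iff.1 e2 n
      have f3 := Finset.ext_iff.1 e3 n
      simp only [Finset.mem_filter, Finset.mem_range, hnm, hnm', true_and] at f2 f3
      rw [f2, f3]
    · have hz := hm z n (not_lt.1 hnm)
      have hz' := hm z' n (e1 ▸ not_lt.1 hnm)
      rw [hz, hz']
      tauto
  exact Set.countable_coe_iff.1 hg.countable

lemma step1 (oca : OCA) {A : Set CSp → Set ℕ} (hA : Rep μ A) :
    ∃ X : ℕ → Set (Cant × (ℕ → Bc)), (∀ z, ∃ i, z ∈ X i) ∧
      ∀ i, ∀ a ∈ X i, ∀ b ∈ X i, ¬ KK A a b := by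
  classical
  have hBc := countable_Bc
  let e : Cant × (ℕ → Bc) → ℕ → Bool × Bc × Bool × Bool := fun z n =>
    (z.1 n, z.2 n, decide (n ∈ A (OO (cc z.1) z.2)), decide (n ∈ A (OO (cc z.1) ⊤)))
  have he : Function.Injective e := by
    intro z z' h
    refine Prod.ext (funext fun n => ?_) (funext fun n => ?_)
    · exact congrArg Prod.fst (congrFun h n)
    · exact congrArg (fun q => q.2.1) (congrFun h n)
  rcases oca_apply oca _ _ e he (KK A) (KK_symm A) (fun a h => h.1 rfl) (by
    rintro a b ⟨h1, h2, n, hn⟩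
    obtain ⟨d, hd⟩ := Function.ne_iff.1 h1
    refine ⟨max (d + 1) (n + 1), fun a' b' ha hb => ?_⟩
    have ha1 : ∀ k < max (d + 1) (n + 1), a.1 k = a'.1 k := fun k hk =>
      congrArg Prod.fst (ha k hk)
    have hb1 : ∀ k < max (d + 1) (n + 1), b.1 k = b'.1 k := fun k hk =>
      congrArg Prod.fst (hb k hk)
    have ha2 : ∀ k < max (d + 1) (n + 1), a.2 k = a'.2 k := fun k hk =>
      congrArg (fun q => q.2.1) (ha k hk)
    have hb2 : ∀ k < max (d + 1) (n + 1), b.2 k = b'.2 k := fun k hk =>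
      congrArg (fun q => q.2.1) (hb k hk)
    have hnl : n < max (d + 1) (n + 1) := by omega
    have hdl : d < max (d + 1) (n + 1) := by omega
    have ha3 := congrArg (fun q => q.2.2.1) (ha n hnl)
    have ha4 := congrArg (fun q => q.2.2.2) (ha n hnl)
    have hb3 := congrArg (fun q => q.2.2.1) (hb n hnl)
    have hb4 := congrArg (fun q => q.2.2.2) (hb n hnl)
    simp only [e, decide_eq_decide] at ha3 ha4 hb3 hb4
    have hd' : a'.1 d ≠ b'.1 d := by rw [← ha1 d hdl, ← hb1 d hdl]; exact hd
    refine ⟨fun h => hd' (by rw [h]), fun k hk => ?_, n, ?_⟩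
    · have hkd : k ≤ d := by
        by_contra hcon
        exact hd' (hk d (not_le.1 hcon))
      rw [← ha2 k (by omega), ← hb2 k (by omega)]
      refine h2 k fun i hi => ?_
      rw [ha1 i (by omega), hb1 i (by omega)]
      exact hk i hi
    · rw [← ha3, ← ha4, ← hb3, ← hb4]
      exact hn) with ⟨Y, hY, hYK⟩ | h
  · exact absurd (no_homog hA Y hYK) hY
  · exact h

/-- trace of `A` on the column system of `x` -/
def AA (A : Set CSp → Set ℕ) (x : Cant) (P : ℕ → Bc) : Set ℕ :=
  A (OO (cc x) P) ∩ A (OO (cc x) ⊤)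

/-- the set of discontinuity points at `n` inside `X` -/
def NN (A : Set CSp → Set ℕ) (X : Set (Cant × (ℕ → Bc))) (x : Cant) (n : ℕ) : Set (ℕ → Bc) :=
  {P | (x, P) ∈ X ∧ ¬ ∃ l, ∀ Q, (x, Q) ∈ X → agr l P Q → (n ∈ AA A x Q ↔ n ∈ AA A x P)}

lemma NN_split {A : Set CSp → Set ℕ} {X : Set (Cant × (ℕ → Bc))} {x : Cant} {n : ℕ}
    {P : ℕ → Bc} (hP : P ∈ NN A X x n) (L : ℕ) :
    (∃ Q, (x, Q) ∈ X ∧ agr L P Q ∧ n ∈ AA A x Q) ∧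
    (∃ Q, (x, Q) ∈ X ∧ agr L P Q ∧ n ∉ AA A x Q) := by
  obtain ⟨hPX, h⟩ := hP
  push Not at h
  obtain ⟨Q, hQ, hag, hne⟩ := h L
  have hPP : agr L P P := fun _ _ => rfl
  rcases hne with ⟨h1, h2⟩ | ⟨h1, h2⟩
  · exact ⟨⟨Q, hQ, hag, h1⟩, ⟨P, hPX, hPP, h2⟩⟩
  · exact ⟨⟨P, hPX, hPP, h2⟩, ⟨Q, hQ, hag, h1⟩⟩

lemma bad_unique {A : Set CSp → Set ℕ} {X : Set (Cant × (ℕ → Bc))}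
    (hX : ∀ a ∈ X, ∀ b ∈ X, ¬ KK A a b) (n l : ℕ) (t : ℕ → Bc) (x y : Cant)
    (hx : ∀ L u, agr l t u → ∃ P ∈ NN A X x n, agr L u P)
    (hy : ∀ L u, agr l t u → ∃ P ∈ NN A X y n, agr L u P) : x = y := by
  by_contra hne
  obtain ⟨d, hd⟩ := Function.ne_iff.1 hne
  obtain ⟨P, hP, hPt⟩ := hx (d + 1) t (fun _ _ => rfl)
  obtain ⟨P', hP', hPt'⟩ := hy (d + 1) t (fun _ _ => rfl)
  obtain ⟨⟨Q1, hQ1, hQ1a, hQ1n⟩, -⟩ := NN_split hP (d + 1)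
  obtain ⟨⟨Q3, hQ3, hQ3a, hQ3n⟩, ⟨Q2, hQ2, hQ2a, hQ2n⟩⟩ := NN_split hP' (d + 1)
  refine hX _ hQ1 _ hQ2 ⟨hne, fun k hk => ?_, n, fun h => ?_⟩
  · have hkd : k ≤ d := by
      by_contra hcon
      exact hd (hk d (not_le.1 hcon))
    show Q1 k = Q2 k
    rw [← hQ1a k (by omega), ← hQ2a k (by omega), ← hPt k (by omega), ← hPt' k (by omega)]
  · exact hQ2n ⟨(h.1 ⟨hQ1n.1, hQ3n.2⟩).1, hQ3n.2⟩

lemma exists_good {A : Set CSp → Set ℕ} {X : ℕ → Set (Cant × (ℕ → Bc))}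
    (hX : ∀ i, ∀ a ∈ X i, ∀ b ∈ X i, ¬ KK A a b) :
    ∃ x : Cant, ∀ i n l t, ∃ L u, agr l t u ∧ ∀ P, agr L u P → P ∉ NN A (X i) x n := by
  have hBc := countable_Bc
  let Bad : ℕ × ℕ × (Σ l : ℕ, Fin l → Bc) → Set Cant := fun b =>
    {x | ∀ L u, (∀ i : Fin b.2.2.1, b.2.2.2 i = u i) → ∃ P ∈ NN A (X b.1) x b.2.1, agr L u P}
  have hBad : (⋃ b, Bad b).Countable := by
    refine Set.countable_iUnion fun b => Set.Subsingleton.countable ?_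
    intro x hx y hy
    refine bad_unique (hX b.1) b.2.1 b.2.2.1
      (fun k => if h : k < b.2.2.1 then b.2.2.2 ⟨k, h⟩ else ⊥) x y ?_ ?_
    · intro L u hu
      refine hx L u fun i => ?_
      have := hu i i.2
      simpa using this
    · intro L u hu
      refine hy L u fun i => ?_
      have := hu i i.2
      simpa using this
  have hne : (⋃ b, Bad b) ≠ Set.univ := by
    intro h
    rw [h] at hBad
    have h1 : Countable Cant := Set.countable_univ_iff.1 hBad
    have h2 : Countable (Set ℕ) := by
      classical
      exact Function.Injective.countable (f := fun s : Set ℕ => fun n => decide (n ∈ s)) (by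
        intro s s' h
        ext n
        have := congrFun h n
        simpa using this)
    obtain ⟨f, hf⟩ := h2.exists_injective_nat
    exact Function.cantor_injective f hf
  obtain ⟨x, hx⟩ := (Set.ne_univ_iff_exists_notMem _).1 hne
  refine ⟨x, fun i n l t => ?_⟩
  by_contra hcon
  apply hx
  refine Set.mem_iUnion.2 ⟨(i, n, ⟨l, fun k => t k⟩), ?_⟩
  intro L u hu
  by_contra h
  apply hcon
  refine ⟨L, u, fun k hk => hu ⟨k, hk⟩, fun P hag hP => h ⟨P, hP, hag⟩⟩

lemma no_rep (oca : OCA) (hμ : IsMeasureOK μ) {A : Set CSp → Set ℕ} (hA : Rep μ A) : False := by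
  obtain ⟨X, hXcov, hX⟩ := step1 oca hA
  obtain ⟨x, hx⟩ := exists_good hX
  refine part2 hμ hA (cc x) (fun k k' h => (cc_eq h).1) (AA A x) ?_
    (fun i => {P | (x, P) ∈ X i ∧ ∀ n, P ∉ NN A (X i) x n})
    (fun q => NN A (X q.unpair.1) x q.unpair.2) ?_ ?_ ?_
  · intro P
    have hs : OO (cc x) P ⊆ OO (cc x) ⊤ := by
      rintro p ⟨k, h1, -⟩
      exact ⟨k, h1, trivial⟩
    filter_upwards [hA.sub (measurableSet_OO _ _) (measurableSet_OO _ _) hs] with n hn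
    exact ⟨fun h => h.1, fun h => ⟨h, hn h⟩⟩
  · intro P
    obtain ⟨i, hi⟩ := hXcov (x, P)
    by_cases h : ∀ n, P ∉ NN A (X i) x n
    · exact Or.inl ⟨i, hi, h⟩
    · push Not at h
      obtain ⟨n, hn⟩ := h
      refine Or.inr ⟨Nat.pair i n, ?_⟩
      simpa using hn
  · intro q l P
    obtain ⟨L, u, hu, hL⟩ := hx q.unpair.1 q.unpair.2 l P
    exact ⟨max l L, le_max_left _ _, u, hu, fun Q hQ => hL Q (hQ.mono (le_max_right _ _))⟩
  · rintro i P ⟨hP, hPn⟩ n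
    have h := hPn n
    have h' : ∃ l, ∀ Q, (x, Q) ∈ X i → agr l P Q → (n ∈ AA A x Q ↔ n ∈ AA A x P) := by
      by_contra hcon
      exact h ⟨hP, hcon⟩
    obtain ⟨l, hl⟩ := h'
    exact ⟨l, fun Q hQ hag => hl Q hQ.1 hag⟩

lemma pfin_eq {X Y : Set ℕ} (h : PFin.mk X = PFin.mk Y) :
    ∀ᶠ n in Filter.atTop, n ∈ X ↔ n ∈ Y := by
  have h1 : (symmDiff X Y).Finite := Quotient.exact h
  have h2 : ∀ᶠ n in Filter.cofinite, n ∉ symmDiff X Y := h1.eventually_cofinite_notMem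
  rw [Nat.cofinite_eq_atTop] at h2
  filter_upwards [h2] with n hn
  simp only [Set.mem_symmDiff] at hn
  tauto

lemma exists_rep {φ : MAlg μ → PFin ℕ} (h : IsEmbedding μ φ) : ∃ A, Rep μ A := by
  classical
  have hs : ∀ a : PFin ℕ, ∃ X : Set ℕ, PFin.mk X = a := fun a => Quotient.exists_rep a
  choose σ hσ using hs
  let A : Set CSp → Set ℕ := fun S =>
    if hS : MeasurableSet S then σ (φ (MAlg.mk μ ⟨S, hS⟩)) else ∅
  have hAS : ∀ S (hS : MeasurableSet S), PFin.mk (A S) = φ (MAlg.mk μ ⟨S, hS⟩) := by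
    intro S hS
    simp only [A, hS, dif_pos]
    exact hσ _
  refine ⟨A, ?_, ?_, ?_, ?_⟩
  · intro S T hS hT
    have : PFin.mk (A (S ∪ T)) = PFin.mk (A S ∪ A T) := by
      rw [hAS _ (hS.union hT)]
      have h1 := h.map_sup (MAlg.mk μ ⟨S, hS⟩) (MAlg.mk μ ⟨T, hT⟩)
      rw [← hAS, ← hAS] at h1
      exact h1
    exact pfin_eq this
  · intro S T hS hT
    have : PFin.mk (A (S ∩ T)) = PFin.mk (A S ∩ A T) := by
      rw [hAS _ (hS.inter hT)]
      have h1 := h.map_inf (MAlg.mk μ ⟨S, hS⟩) (MAlg.mk μ ⟨T, hT⟩)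
      rw [← hAS, ← hAS] at h1
      exact h1
    exact pfin_eq this
  · have : PFin.mk (A ∅) = PFin.mk (∅ : Set ℕ) := by
      rw [hAS _ MeasurableSet.empty]
      exact h.map_bot
    filter_upwards [pfin_eq this] with n hn h1
    exact hn.1 h1
  · intro S hS h0 hcon
    apply h0
    have hf : (A S).Finite := by
      rw [← Nat.cofinite_eq_atTop] at hcon
      have h2 : {n | ¬ (n ∉ A S)}.Finite := Filter.eventually_cofinite.1 hcon
      simpa using h2
    have h1 : φ (MAlg.mk μ ⟨S, hS⟩) = φ MAlg.bot := by
      rw [h.map_bot, ← hAS]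
      refine Quotient.sound ?_
      show (symmDiff (A S) ∅).Finite
      rw [show symmDiff (A S) ∅ = A S from symmDiff_bot _]
      exact hf
    have h2 : μ (symmDiff S ∅) = 0 := Quotient.exact (h.injective h1)
    simpa using h2

/-- Main Theorem: OCA implies that the measure algebra `ℳ` cannot be
embedded into `P(ℕ)/fin`. -/
theorem measure_algebra_does_not_embed (oca : OCA)
    (μ : Measure CSp) (hμ : IsMeasureOK μ) :
    ¬ ∃ φ : MAlg μ → PFin ℕ, IsEmbedding μ φ := by
  rintro ⟨φ, hφ⟩
  obtain ⟨A, hA⟩ := exists_rep hφ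
  exact no_rep oca hμ hA

end Paper
end

section
/- Assume that for every P_{ℵ₁}-ideal ℐ of subsets of a countable set, every coherent family of functions on ℐ with values in ω can be uniformized. Then for every P_{ℵ₁}-ideal ℐ on ω, every coherent family {f_I : I ∈ ℐ} of functions f_I : I → P(ℕ) can be uniformized, where two P(ℕ)-valued functions on a set agree almost everywhere if they take the same value at all but finitely many points of their common domain. -/
open Set MeasureTheory
open scoped ENNReal

namespace Paper

/-- `I` is an ideal of subsets of `C`. -/
def IsSetIdeal {C : Type} (I : Set (Set C)) : Prop :=
  ∅ ∈ I ∧ (∀ s ∈ I, ∀ t : Set C, t ⊆ s → t ∈ I) ∧ (∀ s ∈ I, ∀ t ∈ I, s ∪ t ∈ I)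

/-- `I` is a `P_{ℵ₁}`-ideal: every subfamily of size at most `ℵ₁` has an almost-upper bound
in `I`. -/
def IsPAleph1Ideal {C : Type} (I : Set (Set C)) : Prop :=
  ∀ I' ⊆ I, Cardinal.mk I' ≤ Cardinal.aleph 1 → ∃ J ∈ I, ∀ s ∈ I', (s \ J).Finite

/-- A family of functions `F I : I → β` (coded as total functions, only the values on `I`
matter) is coherent if `I ⊆ J` implies that `F J ↾ I` and `F I` agree at all but finitely
many points of `I`. -/
def Coherent {C β : Type} (I : Set (Set C)) (F : Set C → C → β) : Prop :=
  ∀ s ∈ I, ∀ t ∈ I, s ⊆ t → {x ∈ s | F t x ≠ F s x}.Finite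

/-- The family can be uniformized: there is a single function agreeing with each `F I`
at all but finitely many points of `I`. -/
def Uniformizable {C β : Type} (I : Set (Set C)) (F : Set C → C → β) : Prop :=
  ∃ f : C → β, ∀ s ∈ I, {x ∈ s | f x ≠ F s x}.Finite

/-- Key fact: off finite sets, all functions of the family take values in one countable set. -/
theorem exists_countable_range (I : Set (Set ℕ)) (hI : IsSetIdeal I) (hP : IsPAleph1Ideal I)
    (F : Set ℕ → ℕ → Set ℕ) (hF : Coherent I F) :
    ∃ Y : Set (Set ℕ), Y.Countable ∧ ∀ s ∈ I, {x ∈ s | F s x ∉ Y}.Finite := by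
  by_contra! hcon
  have hcon' : ∀ Y : Set (Set ℕ), ∃ s, Y.Countable → s ∈ I ∧ {x ∈ s | F s x ∉ Y}.Infinite := by
    intro Y
    by_cases hY : Y.Countable
    · obtain ⟨s, hs, h⟩ := hcon Y hY
      exact ⟨s, fun _ => ⟨hs, h⟩⟩
    · exact ⟨∅, fun h => absurd h hY⟩
  choose c hc using hcon'
  obtain ⟨W, hlin, hwf, hcard, hseg⟩ : ∃ (W : Type) (_ : LinearOrder W), WellFoundedLT W ∧
      Cardinal.mk W = Cardinal.aleph 1 ∧ ∀ i : W, (Set.Iio i).Countable := by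
    refine ⟨(Cardinal.aleph 1).ord.ToType, inferInstance, inferInstance, by simp, fun i => ?_⟩
    have h := Cardinal.mk_Iio_toType_ord_lt i
    rw [← Cardinal.le_aleph0_iff_set_countable]
    have h1 : Cardinal.aleph 1 = Order.succ Cardinal.aleph0 := by
      rw [← Cardinal.succ_aleph0]
    exact Order.lt_succ_iff.mp (h.trans_eq h1)
  let G : W → Set ℕ := hwf.wf.fix
    (fun i g => c (⋃ j : Set.Iio i, Set.range (F (g j.1 j.2))))
  let Y : W → Set (Set ℕ) := fun i => ⋃ j : Set.Iio i, Set.range (F (G j.1))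
  have hG : ∀ i, G i = c (Y i) := fun i => hwf.wf.fix_eq _ i
  have hY : ∀ i, (Y i).Countable := by
    intro i
    have := (hseg i).to_subtype
    exact Set.countable_iUnion fun j => Set.countable_range _
  have hGI : ∀ i, G i ∈ I := fun i => by rw [hG]; exact (hc _ (hY i)).1
  have hGinf : ∀ i, {x ∈ G i | F (G i) x ∉ Y i}.Infinite := fun i => by
    have := (hc _ (hY i)).2
    rwa [← hG] at this
  obtain ⟨J, hJ, hJs⟩ := hP (Set.range G) (by rintro _ ⟨i, rfl⟩; exact hGI i)
    (hcard ▸ Cardinal.mk_range_le)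
  have hx : ∀ i, ∃ x, F (G i) x ∉ Y i ∧ F J x = F (G i) x := by
    intro i
    have hK : G i ∩ J ∈ I := hI.2.1 _ hJ _ Set.inter_subset_right
    have f1 := hF _ hK _ hJ Set.inter_subset_right
    have f2 := hF _ hK _ (hGI i) Set.inter_subset_left
    have f3 := hJs _ ⟨i, rfl⟩
    obtain ⟨x, ⟨hx1, hx2⟩, hx3⟩ := (hGinf i).exists_notMem_finite ((f1.union f2).union f3)
    refine ⟨x, hx2, ?_⟩
    simp only [Set.mem_union, Set.mem_ofPred_eq, Set.mem_sdiff, Set.mem_inter_iff, not_or,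
      not_and, not_not] at hx3
    obtain ⟨⟨a, b⟩, d⟩ := hx3
    rw [a ⟨hx1, d hx1⟩, b ⟨hx1, d hx1⟩]
  choose x hx1 hx2 using hx
  have key : ∀ i j, i < j → x i ≠ x j := by
    intro i j hij h
    apply hx1 j
    rw [← hx2 j, ← h, hx2 i]
    exact Set.mem_iUnion.2 ⟨⟨i, hij⟩, ⟨x i, rfl⟩⟩
  have hinj : Function.Injective x := by
    intro i j h
    rcases lt_trichotomy i j with h' | h' | h'
    · exact absurd h (key _ _ h')
    · exact h'
    · exact absurd h.symm (key _ _ h')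
  have hle : Cardinal.mk W ≤ Cardinal.aleph0 := by
    have := hinj.countable
    exact Cardinal.mk_le_aleph0
  rw [hcard] at hle
  exact absurd hle (not_le.2 Cardinal.aleph0_lt_aleph_one)

/-- if every coherent family of `ω`-valued functions on a `P_{ℵ₁}`-ideal on a
countable set can be uniformized, then every coherent family of `P(ℕ)`-valued functions on a
`P_{ℵ₁}`-ideal on `ω` can be uniformized. -/
theorem uniformization_for_powerset_valued_families
    (H : ∀ (C : Type) [Countable C] (I : Set (Set C)), IsSetIdeal I → IsPAleph1Ideal I →
      ∀ F : Set C → C → ℕ, Coherent I F → Uniformizable I F)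
    (I : Set (Set ℕ)) (hI : IsSetIdeal I) (hP : IsPAleph1Ideal I)
    (F : Set ℕ → ℕ → Set ℕ) (hF : Coherent I F) :
    Uniformizable I F := by
  obtain ⟨Y, hY, hfin⟩ := exists_countable_range I hI hP F hF
  obtain ⟨e, he⟩ := Set.countable_iff_exists_injOn.1 hY
  obtain ⟨f, hf⟩ := H ℕ I hI hP (fun s x => e (F s x)) (by
    intro s hs t ht hst
    refine (hF s hs t ht hst).subset ?_
    rintro x ⟨hx, hne⟩
    exact ⟨hx, fun h => hne (by simp only [h])⟩)
  refine ⟨fun x => Function.invFunOn e Y (f x), fun s hs => ?_⟩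
  refine ((hf s hs).union (hfin s hs)).subset ?_
  rintro x ⟨hx, hne⟩
  by_contra hcon
  simp only [Set.mem_union, Set.mem_ofPred_eq, not_or, not_and, not_not] at hcon
  apply hne
  simp only [hcon.1 hx]
  exact he.leftInvOn_invFunOn (hcon.2 hx)

end Paper
end

section
/- Assume the Open Colouring Axiom (OCA). Let φ : P(ℕ) → P(ℕ)/fin be a Boolean-algebra embedding and let 𝒜 be a neat almost disjoint family on ℕ of cardinality ℵ₁. Then for all but countably many A ∈ 𝒜 there are a set D ⊆ ℕ and a function H : D → A such that φ(x) equals the class of H⁻¹[x] in P(ℕ)/fin for every x ⊆ A. -/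
open Set MeasureTheory
open scoped ENNReal

namespace Paper

/-- `φ : P(ℕ) → P(α)/fin` is a Boolean-algebra embedding -/
structure IsEmbeddingPN {α : Type} (φ : Set ℕ → PFin α) : Prop where
  injective : Function.Injective φ
  map_sup : ∀ a b : Set ℕ, φ (a ∪ b) = PFin.sup (φ a) (φ b)
  map_inf : ∀ a b : Set ℕ, φ (a ∩ b) = PFin.inf (φ a) (φ b)
  map_compl : ∀ a : Set ℕ, φ aᶜ = PFin.compl (φ a)
  map_bot : φ ∅ = PFin.bot
  map_top : φ Set.univ = PFin.top

/-- `Φ` is a lifting of `φ : P(ℕ) → P(α)/fin` -/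
def IsLiftingPN {α : Type} (φ : Set ℕ → PFin α) (Φ : Set ℕ → Set α) : Prop :=
  ∀ a, PFin.mk (Φ a) = φ a

def HomFin (F : Set ℕ → Set ℕ) : Prop :=
  (∀ a b, ∀ᶠ k in Filter.atTop, (k ∈ F (a ∩ b) ↔ k ∈ F a ∧ k ∈ F b)) ∧
  (∀ a b, ∀ᶠ k in Filter.atTop, (k ∈ F (a ∪ b) ↔ k ∈ F a ∨ k ∈ F b)) ∧
  (∀ᶠ k in Filter.atTop, k ∉ F ∅)

def SimpleOn (F : Set ℕ → Set ℕ) (A : Set ℕ) : Prop :=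
  ∃ (D : Set ℕ) (H : ℕ → ℕ), (∀ p ∈ D, H p ∈ A) ∧
    ∀ x ⊆ A, ∀ᶠ k in Filter.atTop, (k ∈ F x ↔ k ∈ D ∧ H k ∈ x)

def Agree (m : ℕ) (x y : Set ℕ) : Prop := ∀ i < m, (i ∈ x ↔ i ∈ y)

lemma HomFin.disj {F : Set ℕ → Set ℕ} (hF : HomFin F) {a b : Set ℕ} (h : a ∩ b = ∅) :
    ∀ᶠ k in Filter.atTop, ¬ (k ∈ F a ∧ k ∈ F b) := by
  have h1 := hF.1 a b
  rw [h] at h1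
  filter_upwards [h1, hF.2.2] with k h2 h3
  tauto

lemma HomFin.mono {F : Set ℕ → Set ℕ} (hF : HomFin F) {a b : Set ℕ} (h : a ⊆ b) :
    ∀ᶠ k in Filter.atTop, (k ∈ F a → k ∈ F b) := by
  have h1 := hF.1 a b
  rw [Set.inter_eq_left.2 h] at h1
  filter_upwards [h1] with k h2
  tauto

lemma SimpleOn.mono {F : Set ℕ → Set ℕ} {A A' : Set ℕ} (h : SimpleOn F A) (hs : A' ⊆ A) :
    SimpleOn F A' := by
  obtain ⟨D, H, h1, h2⟩ := h
  refine ⟨{p ∈ D | H p ∈ A'}, H, fun p hp => hp.2, fun x hx => ?_⟩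
  filter_upwards [h2 x (hx.trans hs)] with k hk
  rw [hk]
  constructor
  · rintro ⟨h3, h4⟩; exact ⟨⟨h3, hx h4⟩, h4⟩
  · rintro ⟨h3, h4⟩; exact ⟨h3.1, h4⟩

lemma SimpleOn.union {F : Set ℕ → Set ℕ} (hF : HomFin F) {A A' : Set ℕ}
    (h : SimpleOn F A) (h' : SimpleOn F A') : SimpleOn F (A ∪ A') := by
  classical
  have h'' : SimpleOn F (A' \ A) := h'.mono Set.sdiff_subset
  obtain ⟨D, H, h1, h2⟩ := h
  obtain ⟨E, K, h3, h4⟩ := h''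
  refine ⟨D ∪ E, fun k => if k ∈ D then H k else K k, ?_, ?_⟩
  · intro p hp
    by_cases hD : p ∈ D
    · simp only [hD, if_true]; exact Or.inl (h1 p hD)
    · simp only [hD, if_false]
      exact Or.inr (h3 p (hp.resolve_left hD)).1
  · intro x hx
    have e : x = (x ∩ A) ∪ (x \ A) := by simp
    have u := hF.2.1 (x ∩ A) (x \ A)
    rw [← e] at u
    have hxa : x \ A ⊆ A' \ A := fun i hi => ⟨(hx hi.1).resolve_left hi.2, hi.2⟩
    have dj := hF.disj (a := A) (b := A' \ A) (by simp)
    filter_upwards [u, h2 _ (inter_subset_right (s := x) (t := A)), h4 _ hxa, dj, h2 A subset_rfl,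
      h4 _ subset_rfl] with k a1 a2 a3 a4 a5 a6
    rw [a1, a2, a3]
    rw [a5, a6] at a4
    by_cases hD : k ∈ D
    · have : k ∉ E := fun hE => a4 ⟨⟨hD, h1 k hD⟩, ⟨hE, h3 k hE⟩⟩
      have hA := h1 k hD
      simp only [hD, if_true, this, Set.mem_union, Set.mem_inter_iff, hA, and_true, true_and,
        false_and, or_false]
    · simp only [hD, if_false, Set.mem_union, Set.mem_sdiff]
      constructor
      · rintro (h | h)
        · exact h.1.elim
        · exact ⟨Or.inr h.1, h.2.1⟩
      · rintro ⟨h | h, h'⟩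
        · exact h.elim
        · exact Or.inr ⟨h, h', (h3 k h).2⟩

lemma SimpleOn.finite {F : Set ℕ → Set ℕ} (hF : HomFin F) {A : Set ℕ} (h : A.Finite) :
    SimpleOn F A := by
  induction A, h using Set.Finite.induction_on with
  | empty =>
    refine ⟨∅, id, by simp, fun x hx => ?_⟩
    rw [Set.subset_empty_iff.1 hx]
    filter_upwards [hF.2.2] with k hk
    simp [hk]
  | @insert a s _ _ ih =>
    rw [Set.insert_eq]
    refine SimpleOn.union hF ?_ ih
    refine ⟨F {a}, fun _ => a, by simp, fun x hx => ?_⟩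
    rcases Set.subset_singleton_iff_eq.1 hx with rfl | rfl
    · filter_upwards [hF.2.2] with k hk
      simp [hk]
    · simp

lemma SimpleOn.of_diff {F : Set ℕ → Set ℕ} (hF : HomFin F) {A A' : Set ℕ}
    (h : SimpleOn F A') (hfin : (A \ A').Finite) : SimpleOn F A :=
  (SimpleOn.union hF h (SimpleOn.finite hF hfin)).mono (by intro i hi; by_cases h : i ∈ A' <;> simp [h, hi])

lemma block_one {α : Type} [Finite α] (C : ℕ → Set α) (U : Set (ℕ → α))
    (hU : ∀ (m : ℕ) (ω : ℕ → α), (∀ i, ω i ∈ C i) → ∃ ω' : ℕ → α, (∀ i, ω' i ∈ C i) ∧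
      (∀ i < m, ω' i = ω i) ∧ ∃ m' : ℕ, ∀ ω'' : ℕ → α, (∀ i, ω'' i ∈ C i) →
        (∀ i < m', ω'' i = ω' i) → ω'' ∈ U)
    (t0 : ℕ → α) (ht0 : ∀ i, t0 i ∈ C i) (m : ℕ) :
    ∃ m' > m, ∃ t : ℕ → α, (∀ i, t i ∈ C i) ∧ ∀ ω : ℕ → α, (∀ i, ω i ∈ C i) →
      (∀ i, m ≤ i → i < m' → ω i = t i) → ω ∈ U := by
  have key : ∀ S : Set (Fin m → α), S.Finite → ∃ m' > m, ∃ t : ℕ → α, (∀ i, t i ∈ C i) ∧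
      ∀ ω : ℕ → α, (∀ i, ω i ∈ C i) → (fun i : Fin m => ω i) ∈ S →
      (∀ i, m ≤ i → i < m' → ω i = t i) → ω ∈ U := by
    intro S hS
    induction S, hS using Set.Finite.induction_on with
    | empty => exact ⟨m + 1, by simp, t0, ht0, by simp⟩
    | @insert ρ S _ _ ih =>
      obtain ⟨m1, hm1, t, ht, h1⟩ := ih
      by_cases hρ : ∃ ω0 : ℕ → α, (∀ i, ω0 i ∈ C i) ∧ (fun i : Fin m => ω0 i) = ρ
      · obtain ⟨ω0, hω0, hρ⟩ := hρ
        obtain ⟨ω', hω', ha, m2, hm2⟩ := hU m1 (fun i => if i < m then ω0 i else t i) (by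
          intro i; split_ifs; exacts [hω0 i, ht i])
        refine ⟨max m1 m2, by simp [hm1], ω', hω', fun ω hω hS hag => ?_⟩
        rcases hS with hS | hS
        · refine hm2 ω hω fun i hi => ?_
          by_cases him : i < m
          · rw [ha i (by omega), if_pos him]
            rw [← hρ] at hS
            exact congrFun hS ⟨i, him⟩
          · exact hag i (by omega) (by simp [hi])
        · refine h1 ω hω hS fun i hi1 hi2 => ?_
          rw [hag i hi1 (by simp [hi2]), ha i hi2, if_neg (by omega)]
      · refine ⟨m1, hm1, t, ht, fun ω hω hS hag => ?_⟩
        rcases hS with hS | hS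
        · exact (hρ ⟨ω, hω, hS⟩).elim
        · exact h1 ω hω hS hag
  obtain ⟨m', hm', t, ht, h⟩ := key Set.univ Set.finite_univ
  exact ⟨m', hm', t, ht, fun ω hω => h ω hω (Set.mem_univ _)⟩

lemma block_seq {α : Type} [Finite α] (C : ℕ → Set α) (U : ℕ → Set (ℕ → α))
    (hU : ∀ (J m : ℕ) (ω : ℕ → α), (∀ i, ω i ∈ C i) → ∃ ω' : ℕ → α, (∀ i, ω' i ∈ C i) ∧
      (∀ i < m, ω' i = ω i) ∧ ∃ m' : ℕ, ∀ ω'' : ℕ → α, (∀ i, ω'' i ∈ C i) →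
        (∀ i < m', ω'' i = ω' i) → ω'' ∈ U J)
    (t0 : ℕ → α) (ht0 : ∀ i, t0 i ∈ C i) :
    ∃ (m : ℕ → ℕ) (t : ℕ → α), StrictMono m ∧ (∀ i, t i ∈ C i) ∧
      ∀ n, ∀ ω : ℕ → α, (∀ i, ω i ∈ C i) →
      (∀ i, m n ≤ i → i < m (n + 1) → ω i = t i) → ω ∈ U n := by
  classical
  choose g hg s hs h using fun J m => block_one C (U J) (hU J) t0 ht0 m
  obtain ⟨m, hm⟩ : ∃ m : ℕ → ℕ, ∀ n, m (n + 1) = g n (m n) :=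
    ⟨fun n => Nat.rec (motive := fun _ => ℕ) 0 (fun n a => g n a) n, fun n => rfl⟩
  have mono : StrictMono m := strictMono_nat_of_lt_succ fun n => by rw [hm]; exact hg _ _
  have uniq : ∀ i a b, m a ≤ i → i < m (a + 1) → m b ≤ i → i < m (b + 1) → a = b := by
    intro i a b h1 h2 h3 h4
    have h5 : a < b + 1 := mono.lt_iff_lt.1 (lt_of_le_of_lt h1 h4)
    have h6 : b < a + 1 := mono.lt_iff_lt.1 (lt_of_le_of_lt h3 h2)
    omega
  let t : ℕ → α := fun i => if h : ∃ n : ℕ, m n ≤ i ∧ i < m (n + 1) then s h.choose (m h.choose) i else t0 i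
  refine ⟨m, t, mono, ?_, ?_⟩
  · intro i
    simp only [t]
    split_ifs
    · exact hs _ _ _
    · exact ht0 i
  · intro n ω hω hag
    refine h n (m n) ω hω fun i h1 h2 => ?_
    rw [hag i h1 (by rw [hm]; exact h2)]
    have hex : ∃ n, m n ≤ i ∧ i < m (n + 1) := ⟨n, h1, by rw [hm]; exact h2⟩
    have : hex.choose = n := uniq i _ _ hex.choose_spec.1 hex.choose_spec.2 h1 (by rw [hm]; exact h2)
    simp only [t, dif_pos hex, this]

lemma block_pair (C : ℕ → Prop → Prop → Prop) (U : ℕ → Set ℕ → Set ℕ → Prop)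
    (hU : ∀ (J m : ℕ) (x y : Set ℕ), (∀ i, C i (i ∈ x) (i ∈ y)) →
      ∃ x' y' : Set ℕ, (∀ i, C i (i ∈ x') (i ∈ y')) ∧ Agree m x' x ∧ Agree m y' y ∧
      ∃ m' : ℕ, ∀ x'' y'' : Set ℕ, (∀ i, C i (i ∈ x'') (i ∈ y'')) → Agree m' x'' x' →
        Agree m' y'' y' → U J x'' y'')
    (x0 y0 : Set ℕ) (h0 : ∀ i, C i (i ∈ x0) (i ∈ y0)) :
    ∃ (m : ℕ → ℕ) (t s : Set ℕ), StrictMono m ∧ (∀ i, C i (i ∈ t) (i ∈ s)) ∧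
      ∀ (n : ℕ) (x y : Set ℕ), (∀ i, C i (i ∈ x) (i ∈ y)) →
      (∀ i, m n ≤ i → i < m (n + 1) → ((i ∈ x ↔ i ∈ t) ∧ (i ∈ y ↔ i ∈ s))) → U n x y := by
  obtain ⟨m, t, hm, ht, h⟩ := block_seq (α := Prop × Prop) (fun i => {p | C i p.1 p.2})
    (fun J => {ω | U J {i | (ω i).1} {i | (ω i).2}})
    (by
      intro J m ω hω
      obtain ⟨x', y', h1, h2, h3, m', h4⟩ := hU J m {i | (ω i).1} {i | (ω i).2} hω
      refine ⟨fun i => (i ∈ x', i ∈ y'), h1, ?_, m', ?_⟩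
      · intro i hi
        exact Prod.ext (propext (h2 i hi)) (propext (h3 i hi))
      · intro ω'' hω'' hag
        refine h4 _ _ hω'' ?_ ?_
        · intro i hi
          have := congrArg Prod.fst (hag i hi)
          exact iff_of_eq this
        · intro i hi
          have := congrArg Prod.snd (hag i hi)
          exact iff_of_eq this)
    (fun i => (i ∈ x0, i ∈ y0)) h0
  refine ⟨m, {i | (t i).1}, {i | (t i).2}, hm, ht, fun n x y hC hag => ?_⟩
  exact h n (fun i => (i ∈ x, i ∈ y)) hC fun i h1 h2 =>
    Prod.ext (propext (hag i h1 h2).1) (propext (hag i h1 h2).2)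

lemma Agree.refl (m : ℕ) (x : Set ℕ) : Agree m x x := fun _ _ => Iff.rfl
lemma Agree.symm {m : ℕ} {x y : Set ℕ} (h : Agree m x y) : Agree m y x :=
  fun i hi => (h i hi).symm
lemma Agree.trans {m : ℕ} {x y z : Set ℕ} (h : Agree m x y) (h' : Agree m y z) : Agree m x z :=
  fun i hi => (h i hi).trans (h' i hi)
lemma Agree.le {m m' : ℕ} {x y : Set ℕ} (h : Agree m x y) (hm : m' ≤ m) : Agree m' x y :=
  fun i hi => h i (lt_of_lt_of_le hi hm)

/-- the homomorphism property at a point -/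
def HomAt (G : Set ℕ → Set ℕ) (k : ℕ) (x y : Set ℕ) : Prop :=
  (k ∈ G (x ∪ y) ↔ k ∈ G x ∨ k ∈ G y) ∧ (k ∈ G (x ∩ y) ↔ k ∈ G x ∧ k ∈ G y)

lemma step3_aux {F G : Set ℕ → Set ℕ} (hF : HomFin F) {A : Set ℕ}
    (hc : ∀ x ⊆ A, ∀ k, ∃ m, ∀ y ⊆ A, Agree m x y → (k ∈ G x ↔ k ∈ G y))
    (hG : ∀ x ⊆ A, ∀ᶠ k in Filter.atTop, (k ∈ G x ↔ k ∈ F x)) :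
    ∃ (m : ℕ) (x0 y0 : Set ℕ) (J : ℕ), x0 ⊆ A ∧ y0 ⊆ A ∧ ∀ x ⊆ A, ∀ y ⊆ A, Agree m x x0 →
      Agree m y y0 → ∀ k ≥ J, HomAt G k x y := by
  by_contra hcon
  push Not at hcon
  obtain ⟨m, t, s, -, hC, h⟩ := block_pair (fun i a b => (a → i ∈ A) ∧ (b → i ∈ A))
    (fun J x y => ∃ k ≥ J, ¬ HomAt G k x y)
    (by
      intro J m x y hxy
      obtain ⟨x', hx', y', hy', h1, h2, k, hk, h3⟩ := hcon m x y J (fun i hi => (hxy i).1 hi)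
        (fun i hi => (hxy i).2 hi)
      refine ⟨x', y', fun i => ⟨fun h => hx' h, fun h => hy' h⟩, h1, h2, ?_⟩
      obtain ⟨m1, hm1⟩ := hc x' hx' k
      obtain ⟨m2, hm2⟩ := hc y' hy' k
      obtain ⟨m3, hm3⟩ := hc (x' ∪ y') (union_subset hx' hy') k
      obtain ⟨m4, hm4⟩ := hc (x' ∩ y') (inter_subset_left.trans hx') k
      refine ⟨max (max m1 m2) (max m3 m4), fun x'' y'' hC hx hy => ⟨k, hk, ?_⟩⟩
      have hx'' : x'' ⊆ A := fun i hi => (hC i).1 hi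
      have hy'' : y'' ⊆ A := fun i hi => (hC i).2 hi
      have e1 := hm1 x'' hx'' (hx.symm.le (by simp))
      have e2 := hm2 y'' hy'' (hy.symm.le (by simp))
      have e3 := hm3 (x'' ∪ y'') (union_subset hx'' hy'') (by
        intro i hi
        have a1 := hx i (lt_of_lt_of_le hi (by simp))
        have a2 := hy i (lt_of_lt_of_le hi (by simp))
        simp only [mem_union, a1, a2])
      have e4 := hm4 (x'' ∩ y'') (inter_subset_left.trans hx'') (by
        intro i hi
        have a1 := hx i (lt_of_lt_of_le hi (by simp))
        have a2 := hy i (lt_of_lt_of_le hi (by simp))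
        simp only [mem_inter_iff, a1, a2])
      unfold HomAt at h3 ⊢
      rwa [← e1, ← e2, ← e3, ← e4]) ∅ ∅ (by simp)
  have ht : t ⊆ A := fun i hi => (hC i).1 hi
  have hs : s ⊆ A := fun i hi => (hC i).2 hi
  have ev : ∀ᶠ k in Filter.atTop, HomAt G k t s := by
    filter_upwards [hG t ht, hG s hs, hG (t ∪ s) (union_subset ht hs),
      hG (t ∩ s) (inter_subset_left.trans ht), hF.1 t s, hF.2.1 t s] with k h1 h2 h3 h4 h5 h6
    unfold HomAt
    rw [h1, h2, h3, h4]
    exact ⟨h6, h5⟩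
  obtain ⟨J, hJ⟩ := Filter.eventually_atTop.1 ev
  obtain ⟨k, hk, hk'⟩ := h J t s hC (by simp)
  exact hk' (hJ k hk)

set_option maxHeartbeats 4000000 in
lemma step3 {F G : Set ℕ → Set ℕ} (hF : HomFin F) {A : Set ℕ}
    (hc : ∀ x ⊆ A, ∀ k, ∃ m, ∀ y ⊆ A, Agree m x y → (k ∈ G x ↔ k ∈ G y))
    (hG : ∀ x ⊆ A, ∀ᶠ k in Filter.atTop, (k ∈ G x ↔ k ∈ F x)) : SimpleOn F A := by
  classical
  obtain ⟨m, x0, y0, J, hx0, hy0, hH⟩ := step3_aux hF hc hG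
  set s := x0 ∩ Set.Iio m with hs
  set t := y0 ∩ Set.Iio m with ht
  set B := A \ Set.Iio m with hB
  have hBA : B ⊆ A := sdiff_subset
  have hsA : s ⊆ A := inter_subset_left.trans hx0
  have htA : t ⊆ A := inter_subset_left.trans hy0
  have hsB : s ∩ B = ∅ := by ext i; simp [hs, hB]; tauto
  have htB : t ∩ B = ∅ := by ext i; simp [ht, hB]; tauto
  refine SimpleOn.of_diff hF (A' := B) ?_ ((Set.finite_Iio m).subset (by
    intro i hi; by_contra h; exact hi.2 ⟨hi.1, h⟩))
  -- eventual facts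
  have hst : ∀ᶠ k in Filter.atTop, k ∈ F B → k ∉ G s ∧ k ∉ G t := by
    filter_upwards [hG s hsA, hG t htA, hF.disj hsB, hF.disj htB] with k h1 h2 h3 h4 h5
    rw [h1, h2]; tauto
  obtain ⟨J1, hJ1⟩ := Filter.eventually_atTop.1 hst
  have hsB' : ∀ᶠ k in Filter.atTop, k ∈ F B → k ∈ G (s ∪ B) := by
    filter_upwards [hG (s ∪ B) (union_subset hsA hBA), hF.2.1 s B] with k h1 h2 h3
    rw [h1, h2]; exact Or.inr h3
  obtain ⟨J2, hJ2⟩ := Filter.eventually_atTop.1 hsB'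
  set D := {k | k ∈ F B ∧ J ≤ k ∧ J1 ≤ k ∧ J2 ≤ k} with hD
  have agS : ∀ z ⊆ B, Agree m (s ∪ z) x0 := by
    intro z hz i hi
    have : i ∉ z := fun h => (hz h).2 hi
    simp [hs, this, hi]
  have agT : ∀ z ⊆ B, Agree m (t ∪ z) y0 := by
    intro z hz i hi
    have : i ∉ z := fun h => (hz h).2 hi
    simp [ht, this, hi]
  have subS : ∀ z ⊆ B, s ∪ z ⊆ A := fun z hz => union_subset hsA (hz.trans hBA)
  have subT : ∀ z ⊆ B, t ∪ z ⊆ A := fun z hz => union_subset htA (hz.trans hBA)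
  have hom : ∀ k ≥ J, ∀ z ⊆ B, ∀ w ⊆ B, HomAt G k (s ∪ z) (t ∪ w) := fun k hk z hz w hw =>
    hH _ (subS z hz) _ (subT w hw) (agS z hz) (agT w hw) k hk
  have main : ∀ k ∈ D, ∃ i ∈ B, ∀ z ⊆ B, (k ∈ G (s ∪ z) ↔ i ∈ z) := by
    rintro k ⟨hkB, hkJ, hk1, hk2⟩
    have hks := (hJ1 k hk1 hkB).1
    have hkt := (hJ1 k hk1 hkB).2
    have hkB := hJ2 k hk2 hkB
    have hE : ∅ ⊆ B := empty_subset _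
    -- f z ↔ g z
    have hz1 : ∀ z ⊆ B, (k ∈ G (s ∪ z) ↔ k ∈ G (t ∪ z)) := by
      intro z hz
      have a1 := (hom k hkJ z hz ∅ hE).1
      have a2 := (hom k hkJ ∅ hE z hz).1
      rw [union_empty] at a1 a2
      have e : s ∪ z ∪ t = s ∪ (t ∪ z) := by rw [union_assoc, union_comm z t]
      rw [e] at a1
      tauto
    have hun : ∀ z ⊆ B, ∀ w ⊆ B, (k ∈ G (s ∪ (z ∪ w)) ↔ k ∈ G (s ∪ z) ∨ k ∈ G (s ∪ w)) := by
      intro z hz w hw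
      have a1 := (hom k hkJ z hz w hw).1
      have a2 := (hom k hkJ (z ∪ w) (union_subset hz hw) ∅ hE).1
      rw [union_empty] at a2
      have e : s ∪ z ∪ (t ∪ w) = s ∪ (z ∪ w) ∪ t := by ext i; simp; tauto
      rw [e] at a1
      rw [hz1 w hw]
      tauto
    have hint : ∀ z ⊆ B, ∀ w ⊆ B, z ∩ w = ∅ → ¬ (k ∈ G (s ∪ z) ∧ k ∈ G (s ∪ w)) := by
      intro z hz w hw hzw ⟨b1, b2⟩
      have a1 := (hom k hkJ z hz w hw).2
      have a2 := (hom k hkJ ∅ hE ∅ hE).2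
      rw [union_empty, union_empty] at a2
      have e : (s ∪ z) ∩ (t ∪ w) = s ∩ t := by
        ext i
        have q1 : ¬ (i ∈ z ∧ i ∈ w) := fun h => by
          have : i ∈ z ∩ w := h
          rw [hzw] at this; exact this
        have q2 : i ∈ z → i ∉ t := fun h h' => by
          have : i ∈ t ∩ B := ⟨h', hz h⟩
          rw [htB] at this; exact this
        have q3 : i ∈ w → i ∉ s := fun h h' => by
          have : i ∈ s ∩ B := ⟨h', hw h⟩
          rw [hsB] at this; exact this
        simp only [mem_inter_iff, mem_union]; tauto
      rw [e] at a1
      rw [hz1 w hw] at b2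
      tauto
    -- finite sets
    have hfin : ∀ S : Set ℕ, S.Finite → S ⊆ B → k ∈ G (s ∪ S) → ∃ i ∈ S, k ∈ G (s ∪ {i}) := by
      intro S hS
      induction S, hS using Set.Finite.induction_on with
      | empty => intro _ h; rw [union_empty] at h; exact (hks h).elim
      | @insert a S _ _ ih =>
        intro hSB h
        rw [insert_eq] at h
        have ha : a ∈ B := hSB (mem_insert _ _)
        have hS' : S ⊆ B := (subset_insert _ _).trans hSB
        rcases (hun {a} (by simpa using ha) S hS').1 h with h | h
        · exact ⟨a, mem_insert _ _, h⟩
        · obtain ⟨i, hi, h⟩ := ih hS' h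
          exact ⟨i, mem_insert_of_mem _ hi, h⟩
    obtain ⟨M, hM⟩ := hc (s ∪ B) (subS B subset_rfl) k
    have hBM : B ∩ Iio M ⊆ B := inter_subset_left
    have hkM := (hM (s ∪ (B ∩ Iio M)) (subS _ hBM) (by
      intro i hi
      have : i ∈ Iio M := hi
      simp [this])).1 hkB
    obtain ⟨i, hi, hki⟩ := hfin _ ((Set.finite_Iio M).subset inter_subset_right) hBM hkM
    have hiB : i ∈ B := hi.1
    have hiS : ({i} : Set ℕ) ⊆ B := by simpa using hiB
    refine ⟨i, hiB, fun z hz => ⟨fun h => ?_, fun h => ?_⟩⟩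
    · by_contra hn
      exact hint {i} hiS z hz (by ext j; simp; rintro rfl; exact hn) ⟨hki, h⟩
    · have : z = {i} ∪ z := by ext j; simp; rintro rfl; exact h
      rw [this, hun {i} hiS z hz]
      exact Or.inl hki
  choose! H hHB hHH using main
  refine ⟨D, H, hHB, fun x hx => ?_⟩
  have hsx : s ∩ x = ∅ := by
    ext i; constructor
    · rintro ⟨h1, h2⟩
      have : i ∈ s ∩ B := ⟨h1, hx h2⟩
      rwa [hsB] at this
    · simp
  filter_upwards [hst, hF.mono hx, hG (s ∪ x) (subS x hx), hF.2.1 s x, hG s hsA,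
    Filter.eventually_ge_atTop J, Filter.eventually_ge_atTop J1, Filter.eventually_ge_atTop J2]
    with k h1 h2 h3 h4 h5 h6 h7 h8
  constructor
  · intro hk
    have hkD : k ∈ D := ⟨h2 hk, h6, h7, h8⟩
    exact ⟨hkD, (hHH k hkD x hx).1 (h3.2 (h4.2 (Or.inr hk)))⟩
  · rintro ⟨hkD, hkx⟩
    have a1 := h4.1 (h3.1 ((hHH k hkD x hx).2 hkx))
    rcases a1 with a1 | a1
    · exact ((h1 hkD.1).1 (h5.2 a1)).elim
    · exact a1

/-- the value at `k` is decided by the first `m` digits -/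
def Dec (F : Set ℕ → Set ℕ) (Z : Set (Set ℕ)) (P p : Set ℕ) (k m : ℕ) (x : Set ℕ) (v : Prop) :
    Prop :=
  ∀ d ∈ Z, (∀ i ∈ P, (i ∈ d ↔ i ∈ p)) → Agree m d x → (k ∈ F d ↔ v)

lemma block_unique {m : ℕ → ℕ} (mono : StrictMono m) {i a b : ℕ} (h1 : m a ≤ i)
    (h2 : i < m (a + 1)) (h3 : m b ≤ i) (h4 : i < m (b + 1)) : a = b := by
  have h5 : a < b + 1 := mono.lt_iff_lt.1 (lt_of_le_of_lt h1 h4)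
  have h6 : b < a + 1 := mono.lt_iff_lt.1 (lt_of_le_of_lt h3 h2)
  omega

lemma step2_aux {F : Set ℕ → Set ℕ} (hF : HomFin F) {Z : Set (Set ℕ)}
    {P p A : Set ℕ} (Small : Set ℕ → Prop)
    (hPA : Small (P ∪ A)) (hsplit : ∀ Q T, Small Q → Small (Q ∪ T) ∨ Small (Q ∪ Tᶜ))
    (hdense : ∀ Q, P ⊆ Q → Small Q → ∀ q : Set ℕ, (∀ i ∈ P, (i ∈ q ↔ i ∈ p)) →
      ∃ d ∈ Z, ∀ i ∈ Q, (i ∈ d ↔ i ∈ q)) :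
    ∃ (m : ℕ) (x x' : Set ℕ) (J : ℕ), (∀ i ∈ P, (i ∈ x ↔ i ∈ p)) ∧ (∀ i ∈ P, (i ∈ x' ↔ i ∈ p)) ∧
      (∀ i ∈ A, (i ∈ x ↔ i ∈ x')) ∧ ∀ k ≥ J, k ∈ F A → ∀ m', ∀ y y' : Set ℕ,
      (∀ i ∈ P, (i ∈ y ↔ i ∈ p)) → (∀ i ∈ P, (i ∈ y' ↔ i ∈ p)) → (∀ i ∈ A, (i ∈ y ↔ i ∈ y')) →
      Agree m y x → Agree m y' x' → ∀ v, Dec F Z P p k m' y v → ¬ Dec F Z P p k m' y' (¬ v) := by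
  by_contra hcon
  push Not at hcon
  obtain ⟨m, t, s, hm, hC, h⟩ := block_pair
    (fun i a b => (i ∈ P → (a ↔ i ∈ p) ∧ (b ↔ i ∈ p)) ∧ (i ∈ A → (a ↔ b)))
    (fun J x y => ∃ k ≥ J, k ∈ F A ∧ ∃ m' v, Dec F Z P p k m' x v ∧ Dec F Z P p k m' y (¬ v))
    (by
      intro J m x y hC
      obtain ⟨k, hk, hkA, m', y1, y2, h1, h2, h3, h4, h5, v, h6, h7⟩ := hcon m x y J
        (fun i hi => ((hC i).1 hi).1) (fun i hi => ((hC i).1 hi).2) (fun i hi => (hC i).2 hi)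
      refine ⟨y1, y2, fun i => ⟨fun hi => ⟨h1 i hi, h2 i hi⟩, h3 i⟩, h4, h5, m', ?_⟩
      intro x'' y'' hC'' ha1 ha2
      exact ⟨k, hk, hkA, m', v, fun d hd hp hag => h6 d hd hp (hag.trans ha1),
        fun d hd hp hag => h7 d hd hp (hag.trans ha2)⟩) p p (by simp)
  have key : ∀ (S : Set ℕ) (e : ℕ), Small (P ∪ A ∪ S) →
      (∀ n i, m (2 * n + e) ≤ i → i < m (2 * n + e + 1) → i ∈ S) → False := by
    intro S e hS hb
    obtain ⟨d, hd, hdt⟩ := hdense _ (subset_union_left.trans subset_union_left) hS t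
      (fun i hi => ((hC i).1 hi).1)
    obtain ⟨d', hd', hdt'⟩ := hdense _ (subset_union_left.trans subset_union_left) hS s
      (fun i hi => ((hC i).1 hi).2)
    have hP : ∀ i ∈ P, (i ∈ d ↔ i ∈ p) := fun i hi =>
      (hdt i (Or.inl (Or.inl hi))).trans ((hC i).1 hi).1
    have hP' : ∀ i ∈ P, (i ∈ d' ↔ i ∈ p) := fun i hi =>
      (hdt' i (Or.inl (Or.inl hi))).trans ((hC i).1 hi).2
    have hA : ∀ i ∈ A, (i ∈ d ↔ i ∈ d') := fun i hi =>
      ((hdt i (Or.inl (Or.inr hi))).trans ((hC i).2 hi)).trans (hdt' i (Or.inl (Or.inr hi))).symm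
    have hAA : d ∩ A = d' ∩ A := by
      ext i; constructor
      · rintro ⟨a, b⟩; exact ⟨(hA i b).1 a, b⟩
      · rintro ⟨a, b⟩; exact ⟨(hA i b).2 a, b⟩
    have e1 := hF.1 d A
    have e2 := hF.1 d' A
    rw [hAA] at e1
    obtain ⟨J, hJ⟩ := Filter.eventually_atTop.1 (e1.and e2)
    obtain ⟨k, hk, hkA, m', v, h1, h2⟩ := h (2 * J + e) d d'
      (fun i => ⟨fun hi => ⟨hP i hi, hP' i hi⟩, hA i⟩)
      (fun i hi1 hi2 => ⟨hdt i (Or.inr (hb J i hi1 hi2)), hdt' i (Or.inr (hb J i hi1 hi2))⟩)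
    have a1 := h1 d hd hP (Agree.refl _ _)
    have a2 := h2 d' hd' hP' (Agree.refl _ _)
    have a3 := hJ k (by omega)
    tauto
  rcases hsplit _ {i | ∃ n, m (2 * n) ≤ i ∧ i < m (2 * n + 1)} hPA with h1 | h1
  · exact key _ 0 h1 (fun n i a b => ⟨n, a, b⟩)
  · refine key _ 1 h1 (fun n i a b => ?_)
    rintro ⟨n', a', b'⟩
    have := block_unique hm a b a' b'
    omega

lemma Dec.le {F : Set ℕ → Set ℕ} {Z : Set (Set ℕ)} {P p : Set ℕ} {k m m' : ℕ} {x : Set ℕ}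
    {v : Prop} (h : Dec F Z P p k m x v) (hm : m ≤ m') : Dec F Z P p k m' x v :=
  fun d hd hp ha => h d hd hp (ha.le hm)

set_option maxHeartbeats 1000000 in
lemma step2 {F : Set ℕ → Set ℕ} (hF : HomFin F) {Z : Set (Set ℕ)}
    (hZ : ∀ d ∈ Z, ∀ k, ∃ m, ∀ d' ∈ Z, Agree m d d' → (k ∈ F d ↔ k ∈ F d'))
    {P p A : Set ℕ} (hAP : ∀ i ∈ A, i ∉ P) (Small : Set ℕ → Prop)
    (hPA : Small (P ∪ A)) (hsplit : ∀ Q T, Small Q → Small (Q ∪ T) ∨ Small (Q ∪ Tᶜ))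
    (hfin : ∀ Q m, Small Q → Small (Q ∪ Iio m))
    (hdense : ∀ Q, P ⊆ Q → Small Q → ∀ q : Set ℕ, (∀ i ∈ P, (i ∈ q ↔ i ∈ p)) →
      ∃ d ∈ Z, ∀ i ∈ Q, (i ∈ d ↔ i ∈ q)) : SimpleOn F A := by
  classical
  obtain ⟨m, x, x', J, hx, hx', hxx, hno⟩ := step2_aux hF Small hPA hsplit hdense
  obtain ⟨B, hB⟩ : ∃ B, B = A \ Set.Iio m := ⟨_, rfl⟩
  have hBA : B ⊆ A := by rw [hB]; exact sdiff_subset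
  have hBm : ∀ i ∈ B, ¬ i < m := by rw [hB]; exact fun i hi => hi.2
  refine SimpleOn.of_diff hF (A' := B) ?_ ((Set.finite_Iio m).subset (by
    intro i hi; by_contra h; exact hi.2 (hB ▸ ⟨hi.1, h⟩)))
  -- the sets above a given c
  obtain ⟨W, hW⟩ : ∃ W : Set ℕ → Set ℕ → Set ℕ → Prop, ∀ z c y, W z c y ↔
      ((∀ i ∈ P, (i ∈ y ↔ i ∈ p)) ∧ (∀ i ∈ A, (i ∈ y ↔ (i ∈ x ∧ i < m) ∨ i ∈ c)) ∧ Agree m y z) :=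
    ⟨fun z c y => _, fun _ _ _ => Iff.rfl⟩
  have ex : ∀ z : Set ℕ, (∀ i ∈ P, (i ∈ z ↔ i ∈ p)) → (∀ i ∈ A, (i ∈ x ↔ i ∈ z)) →
      ∀ c ⊆ B, ∃ d ∈ Z, W z c d := by
    intro z hz hxz c hc
    obtain ⟨d, hd, h⟩ := hdense (P ∪ A ∪ Iio m) (subset_union_left.trans subset_union_left)
      (hfin _ m hPA) {i | (i ∉ A ∧ i ∈ z) ∨ (i ∈ A ∧ ((i ∈ x ∧ i < m) ∨ i ∈ c))} (by
        intro i hi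
        have : i ∉ A := fun h => hAP i h hi
        simp [this, hz i hi])
    refine ⟨d, hd, (hW _ _ _).2 ⟨?_, ?_, ?_⟩⟩
    · intro i hi
      have : i ∉ A := fun h => hAP i h hi
      rw [h i (Or.inl (Or.inl hi))]
      simp [this, hz i hi]
    · intro i hi
      rw [h i (Or.inl (Or.inr hi))]
      simp [hi]
    · intro i hi
      rw [h i (Or.inr hi)]
      have h1 : i ∉ c := fun h => hBm i (hc h) hi
      by_cases hiA : i ∈ A
      · simp [hiA, h1, hi, hxz i hiA]
      · simp [hiA]
  have decd : ∀ d ∈ Z, ∀ k, ∃ m', m ≤ m' ∧ Dec F Z P p k m' d (k ∈ F d) := by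
    intro d hd k
    obtain ⟨m', h⟩ := hZ d hd k
    refine ⟨max m m', le_max_left _ _, fun d' hd' _ ha => ?_⟩
    exact (h d' hd' (ha.symm.le (le_max_right _ _))).symm
  have N1 : ∀ k ≥ J, k ∈ F A → ∀ c ⊆ B, ∃ v3 : Prop, ∀ y m1 v, W x c y →
      Dec F Z P p k m1 y v → (v ↔ v3) := by
    intro k hk hkA c hc
    obtain ⟨d, hd, hWd⟩ := ex x' hx' hxx c hc
    obtain ⟨m', -, hm'⟩ := decd d hd k
    refine ⟨k ∈ F d, fun y m1 v hy hv => ?_⟩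
    obtain ⟨a1, a2, a3⟩ := (hW _ _ _).1 hy
    obtain ⟨b1, b2, b3⟩ := (hW _ _ _).1 hWd
    have := hno k hk hkA (max m1 m') y d a1 b1 (fun i hi => (a2 i hi).trans (b2 i hi).symm)
      a3 b3 v (hv.le (le_max_left _ _))
    by_contra hne
    apply this
    have e : (k ∈ F d) = ¬ v := propext (by tauto)
    rw [← e]
    exact hm'.le (le_max_right _ _)
  have ex1 := ex x hx (fun i _ => Iff.rfl)
  choose! dd hdZ hdW using ex1
  refine step3 (G := fun c => {k | k ∈ F A ∧ k ∈ F B ∧ J ≤ k ∧ k ∈ F (dd c)}) hF ?_ ?_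
  · intro c hc k
    by_cases hk : k ∈ F A ∧ k ∈ F B ∧ J ≤ k
    · obtain ⟨hkA, hkB, hkJ⟩ := hk
      obtain ⟨m', hmm, hm'⟩ := decd (dd c) (hdZ c hc) k
      refine ⟨m', fun c1 hc1 hag => ?_⟩
      simp only [mem_ofPred_eq, hkA, hkB, hkJ, true_and]
      obtain ⟨v3, hv3⟩ := N1 k hkJ hkA c1 hc1
      obtain ⟨m2, -, hm2⟩ := decd (dd c1) (hdZ c1 hc1) k
      have e1 := hv3 _ _ _ (hdW c1 hc1) hm2
      obtain ⟨b1, b2, b3⟩ := (hW _ _ _).1 (hdW c hc)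
      let y1 : Set ℕ := {i | (i ∉ A ∧ i ∈ dd c) ∨ (i ∈ A ∧ ((i ∈ x ∧ i < m) ∨ i ∈ c1))}
      have hy1 : Agree m' y1 (dd c) := by
        intro i hi
        by_cases hiA : i ∈ A
        · rw [b2 i hiA]
          simp [y1, hiA, hag i hi]
        · simp [y1, hiA]
      have e2 := hv3 y1 m' (k ∈ F (dd c)) ((hW _ _ _).2 ⟨?_, ?_, ?_⟩)
        (fun d hd hp ha => hm' d hd hp (ha.trans hy1))
      · exact e2.trans e1.symm
      · intro i hi
        have : i ∉ A := fun h => hAP i h hi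
        rw [← b1 i hi]
        simp [y1, this]
      · intro i hi
        simp [y1, hi]
      · exact (hy1.le hmm).trans b3
    · refine ⟨0, fun c1 _ _ => ?_⟩
      simp only [mem_ofPred_eq]
      tauto
  · intro c hc
    obtain ⟨b1, b2, b3⟩ := (hW _ _ _).1 (hdW c hc)
    have e : dd c ∩ B = c := by
      ext i
      constructor
      · rintro ⟨h1, h2⟩
        rcases (b2 i (hBA h2)).1 h1 with h | h
        · exact (hBm i h2 h.2).elim
        · exact h
      · intro h
        exact ⟨(b2 i (hBA (hc h))).2 (Or.inr h), hc h⟩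
    have h1 := hF.1 (dd c) B
    rw [e] at h1
    filter_upwards [h1, hF.mono hBA, Filter.eventually_ge_atTop J] with k h1 h2 h3
    change (k ∈ F A ∧ k ∈ F B ∧ J ≤ k ∧ k ∈ F (dd c)) ↔ k ∈ F c
    rw [h1]
    tauto

/-- Part 2 -/
lemma part2_s5 {F : Set ℕ → Set ℕ} (hF : HomFin F) (A : ℕ → Set ℕ)
    (had : ∀ l l', l ≠ l' → (A l ∩ A l').Finite) (Z : ℕ → Set (Set ℕ))
    (hZ : ∀ n, ∀ d ∈ Z n, ∀ k, ∃ m, ∀ d' ∈ Z n, Agree m d d' → (k ∈ F d ↔ k ∈ F d'))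
    (P0 p0 : Set ℕ) (hP0 : {l | ¬ SimpleOn F (A l \ P0)}.Infinite)
    (hcov : ∀ d : Set ℕ, (∀ i ∈ P0, (i ∈ d ↔ i ∈ p0)) → ∃ n, d ∈ Z n) : False := by
  classical
  obtain ⟨Small, hSm⟩ : ∃ S : Set ℕ → Prop, ∀ Q, S Q ↔ {l | ¬ SimpleOn F (A l \ Q)}.Infinite :=
    ⟨_, fun _ => Iff.rfl⟩
  have step : ∀ (n : ℕ) (P p : Set ℕ), Small P → ∃ P' p' : Set ℕ, P ⊆ P' ∧ Small P' ∧
      (∀ i ∈ P, (i ∈ p' ↔ i ∈ p)) ∧ ∀ d ∈ Z n, ¬ ∀ i ∈ P', (i ∈ d ↔ i ∈ p') := by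
    intro n P p hP
    by_contra hcon
    push Not at hcon
    obtain ⟨l, hl⟩ := ((hSm P).1 hP).nonempty
    apply hl
    refine step2 hF (hZ n) (P := P) (p := p) (fun i hi => hi.2) Small ?_ ?_ ?_ ?_
    · rw [hSm] at hP ⊢
      refine (hP.sdiff (Set.finite_singleton l)).mono ?_
      rintro l' ⟨h1, h2⟩ h3
      refine h1 (h3.of_diff hF ((had l' l h2).subset ?_))
      intro i hi
      by_contra hn
      apply hi.2
      refine ⟨hi.1.1, ?_⟩
      rintro (h | h)
      · exact hi.1.2 h
      · exact hn ⟨hi.1.1, h.1⟩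
    · intro Q T hQ
      simp only [hSm] at hQ ⊢
      rw [← Set.infinite_union]
      refine hQ.mono ?_
      intro l' h1
      by_contra hn
      simp only [mem_union, mem_ofPred_eq, not_or, not_not] at hn
      refine h1 ((SimpleOn.union hF hn.1 hn.2).mono ?_)
      intro i hi
      by_cases hT : i ∈ T
      · exact Or.inr ⟨hi.1, by simp [hT, hi.2]⟩
      · exact Or.inl ⟨hi.1, by simp [hT, hi.2]⟩
    · intro Q m hQ
      simp only [hSm] at hQ ⊢
      refine hQ.mono ?_
      intro l' h1 h2
      refine h1 (h2.of_diff hF ((Set.finite_Iio m).subset ?_))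
      intro i hi
      by_contra hn
      exact hi.2 ⟨hi.1.1, by rintro (h | h); exacts [hi.1.2 h, hn h]⟩
    · intro Q hPQ hQ q hq
      exact hcon Q q hPQ hQ hq
  choose! f g h1 h2 h3 h4 using step
  obtain ⟨s, hs0, hs⟩ : ∃ s : ℕ → Set ℕ × Set ℕ, s 0 = (P0, p0) ∧
      ∀ n, s (n + 1) = (f n (s n).1 (s n).2, g n (s n).1 (s n).2) :=
    ⟨fun n => Nat.rec (motive := fun _ => Set ℕ × Set ℕ) (P0, p0)
      (fun n a => (f n a.1 a.2, g n a.1 a.2)) n, rfl, fun n => rfl⟩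
  have hsm : ∀ n, Small (s n).1 := by
    intro n
    induction n with
    | zero => rw [hs0]; exact (hSm _).2 hP0
    | succ n ih => rw [hs]; exact h2 n _ _ ih
  have hstep : ∀ n, (s n).1 ⊆ (s (n + 1)).1 := by
    intro n
    rw [hs]; exact h1 n _ _ (hsm n)
  have hmono : Monotone fun n => (s n).1 := monotone_nat_of_le_succ hstep
  have hag : ∀ n j, ∀ i ∈ (s n).1, (i ∈ (s (n + j)).2 ↔ i ∈ (s n).2) := by
    intro n j
    induction j with
    | zero => intro i _; rfl
    | succ j ih =>
      intro i hi
      rw [← ih i hi, ← add_assoc, hs]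
      exact h3 _ _ _ (hsm _) i (hmono (Nat.le_add_right n j) hi)
  let d : Set ℕ := {i | ∃ n, i ∈ (s n).1 ∧ i ∈ (s n).2}
  have hd : ∀ n, ∀ i ∈ (s n).1, (i ∈ d ↔ i ∈ (s n).2) := by
    intro n i hi
    constructor
    · rintro ⟨n', h5, h6⟩
      rcases le_total n n' with h | h
      · obtain ⟨j, rfl⟩ := Nat.exists_eq_add_of_le h
        exact (hag n j i hi).1 h6
      · obtain ⟨j, rfl⟩ := Nat.exists_eq_add_of_le h
        exact (hag n' j i h5).2 h6
    · intro h; exact ⟨n, hi, h⟩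
  obtain ⟨n, hn⟩ := hcov d (by
    have := hd 0
    rw [hs0] at this
    exact this)
  refine h4 n (s n).1 (s n).2 (hsm n) d hn ?_
  have := hd (n + 1)
  rw [hs] at this
  exact this

lemma oca_countable (oca : OCA) {X ι : Type} [Countable ι] (p : ι → X → Prop)
    (hp : ∀ x y, (∀ i, (p i x ↔ p i y)) → x = y) (K : X → X → Prop)
    (hK : ∀ x y, K x y → ∃ s : Finset ι, ∀ x' y', (∀ i ∈ s, (p i x' ↔ p i x)) →
      (∀ i ∈ s, (p i y' ↔ p i y)) → K x' y')
    (hsymm : ∀ x y, K x y → K y x) (hirr : ∀ x, ¬ K x x) :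
    (∃ Y : Set X, ¬ Y.Countable ∧ ∀ a ∈ Y, ∀ b ∈ Y, a ≠ b → K a b) ∨
    (∃ Y : ℕ → Set X, (⋃ n, Y n) = Set.univ ∧ ∀ n : ℕ, ∀ a ∈ Y n, ∀ b ∈ Y n, a ≠ b → ¬ K a b) := by
  classical
  let e : X → (ι → Bool) := fun x i => decide (p i x)
  have he : Function.Injective e := by
    intro x y hxy
    refine hp x y fun i => ?_
    have := congrFun hxy i
    simpa [e] using this
  letI : MetricSpace (ι → Bool) := TopologicalSpace.metrizableSpaceMetric _
  letI mX : MetricSpace X := MetricSpace.induced e he inferInstance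
  have hind : Topology.IsInducing e := ⟨rfl⟩
  haveI : SecondCountableTopology X := hind.secondCountableTopology
  have hop : ∀ i x, IsOpen {x' : X | p i x' ↔ p i x} := by
    intro i x
    have hc : Continuous fun x' : X => e x' i := (continuous_apply i).comp hind.continuous
    have : {x' : X | p i x' ↔ p i x} = (fun x' : X => e x' i) ⁻¹' {e x i} := by
      ext x'; simp [e]
    rw [this]
    exact (isOpen_discrete _).preimage hc
  have hops : ∀ (s : Finset ι) x, IsOpen {x' : X | ∀ i ∈ s, (p i x' ↔ p i x)} := by
    intro s x
    have : {x' : X | ∀ i ∈ s, (p i x' ↔ p i x)} = ⋂ i ∈ s, {x' : X | p i x' ↔ p i x} := by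
      ext x'; simp
    rw [this]
    exact isOpen_biInter_finset fun i _ => hop i x
  refine oca X {q | K q.1 q.2} ?_ hsymm hirr
  rw [isOpen_iff_forall_mem_open]
  rintro ⟨x, y⟩ hxy
  obtain ⟨s, hs⟩ := hK x y hxy
  refine ⟨{x' : X | ∀ i ∈ s, (p i x' ↔ p i x)} ×ˢ {y' : X | ∀ i ∈ s, (p i y' ↔ p i y)}, ?_, ?_, ?_⟩
  · rintro ⟨x', y'⟩ ⟨h1, h2⟩
    exact hs x' y' h1 h2
  · exact (hops s x).prod (hops s y)
  · exact ⟨fun i _ => Iff.rfl, fun i _ => Iff.rfl⟩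

lemma part1 (oca : OCA) {F : Set ℕ → Set ℕ} (hF : HomFin F) (lev : ℕ → ℕ)
    (hlev : ∀ N, {i | lev i ≤ N}.Finite) (ℬ : Set (Set ℕ))
    (hsep : ∀ B ∈ ℬ, ∀ B' ∈ ℬ, B ≠ B' → ∃ N, ∀ i, lev i = N → ¬ (i ∈ B ∧ i ∈ B'))
    (hup : ∀ B ∈ ℬ, ∀ B' ∈ ℬ, ∀ N, (∀ i, lev i = N → ¬ (i ∈ B ∧ i ∈ B')) →
      ∀ i, N ≤ lev i → ¬ (i ∈ B ∧ i ∈ B')) :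
    ∃ Y : ℕ → Set (Set ℕ × Set ℕ), (∀ B ∈ ℬ, ∀ b ⊆ B, ∃ n, (B, b) ∈ Y n) ∧
      (∀ n, ∀ x ∈ Y n, x.1 ∈ ℬ ∧ x.2 ⊆ x.1) ∧
      ∀ n, ∀ x ∈ Y n, ∀ y ∈ Y n, x.1 ≠ y.1 → x.1 ∩ y.2 = y.1 ∩ x.2 →
        F x.1 ∩ F y.2 = F y.1 ∩ F x.2 := by
  classical
  let X : Type := {x : Set ℕ × Set ℕ // x.1 ∈ ℬ ∧ x.2 ⊆ x.1}
  let p : Fin 4 × ℕ → X → Prop := fun j x => j.2 ∈ ![x.1.1, x.1.2, F x.1.1, F x.1.2] j.1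
  have p0 : ∀ i (x : X), p (0, i) x ↔ i ∈ x.1.1 := fun i x => Iff.rfl
  have p1 : ∀ i (x : X), p (1, i) x ↔ i ∈ x.1.2 := fun i x => Iff.rfl
  have p2 : ∀ i (x : X), p (2, i) x ↔ i ∈ F x.1.1 := fun i x => Iff.rfl
  have p3 : ∀ i (x : X), p (3, i) x ↔ i ∈ F x.1.2 := fun i x => Iff.rfl
  let K : X → X → Prop := fun x y => ∃ N, (∀ i, lev i = N → ¬ (i ∈ x.1.1 ∧ i ∈ y.1.1)) ∧
    (∀ i, lev i < N → (i ∈ x.1.1 ∧ i ∈ y.1.2 ↔ i ∈ y.1.1 ∧ i ∈ x.1.2)) ∧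
    ∃ k, ¬ (k ∈ F x.1.1 ∧ k ∈ F y.1.2 ↔ k ∈ F y.1.1 ∧ k ∈ F x.1.2)
  have hKc : ∀ x y : X, K x y → ∀ i, (i ∈ x.1.1 ∧ i ∈ y.1.2 ↔ i ∈ y.1.1 ∧ i ∈ x.1.2) := by
    rintro x y ⟨N, h1, h2, -⟩ i
    by_cases hi : lev i < N
    · exact h2 i hi
    · have := hup _ x.2.1 _ y.2.1 N h1 i (by omega)
      have a1 : i ∈ x.1.2 → i ∈ x.1.1 := fun h => x.2.2 h
      have a2 : i ∈ y.1.2 → i ∈ y.1.1 := fun h => y.2.2 h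
      tauto
  have hO := oca_countable oca p ?_ K ?_ ?_ ?_
  · rcases hO with ⟨W, hWu, hW⟩ | ⟨Y, hY, hYK⟩
    · exfalso
      let d : Set ℕ := {i | ∃ x ∈ W, i ∈ x.1.2}
      have hd : ∀ x ∈ W, d ∩ x.1.1 = x.1.2 := by
        intro x hx
        ext i
        constructor
        · rintro ⟨⟨y, hy, hi⟩, hix⟩
          by_cases hxy : x = y
          · rw [hxy]; exact hi
          · exact ((hKc x y (hW x hx y hy hxy) i).1 ⟨hix, hi⟩).2
        · intro hi
          exact ⟨⟨x, hx, hi⟩, x.2.2 hi⟩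
      have hn : ∀ x ∈ W, ∃ n, ∀ k ≥ n, (k ∈ F x.1.2 ↔ k ∈ F d ∧ k ∈ F x.1.1) := by
        intro x hx
        have := hF.1 d x.1.1
        rw [hd x hx] at this
        exact Filter.eventually_atTop.1 this
      choose! n hn using hn
      let code : X → ℕ × Finset ℕ × Finset ℕ := fun x => (n x,
        (Finset.range (n x)).filter (fun k => k ∈ F x.1.1),
        (Finset.range (n x)).filter (fun k => k ∈ F x.1.2))
      have : ¬ Set.InjOn code W := fun hinj => hWu (MapsTo.countable_of_injOn (mapsTo_univ _ _) hinj (Set.to_countable _))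
      unfold Set.InjOn at this
      push Not at this
      obtain ⟨x, hx, y, hy, hxy, hne⟩ := this
      obtain ⟨N, -, -, k, hk⟩ := hW x hx y hy hne
      simp only [code, Prod.mk.injEq] at hxy
      obtain ⟨e1, e2, e3⟩ := hxy
      by_cases hkn : k < n x
      · rw [← e1] at e2 e3
        have a2 := Finset.ext_iff.1 e2 k
        have a3 := Finset.ext_iff.1 e3 k
        simp only [Finset.mem_filter, Finset.mem_range, hkn, true_and] at a2 a3
        tauto
      · have a1 := hn x hx k (by omega)
        have a2 := hn y hy k (by omega)
        tauto
    · refine ⟨fun n => Subtype.val '' (Y n), ?_, ?_, ?_⟩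
      · intro B hB b hb
        have : (⟨(B, b), hB, hb⟩ : X) ∈ ⋃ n, Y n := by rw [hY]; trivial
        obtain ⟨n, hn⟩ := mem_iUnion.1 this
        exact ⟨n, _, hn, rfl⟩
      · rintro n _ ⟨x, hx, rfl⟩
        exact x.2
      · rintro n _ ⟨x, hx, rfl⟩ _ ⟨y, hy, rfl⟩ hne hco
        by_contra hF'
        refine hYK n x hx y hy (fun h => hne (by rw [h])) ?_
        obtain ⟨N, hN⟩ := hsep _ x.2.1 _ y.2.1 hne
        refine ⟨N, hN, fun i _ => Set.ext_iff.1 hco i, ?_⟩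
        by_contra hall
        push Not at hall
        exact hF' (Set.ext fun k => hall k)
  · intro x y h
    apply Subtype.ext
    exact Prod.ext (Set.ext fun i => h (0, i)) (Set.ext fun i => h (1, i))
  · rintro x y ⟨N, h1, h2, k, hk⟩
    refine ⟨(Finset.univ : Finset (Fin 4)) ×ˢ (insert k (hlev N).toFinset), ?_⟩
    intro x' y' hx hy
    have hx0 : ∀ j i, (lev i ≤ N ∨ i = k) → (p (j, i) x' ↔ p (j, i) x) := by
      intro j i hi
      refine hx (j, i) ?_
      simp; tauto
    have hy0 : ∀ j i, (lev i ≤ N ∨ i = k) → (p (j, i) y' ↔ p (j, i) y) := by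
      intro j i hi
      refine hy (j, i) ?_
      simp; tauto
    refine ⟨N, fun i hi => ?_, fun i hi => ?_, k, ?_⟩
    · rw [← p0, ← p0, hx0 0 i (Or.inl hi.le), hy0 0 i (Or.inl hi.le)]
      exact h1 i hi
    · rw [← p0, ← p0, ← p1, ← p1, hx0 0 i (Or.inl hi.le), hy0 0 i (Or.inl hi.le),
        hx0 1 i (Or.inl hi.le), hy0 1 i (Or.inl hi.le)]
      exact h2 i hi
    · rw [← p2, ← p2, ← p3, ← p3, hx0 2 k (Or.inr rfl), hy0 2 k (Or.inr rfl),
        hx0 3 k (Or.inr rfl), hy0 3 k (Or.inr rfl)]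
      exact hk
  · rintro x y ⟨N, h1, h2, k, hk⟩
    exact ⟨N, fun i hi h => h1 i hi h.symm, fun i hi => (h2 i hi).symm, k, fun h => hk h.symm⟩
  · rintro x ⟨N, h1, h2, k, hk⟩
    exact hk Iff.rfl

lemma part15 {F : Set ℕ → Set ℕ} (hF : HomFin F) (ℬ : Set (Set ℕ)) (hunc : ¬ ℬ.Countable)
    (Y : ℕ → Set (Set ℕ × Set ℕ)) (hY1 : ∀ B ∈ ℬ, ∀ b ⊆ B, ∃ n, (B, b) ∈ Y n)
    (hY2 : ∀ n, ∀ x ∈ Y n, x.1 ∈ ℬ ∧ x.2 ⊆ x.1)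
    (hY3 : ∀ n, ∀ x ∈ Y n, ∀ y ∈ Y n, x.1 ≠ y.1 → x.1 ∩ y.2 = y.1 ∩ x.2 →
        F x.1 ∩ F y.2 = F y.1 ∩ F x.2)
    (hfin : ∀ B ∈ ℬ, ∀ B' ∈ ℬ, B ≠ B' → (B ∩ B').Finite)
    (hA : ∀ B ∈ ℬ, ∃ A : ℕ → Set ℕ, (∀ l, A l ⊆ B) ∧ (∀ l, ¬ SimpleOn F (A l)) ∧
      ∀ l l', l ≠ l' → (A l ∩ A l').Finite) : False := by
  classical
  have hbd : ∀ B ∈ ℬ, ∀ B' ∈ ℬ, B ≠ B' → ∃ M, ∀ i ∈ B, i ∈ B' → i < M := by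
    intro B hB B' hB' hne
    obtain ⟨M, hM⟩ := (hfin B hB B' hB' hne).bddAbove
    exact ⟨M + 1, fun i h1 h2 => Nat.lt_succ_of_le (hM ⟨h1, h2⟩)⟩
  let I : ℕ → ℕ → Set ℕ → Set ℕ → Prop := fun n k B b => b ⊆ B ∧ (B, b) ∈ Y n ∧ k ∈ F B ∧
    ∀ x ∈ Y n, x.1 ≠ B → k ∈ F x.1 → B ∩ x.2 ≠ x.1 ∩ b
  let Dn : ℕ × ℕ × ℕ × Finset ℕ → Set (Set ℕ) := fun q => {B | B ∈ ℬ ∧ (q.2.2.2 : Set ℕ) ⊆ B ∧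
    ∀ m', ∀ b0 ⊆ B, Agree q.2.2.1 b0 q.2.2.2 → ∃ b, I q.1 q.2.1 B b ∧ Agree m' b b0}
  have hDn : ∀ q, (Dn q).Subsingleton := by
    rintro ⟨n, k, m, s⟩ B ⟨hB, hsB, hBd⟩ B' ⟨hB', hsB', hBd'⟩
    by_contra hne
    obtain ⟨M, hM⟩ := hbd B hB B' hB' hne
    obtain ⟨b, ⟨b1, b2, b3, b4⟩, hb⟩ := hBd M s hsB (Agree.refl _ _)
    obtain ⟨b', ⟨c1, c2, c3, c4⟩, hb'⟩ := hBd' M s hsB' (Agree.refl _ _)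
    refine b4 (B', b') c2 (Ne.symm hne) c3 ?_
    ext i
    constructor
    · rintro ⟨h1, h2⟩
      have hi := hM i h1 (c1 h2)
      exact ⟨c1 h2, (hb i hi).2 ((hb' i hi).1 h2)⟩
    · rintro ⟨h1, h2⟩
      have hi := hM i (b1 h2) h1
      exact ⟨b1 h2, (hb' i hi).2 ((hb i hi).1 h2)⟩
  have hcnt : (⋃ q, Dn q).Countable := Set.countable_iUnion fun q => (hDn q).countable
  obtain ⟨B, hB, hBn⟩ : ∃ B ∈ ℬ, B ∉ ⋃ q, Dn q := by
    by_contra hcon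
    push Not at hcon
    exact hunc (hcnt.mono hcon)
  have hnd : ∀ n k m (s : Finset ℕ), (s : Set ℕ) ⊆ B → ∃ m', ∃ b0 ⊆ B, Agree m b0 s ∧
      ∀ b, I n k B b → ¬ Agree m' b b0 := by
    intro n k m s hs
    by_contra hcon
    push Not at hcon
    exact hBn (mem_iUnion.2 ⟨(n, k, m, s), hB, hs, hcon⟩)
  obtain ⟨m, w, w', hm, hC, h⟩ := block_pair (fun i a _ => a → i ∈ B)
    (fun J x _ => ¬ I (Nat.unpair (J / 2)).1 (Nat.unpair (J / 2)).2 B x)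
    (by
      intro J m x y hx
      obtain ⟨m', b0, hb0, hag, hI⟩ := hnd (Nat.unpair (J / 2)).1 (Nat.unpair (J / 2)).2 m
        ((Finset.range m).filter (fun i => i ∈ x)) (by
          intro i hi
          simp only [Finset.coe_filter, mem_ofPred_eq] at hi
          exact hx i hi.2)
      refine ⟨b0, y, fun i hi => hb0 hi, hag.trans ?_, Agree.refl _ _, m', ?_⟩
      · intro i hi
        simp [hi]
      · intro x'' y'' _ ha1 _ hII
        exact hI x'' hII ha1) ∅ ∅ (by simp)
  have hwB : w ⊆ B := fun i hi => hC i hi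
  -- modified lifting
  let F' : Set ℕ → Set ℕ := fun b => if b ⊆ B then F b ∩ F B else F b
  have hFF : ∀ b, ∀ᶠ k in Filter.atTop, (k ∈ F' b ↔ k ∈ F b) := by
    intro b
    by_cases hb : b ⊆ B
    · filter_upwards [hF.mono hb] with k hk
      simp only [F', hb, if_true, mem_inter_iff]
      tauto
    · simp [F', hb]
  have hF' : HomFin F' := by
    refine ⟨fun a b => ?_, fun a b => ?_, ?_⟩
    · filter_upwards [hFF a, hFF b, hFF (a ∩ b), hF.1 a b] with k h1 h2 h3 h4
      rw [h1, h2, h3, h4]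
    · filter_upwards [hFF a, hFF b, hFF (a ∪ b), hF.2.1 a b] with k h1 h2 h3 h4
      rw [h1, h2, h3, h4]
    · filter_upwards [hFF ∅, hF.2.2] with k h1 h2
      rwa [h1]
  obtain ⟨A, hAB, hAs, hAd⟩ := hA B hB
  have hAs' : ∀ l, ¬ SimpleOn F' (A l) := by
    rintro l ⟨D, H, h1, h2⟩
    refine hAs l ⟨D, H, h1, fun x hx => ?_⟩
    filter_upwards [hFF x, h2 x hx] with k a1 a2
    rw [← a1, a2]
  let Z : ℕ → Set (Set ℕ) := fun n => {b | b ⊆ B ∧ (B, b) ∈ Y n ∧ ∀ k, ¬ I n k B b}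
  have hZ : ∀ n, ∀ d ∈ Z n, ∀ k, ∃ m, ∀ d' ∈ Z n, Agree m d d' → (k ∈ F' d ↔ k ∈ F' d') := by
    rintro n d ⟨hd1, hd2, hd3⟩ k
    by_cases hkB : k ∈ F B
    · have h1 := hd3 k
      simp only [I, not_and, not_forall] at h1
      obtain ⟨x, hx, hne, hkx, hco⟩ := h1 hd1 hd2 hkB
      rw [ne_eq, not_not] at hco
      obtain ⟨M, hM⟩ := hbd B hB x.1 (hY2 n x hx).1 (Ne.symm hne)
      refine ⟨M, ?_⟩
      rintro d' ⟨hd1', hd2', -⟩ hag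
      have hco' : B ∩ x.2 = x.1 ∩ d' := by
        rw [hco]
        ext i
        constructor
        · rintro ⟨a1, a2⟩
          exact ⟨a1, (hag i (hM i (hd1 a2) a1)).1 a2⟩
        · rintro ⟨a1, a2⟩
          exact ⟨a1, (hag i (hM i (hd1' a2) a1)).2 a2⟩
      have e1 := Set.ext_iff.1 (hY3 n (B, d) hd2 x hx (Ne.symm hne) hco) k
      have e2 := Set.ext_iff.1 (hY3 n (B, d') hd2' x hx (Ne.symm hne) hco') k
      simp only [mem_inter_iff, hkB, hkx, true_and] at e1 e2
      simp only [F', hd1, hd1', if_true, mem_inter_iff, hkB, and_true]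
      exact e1.symm.trans e2
    · refine ⟨0, ?_⟩
      rintro d' ⟨hd1', -⟩ -
      simp [F', hd1, hd1', hkB]
  have key : ∀ (S : Set ℕ) (e : ℕ), e < 2 → {l | ¬ SimpleOn F' (A l \ (Bᶜ ∪ S))}.Infinite →
      (∀ n i, m (2 * n + e) ≤ i → i < m (2 * n + e + 1) → i ∈ S) → False := by
    intro S e he hS hb
    refine part2_s5 hF' A hAd Z hZ (Bᶜ ∪ S) w hS ?_
    intro d hd
    have hdB : d ⊆ B := by
      intro i hi
      by_contra hn
      exact hn (hwB ((hd i (Or.inl hn)).1 hi))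
    obtain ⟨n, hn⟩ := hY1 B hB d hdB
    refine ⟨n, hdB, hn, fun k => ?_⟩
    have := h (2 * Nat.pair n k + e) d w' (fun i hi => hdB hi)
      (fun i h1 h2 => ⟨hd i (Or.inr (hb _ i h1 h2)), Iff.rfl⟩)
    rw [show (2 * Nat.pair n k + e) / 2 = Nat.pair n k by omega] at this
    simpa using this
  let T : Set ℕ := {i | ∃ n, m (2 * n) ≤ i ∧ i < m (2 * n + 1)}
  have hsm : {l | ¬ SimpleOn F' (A l \ (Bᶜ ∪ T))}.Infinite ∨
      {l | ¬ SimpleOn F' (A l \ (Bᶜ ∪ Tᶜ))}.Infinite := by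
    rw [← Set.infinite_union]
    refine Set.infinite_univ.mono ?_
    intro l _
    by_contra hn
    simp only [mem_union, mem_ofPred_eq, not_or, not_not] at hn
    refine hAs' l ((SimpleOn.union hF' hn.1 hn.2).mono ?_)
    intro i hi
    have hiB := hAB l hi
    by_cases hT : i ∈ T
    · exact Or.inr ⟨hi, by simp [hT, hiB]⟩
    · exact Or.inl ⟨hi, by simp [hT, hiB]⟩
  rcases hsm with h1 | h1
  · exact key _ 0 (by omega) h1 (fun n i a b => ⟨n, a, b⟩)
  · refine key _ 1 (by omega) h1 (fun n i a b => ?_)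
    rintro ⟨n', a', b'⟩
    have := block_unique hm a b a' b'
    omega

lemma exists_compact_seq {R : Set (ℕ → Bool)} (hR : ¬ R.Countable) :
    ∃ K : Set (ℕ → Bool), K ⊆ R ∧ K.Infinite ∧ K.Countable ∧ IsCompact K := by
  have h1 : ¬ ∀ x ∈ R, nhdsWithin x {x}ᶜ ⊓ Filter.principal R = ⊥ := by
    intro h
    have : DiscreteTopology R := discreteTopology_subtype_iff.2 h
    exact hR (Set.countable_coe_iff.1 (TopologicalSpace.separableSpace_iff_countable.1 inferInstance))
  push Not at h1
  obtain ⟨x, hx, hne⟩ := h1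
  have : Filter.NeBot (nhdsWithin x {x}ᶜ ⊓ Filter.principal R) := hne
  obtain ⟨u, hu⟩ := Filter.exists_seq_tendsto (nhdsWithin x {x}ᶜ ⊓ Filter.principal R)
  rw [Filter.tendsto_inf, Filter.tendsto_principal, tendsto_nhdsWithin_iff] at hu
  obtain ⟨⟨hu1, hu2⟩, hu3⟩ := hu
  obtain ⟨N, hN⟩ := Filter.eventually_atTop.1 (hu2.and hu3)
  let v : ℕ → (ℕ → Bool) := fun n => u (n + N)
  have hv : Filter.Tendsto v Filter.atTop (nhds x) := hu1.comp (Filter.tendsto_add_atTop_nat N)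
  have hvR : ∀ n, v n ∈ R := fun n => (hN (n + N) (by omega)).2
  have hvx : ∀ n, v n ≠ x := fun n => (hN (n + N) (by omega)).1
  refine ⟨insert x (range v), ?_, ?_, ?_, hv.isCompact_insert_range⟩
  · intro y hy
    rcases hy with rfl | ⟨n, rfl⟩
    exacts [hx, hvR n]
  · refine Set.Infinite.mono (subset_insert _ _) ?_
    intro hfin
    have hmem : (range v)ᶜ ∈ nhds x := hfin.isClosed.isOpen_compl.mem_nhds (by
      rintro ⟨n, hn⟩; exact hvx n hn)
    obtain ⟨n, hn⟩ := (hv.eventually hmem).exists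
    exact hn ⟨n, rfl⟩
  · exact (Set.countable_range v).insert x

lemma exists_disjoint_compacts {X : Set (ℕ → Bool)} (hX : ¬ X.Countable) :
    ∃ 𝒦 : Set (Set (ℕ → Bool)), ¬ 𝒦.Countable ∧
      (∀ K ∈ 𝒦, K ⊆ X ∧ K.Infinite ∧ IsCompact K) ∧ 𝒦.PairwiseDisjoint id := by
  obtain ⟨𝒦, h𝒦⟩ := zorn_subset {𝒦 : Set (Set (ℕ → Bool)) |
    (∀ K ∈ 𝒦, K ⊆ X ∧ K.Infinite ∧ K.Countable ∧ IsCompact K) ∧ 𝒦.PairwiseDisjoint id} (by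
      intro c hc hchain
      refine ⟨⋃₀ c, ⟨?_, ?_⟩, fun s hs => subset_sUnion_of_mem hs⟩
      · rintro K ⟨s, hs, hK⟩
        exact (hc hs).1 K hK
      · exact (Set.pairwiseDisjoint_sUnion hchain.directedOn).2 fun s hs => (hc hs).2)
  obtain ⟨hp1, hp2⟩ := h𝒦.prop
  refine ⟨𝒦, ?_, fun K hK => ⟨(hp1 K hK).1, (hp1 K hK).2.1, (hp1 K hK).2.2.2⟩, hp2⟩
  intro hcnt
  have hU : (⋃₀ 𝒦).Countable := hcnt.sUnion fun K hK => (hp1 K hK).2.2.1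
  have hR : ¬ (X \ ⋃₀ 𝒦).Countable := by
    intro h
    refine hX ((h.union hU).mono ?_)
    intro x hx
    by_cases h : x ∈ ⋃₀ 𝒦
    · exact Or.inr h
    · exact Or.inl ⟨hx, h⟩
  obtain ⟨K, hK1, hK2, hK3, hK4⟩ := exists_compact_seq hR
  have hmem : K ∈ 𝒦 := by
    have : insert K 𝒦 ⊆ 𝒦 := h𝒦.le_of_ge (y := insert K 𝒦) ⟨?_, ?_⟩ (subset_insert _ _)
    · exact this (mem_insert _ _)
    · rintro L (rfl | hL)
      · exact ⟨fun y hy => (hK1 hy).1, hK2, hK3, hK4⟩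
      · exact hp1 L hL
    · refine hp2.insert fun L hL _ => ?_
      rw [id, id, Set.disjoint_left]
      intro y hy hyL
      exact (hK1 hy).2 ⟨L, hL, hyL⟩
  obtain ⟨y, hy⟩ := hK2.nonempty
  exact (hK1 hy).2 ⟨K, hmem, hy⟩

/-- The tree of initial segments of elements of `K`. -/
def treeOf (π : ℕ ≃ List Bool) (K : Set (ℕ → Bool)) : Set ℕ :=
  {i | ∃ y ∈ K, ∃ k : ℕ, π i = List.ofFn fun j : Fin k => y j.1}

lemma treeOf_up {π : ℕ ≃ List Bool} {K K' : Set (ℕ → Bool)} {N : ℕ}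
    (h : ∀ i, (π i).length = N → ¬ (i ∈ treeOf π K ∧ i ∈ treeOf π K')) (i : ℕ)
    (hi : N ≤ (π i).length) : ¬ (i ∈ treeOf π K ∧ i ∈ treeOf π K') := by
  rintro ⟨⟨y, hy, k, hk⟩, ⟨z, hz, k', hk'⟩⟩
  have e1 : (π i).length = k := by rw [hk]; simp
  have e2 : (π i).length = k' := by rw [hk']; simp
  have e3 : k' = k := by omega
  subst e3
  have hyz := List.ofFn_injective (hk.symm.trans hk')
  refine h (π.symm (List.ofFn fun j : Fin N => y j.1)) (by simp) ⟨⟨y, hy, N, by simp⟩, z, hz, N, ?_⟩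
  rw [Equiv.apply_symm_apply]
  congr 1
  funext j
  exact congrFun hyz ⟨j.1, by omega⟩

lemma treeOf_sep {π : ℕ ≃ List Bool} {K K' : Set (ℕ → Bool)} (hK : IsCompact K)
    (hK' : IsCompact K') (hd : Disjoint K K') :
    ∃ N, ∀ i, (π i).length = N → ¬ (i ∈ treeOf π K ∧ i ∈ treeOf π K') := by
  by_contra hcon
  push Not at hcon
  let C : ℕ → Set ((ℕ → Bool) × (ℕ → Bool)) := fun N =>
    (K ×ˢ K') ∩ {q | ∀ j < N, q.1 j = q.2 j}
  have hcl : ∀ N, IsClosed {q : (ℕ → Bool) × (ℕ → Bool) | ∀ j < N, q.1 j = q.2 j} := by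
    intro N
    have : {q : (ℕ → Bool) × (ℕ → Bool) | ∀ j < N, q.1 j = q.2 j} =
        ⋂ j, ⋂ (_ : j < N), {q | q.1 j = q.2 j} := by ext q; simp
    rw [this]
    exact isClosed_iInter fun j => isClosed_iInter fun _ =>
      isClosed_eq ((continuous_apply j).comp continuous_fst) ((continuous_apply j).comp continuous_snd)
  have hKK := hK.prod hK'
  have hne : (⋂ N, C N).Nonempty := by
    refine IsCompact.nonempty_iInter_of_sequence_nonempty_isCompact_isClosed C ?_ ?_ ?_ ?_
    · rintro N q ⟨h1, h2⟩
      exact ⟨h1, fun j hj => h2 j (by omega)⟩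
    · intro N
      obtain ⟨i, hi, ⟨y, hy, k, hk⟩, ⟨z, hz, k', hk'⟩⟩ := hcon N
      have e1 : (π i).length = k := by rw [hk]; simp
      have e2 : (π i).length = k' := by rw [hk']; simp
      have e3 : k' = k := by omega
      subst e3
      have hyz := List.ofFn_injective (hk.symm.trans hk')
      exact ⟨(y, z), ⟨hy, hz⟩, fun j hj => congrFun hyz ⟨j, by omega⟩⟩
    · exact hKK.inter_right (hcl 0)
    · intro N
      exact hKK.isClosed.inter (hcl N)
  obtain ⟨⟨y, z⟩, hq⟩ := hne
  rw [mem_iInter] at hq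
  have e : y = z := funext fun j => (hq (j + 1)).2 j (by omega)
  have h1 := (hq 0).1
  rw [e] at h1
  exact Set.disjoint_left.1 hd h1.1 h1.2

lemma mk_eq_iff (x y : Set ℕ) :
    PFin.mk x = PFin.mk y ↔ ∀ᶠ k in Filter.atTop, (k ∈ x ↔ k ∈ y) := by
  have h1 : PFin.mk x = PFin.mk y ↔ (symmDiff x y).Finite :=
    ⟨fun h => Quotient.exact h, fun h => Quotient.sound h⟩
  rw [h1, ← Nat.cofinite_eq_atTop, Filter.eventually_cofinite]
  have : symmDiff x y = {k | ¬ (k ∈ x ↔ k ∈ y)} := by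
    ext k
    simp only [Set.mem_symmDiff, mem_ofPred_eq]
    tauto
  rw [this]

lemma exists_lift (φ : Set ℕ → PFin ℕ) (hφ : IsEmbeddingPN φ) :
    ∃ F : Set ℕ → Set ℕ, (∀ x, PFin.mk (F x) = φ x) ∧ HomFin F := by
  choose F hF using fun x => Quotient.exists_rep (φ x)
  have hF' : ∀ x, PFin.mk (F x) = φ x := hF
  refine ⟨F, hF', fun a b => ?_, fun a b => ?_, ?_⟩
  · refine (mk_eq_iff (F (a ∩ b)) (F a ∩ F b)).1 ?_
    rw [hF', hφ.map_inf, ← hF' a, ← hF' b]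
    rfl
  · refine (mk_eq_iff (F (a ∪ b)) (F a ∪ F b)).1 ?_
    rw [hF', hφ.map_sup, ← hF' a, ← hF' b]
    rfl
  · have := (mk_eq_iff (F ∅) ∅).1 (by rw [hF', hφ.map_bot]; rfl)
    filter_upwards [this] with k hk
    simpa using hk

/-- Theorem on embeddings of `P(ℕ)` into `P(ℕ)/fin`: assume OCA; let `φ` be an
embedding of `P(ℕ)` into `P(ℕ)/fin` and `𝒜` a neat almost disjoint family of size `ℵ₁`.
Then for all but countably many `A ∈ 𝒜` there are `D ⊆ ℕ` and `H : D → A` with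
`φ(x) = [H⁻¹[x]]` for all `x ⊆ A`. -/
theorem embedding_powN_simple_on_neat_family (oca : OCA)
    (φ : Set ℕ → PFin ℕ) (hφ : IsEmbeddingPN φ)
    (𝒜 : Set (Set ℕ))
    (hcard : Cardinal.mk 𝒜 = Cardinal.aleph 1)
    (hinf : ∀ A ∈ 𝒜, A.Infinite)
    (had : ∀ A ∈ 𝒜, ∀ B ∈ 𝒜, A ≠ B → (A ∩ B).Finite)
    (hneat : ∃ (π : ℕ ≃ List Bool) (br : Set ℕ → ℕ → Bool),
        Set.InjOn br 𝒜 ∧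
        ∀ A ∈ 𝒜, ∀ n ∈ A, ∃ k : ℕ, π n = List.ofFn fun i : Fin k => br A i.1) :
    {A ∈ 𝒜 | ¬ ∃ (D : Set ℕ) (H : ℕ → ℕ), (∀ p ∈ D, H p ∈ A) ∧
        ∀ x ⊆ A, φ x = PFin.mk {p ∈ D | H p ∈ x}}.Countable := by
  classical
  obtain ⟨π, br, hinj, hbr⟩ := hneat
  obtain ⟨F, hFφ, hF⟩ := exists_lift φ hφ
  by_contra hunc
  set Bad := {A ∈ 𝒜 | ¬ ∃ (D : Set ℕ) (H : ℕ → ℕ), (∀ p ∈ D, H p ∈ A) ∧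
        ∀ x ⊆ A, φ x = PFin.mk {p ∈ D | H p ∈ x}} with hBad
  have hns : ∀ A ∈ Bad, ¬ SimpleOn F A := by
    rintro A ⟨-, hA⟩ ⟨D, H, h1, h2⟩
    refine hA ⟨D, H, h1, fun x hx => ?_⟩
    rw [← hFφ]
    exact (mk_eq_iff _ _).2 (h2 x hx)
  have hBA : ∀ A ∈ Bad, A ∈ 𝒜 := fun A hA => hA.1
  have hX : ¬ (br '' Bad).Countable := fun h =>
    hunc (Set.countable_of_injective_of_countable_image (hinj.mono hBA) h)
  obtain ⟨𝒦, h𝒦, hK, hdis⟩ := exists_disjoint_compacts hX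
  have hsepK : ∀ K ∈ 𝒦, ∀ K' ∈ 𝒦, K ≠ K' → ∃ N, ∀ i, (π i).length = N →
      ¬ (i ∈ treeOf π K ∧ i ∈ treeOf π K') := fun K h1 K' h2 hne =>
    treeOf_sep (hK K h1).2.2 (hK K' h2).2.2 (hdis h1 h2 hne)
  have hinjT : Set.InjOn (treeOf π) 𝒦 := by
    intro K h1 K' h2 he
    by_contra hne
    obtain ⟨N, hN⟩ := hsepK K h1 K' h2 hne
    obtain ⟨y, hy⟩ := (hK K h1).2.1.nonempty
    refine hN (π.symm (List.ofFn fun j : Fin N => y j.1)) (by simp) ?_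
    rw [← he, and_self]
    exact ⟨y, hy, N, by simp⟩
  have hunc2 : ¬ (treeOf π '' 𝒦).Countable := fun h =>
    h𝒦 (Set.countable_of_injective_of_countable_image hinjT h)
  have hlev : ∀ N, {i | (π i).length ≤ N}.Finite := fun N =>
    (List.finite_length_le Bool N).preimage π.injective.injOn
  have hsep : ∀ B ∈ treeOf π '' 𝒦, ∀ B' ∈ treeOf π '' 𝒦, B ≠ B' →
      ∃ N, ∀ i, (π i).length = N → ¬ (i ∈ B ∧ i ∈ B') := by
    rintro _ ⟨K, h1, rfl⟩ _ ⟨K', h2, rfl⟩ hne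
    exact hsepK K h1 K' h2 (fun h => hne (by rw [h]))
  have hup : ∀ B ∈ treeOf π '' 𝒦, ∀ B' ∈ treeOf π '' 𝒦, ∀ N,
      (∀ i, (π i).length = N → ¬ (i ∈ B ∧ i ∈ B')) →
      ∀ i, N ≤ (π i).length → ¬ (i ∈ B ∧ i ∈ B') := by
    rintro _ ⟨K, h1, rfl⟩ _ ⟨K', h2, rfl⟩ N hN i hi
    exact treeOf_up hN i hi
  obtain ⟨Y, hY1, hY2, hY3⟩ := part1 oca hF (fun i => (π i).length) hlev _ hsep hup
  refine part15 hF _ hunc2 Y hY1 hY2 hY3 ?_ ?_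
  · intro B hB B' hB' hne
    obtain ⟨N, hN⟩ := hsep B hB B' hB' hne
    refine (hlev N).subset ?_
    rintro i hi
    by_contra hn
    exact hup B hB B' hB' N hN i (le_of_lt (not_le.1 hn)) hi
  · rintro _ ⟨K, h1, rfl⟩
    have hKi := (hK K h1).2.1
    let y := hKi.natEmbedding
    have hy : ∀ l, ∃ A ∈ Bad, br A = (y l).1 := fun l => (hK K h1).1 (y l).2
    choose A hAB hAy using hy
    refine ⟨A, ?_, fun l => hns _ (hAB l), ?_⟩
    · intro l i hi
      obtain ⟨k, hk⟩ := hbr (A l) (hBA _ (hAB l)) i hi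
      exact ⟨br (A l), by rw [hAy]; exact (y l).2, k, hk⟩
    · intro l l' hne
      refine had _ (hBA _ (hAB l)) _ (hBA _ (hAB l')) fun h => hne ?_
      apply y.injective
      apply Subtype.ext
      rw [← hAy, ← hAy, h]

end Paper
end

section
/- Let 𝕃 be a countable Boolean subalgebra of the measure algebra ℳ and let a ∈ ℳ ∖ 𝕃. Then every measure-preserving embedding φ of 𝕃 into P(ℕ)/fin can be extended to a measure-preserving embedding ψ of the subalgebra of ℳ generated by 𝕃 ∪ {a} into P(ℕ)/fin. -/
open Set MeasureTheory
open scoped ENNReal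

namespace Paper

/-- Borel subsets of the interval `(0,1]` -/
abbrev ISet : Type := {A : Set ℝ // MeasurableSet A ∧ A ⊆ Set.Ioc (0 : ℝ) 1}

/-- the "equal modulo a Lebesgue-null set" setoid on Borel subsets of `(0,1]` -/
def measSetoidI : Setoid ISet where
  r A B := volume (symmDiff (A : Set ℝ) (B : Set ℝ)) = 0
  iseqv := by
    constructor
    · intro A; simp
    · intro A B h; rwa [symmDiff_comm]
    · intro A B C h1 h2
      exact measure_mono_null (symmDiff_triangle (A : Set ℝ) (B : Set ℝ) (C : Set ℝ))
        (measure_union_null h1 h2)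

/-- the measure algebra `ℳ` of `(0,1]`: Borel sets modulo Lebesgue-null sets -/
def MAlgI : Type := Quotient measSetoidI

/-- the class of a Borel set in the measure algebra -/
def MAlgI.mk (A : ISet) : MAlgI := Quotient.mk measSetoidI A

/-- join in the measure algebra -/
def MAlgI.sup : MAlgI → MAlgI → MAlgI :=
  Quotient.lift₂ (fun A B : ISet =>
      MAlgI.mk ⟨(A : Set ℝ) ∪ (B : Set ℝ), ⟨A.2.1.union B.2.1, Set.union_subset A.2.2 B.2.2⟩⟩)
    (by
      intro A B A' B' hA hB
      refine Quotient.sound ?_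
      have hA' : volume (symmDiff (A : Set ℝ) (A' : Set ℝ)) = 0 := hA
      have hB' : volume (symmDiff (B : Set ℝ) (B' : Set ℝ)) = 0 := hB
      show volume (symmDiff ((A : Set ℝ) ∪ (B : Set ℝ)) ((A' : Set ℝ) ∪ (B' : Set ℝ))) = 0
      refine measure_mono_null ?_ (measure_union_null hA' hB')
      intro x hx
      simp only [Set.mem_symmDiff, Set.mem_union] at hx ⊢
      tauto)

/-- meet in the measure algebra -/
def MAlgI.inf : MAlgI → MAlgI → MAlgI :=
  Quotient.lift₂ (fun A B : ISet =>
      MAlgI.mk ⟨(A : Set ℝ) ∩ (B : Set ℝ),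
        ⟨A.2.1.inter B.2.1, fun x hx => A.2.2 hx.1⟩⟩)
    (by
      intro A B A' B' hA hB
      refine Quotient.sound ?_
      have hA' : volume (symmDiff (A : Set ℝ) (A' : Set ℝ)) = 0 := hA
      have hB' : volume (symmDiff (B : Set ℝ) (B' : Set ℝ)) = 0 := hB
      show volume (symmDiff ((A : Set ℝ) ∩ (B : Set ℝ)) ((A' : Set ℝ) ∩ (B' : Set ℝ))) = 0
      refine measure_mono_null ?_ (measure_union_null hA' hB')
      intro x hx
      simp only [Set.mem_symmDiff, Set.mem_inter_iff, Set.mem_union] at hx ⊢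
      tauto)

/-- complement (relative to `(0,1]`) in the measure algebra -/
def MAlgI.compl : MAlgI → MAlgI :=
  Quotient.lift (fun A : ISet =>
      MAlgI.mk ⟨Set.Ioc (0 : ℝ) 1 \ (A : Set ℝ), ⟨measurableSet_Ioc.diff A.2.1, Set.diff_subset⟩⟩)
    (by
      intro A B h
      refine Quotient.sound ?_
      have h' : volume (symmDiff (A : Set ℝ) (B : Set ℝ)) = 0 := h
      show volume (symmDiff (Set.Ioc (0 : ℝ) 1 \ (A : Set ℝ)) (Set.Ioc (0 : ℝ) 1 \ (B : Set ℝ))) = 0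
      refine measure_mono_null ?_ h'
      intro x hx
      simp only [Set.mem_symmDiff, Set.mem_diff] at hx ⊢
      tauto)

/-- bottom of the measure algebra -/
def MAlgI.bot : MAlgI := MAlgI.mk ⟨∅, ⟨MeasurableSet.empty, Set.empty_subset _⟩⟩

/-- top of the measure algebra -/
def MAlgI.top : MAlgI := MAlgI.mk ⟨Set.Ioc (0 : ℝ) 1, ⟨measurableSet_Ioc, subset_rfl⟩⟩

/-- `L` is a Boolean subalgebra of the measure algebra -/
structure IsSubalgebra (L : Set MAlgI) : Prop where
  bot_mem : MAlgI.bot ∈ L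
  top_mem : MAlgI.top ∈ L
  sup_mem : ∀ a ∈ L, ∀ b ∈ L, MAlgI.sup a b ∈ L
  inf_mem : ∀ a ∈ L, ∀ b ∈ L, MAlgI.inf a b ∈ L
  compl_mem : ∀ a ∈ L, MAlgI.compl a ∈ L

/-- `φ` restricted to `L` is a Boolean-algebra embedding of `L` into `P(ℕ)/fin` -/
structure IsEmbeddingOn (L : Set MAlgI) (φ : MAlgI → PFin ℕ) : Prop where
  injOn : Set.InjOn φ L
  map_sup : ∀ a ∈ L, ∀ b ∈ L, φ (MAlgI.sup a b) = PFin.sup (φ a) (φ b)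
  map_inf : ∀ a ∈ L, ∀ b ∈ L, φ (MAlgI.inf a b) = PFin.inf (φ a) (φ b)
  map_compl : ∀ a ∈ L, φ (MAlgI.compl a) = PFin.compl (φ a)
  map_bot : φ MAlgI.bot = PFin.bot
  map_top : φ MAlgI.top = PFin.top

/-- the Boolean subalgebra of the measure algebra generated by `S` -/
def genBy (S : Set MAlgI) : Set MAlgI := ⋂₀ {T : Set MAlgI | IsSubalgebra T ∧ S ⊆ T}

/-- the measure of an element of the measure algebra -/
noncomputable def mval : MAlgI → ℝ≥0∞ :=
  Quotient.lift (fun A : ISet => volume (A : Set ℝ))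
    (by
      intro A B h
      have h' : volume (symmDiff (A : Set ℝ) (B : Set ℝ)) = 0 := h
      exact measure_congr (measure_symmDiff_eq_zero_iff.mp h'))

/-- `X ⊆ ℕ` has asymptotic density `r` -/
def HasDensity (X : Set ℕ) (r : ℝ) : Prop :=
  Filter.Tendsto (fun n : ℕ => ((X ∩ Set.Icc 1 n).ncard : ℝ) / n) Filter.atTop (nhds r)

/-- `φ` is measure-preserving on `L`: representatives of `φ b` have asymptotic density
`μ(b)` for every `b ∈ L` -/
def MeasurePreservingOn (L : Set MAlgI) (φ : MAlgI → PFin ℕ) : Prop :=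
  ∀ b ∈ L, ∀ X : Set ℕ, PFin.mk X = φ b → HasDensity X (mval b).toReal

noncomputable def cnt (X : Set ℕ) (n : ℕ) : ℕ := (X ∩ Set.Icc 1 n).ncard

lemma fin_icc (X : Set ℕ) (n : ℕ) : (X ∩ Set.Icc 1 n).Finite :=
  (Set.finite_Icc 1 n).subset Set.inter_subset_right

lemma cnt_zero (X : Set ℕ) : cnt X 0 = 0 := by simp [cnt]

lemma cnt_succ_mem {X : Set ℕ} {n : ℕ} (h : n + 1 ∈ X) : cnt X (n+1) = cnt X n + 1 := by
  have : X ∩ Set.Icc 1 (n+1) = insert (n+1) (X ∩ Set.Icc 1 n) := by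
    ext x
    simp only [Set.mem_inter_iff, Set.mem_Icc, Set.mem_insert_iff]
    constructor
    · rintro ⟨h1, h2, h3⟩
      rcases Nat.lt_or_ge n x with h4 | h4
      · left; omega
      · right; exact ⟨h1, h2, h4⟩
    · rintro (rfl | ⟨h1, h2, h3⟩)
      · exact ⟨h, by omega, le_rfl⟩
      · exact ⟨h1, h2, by omega⟩
  unfold cnt
  rw [this, Set.ncard_insert_of_notMem (by simp) (fin_icc X n)]

lemma cnt_succ_notMem {X : Set ℕ} {n : ℕ} (h : n + 1 ∉ X) : cnt X (n+1) = cnt X n := by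
  have : X ∩ Set.Icc 1 (n+1) = X ∩ Set.Icc 1 n := by
    ext x
    simp only [Set.mem_inter_iff, Set.mem_Icc]
    constructor
    · rintro ⟨h1, h2, h3⟩
      refine ⟨h1, h2, ?_⟩
      by_contra h4
      have : x = n + 1 := by omega
      subst this; exact h h1
    · rintro ⟨h1, h2, h3⟩
      exact ⟨h1, h2, by omega⟩
  unfold cnt
  rw [this]

lemma cnt_le (X : Set ℕ) (n : ℕ) : cnt X n ≤ n := by
  induction n with
  | zero => simp [cnt_zero]
  | succ n ih =>
    by_cases h : n + 1 ∈ X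
    · rw [cnt_succ_mem h]; omega
    · rw [cnt_succ_notMem h]; omega

/-- equal increments on a block where the sets agree -/
lemma cnt_block {X Y : Set ℕ} {k m : ℕ} (hkm : k ≤ m)
    (h : ∀ j, k < j → j ≤ m → (j ∈ X ↔ j ∈ Y)) :
    cnt X m + cnt Y k = cnt Y m + cnt X k := by
  induction m, hkm using Nat.le_induction with
  | base => omega
  | succ m hm ih =>
    have ih' := ih (fun j h1 h2 => h j h1 (by omega))
    have e := h (m+1) (by omega) le_rfl
    by_cases h1 : m + 1 ∈ X
    · rw [cnt_succ_mem h1, cnt_succ_mem (e.1 h1)]; omega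
    · rw [cnt_succ_notMem h1, cnt_succ_notMem (fun h2 => h1 (e.2 h2))]; omega

lemma hd_iff {X : Set ℕ} {r : ℝ} : HasDensity X r ↔
    Filter.Tendsto (fun n : ℕ => (cnt X n : ℝ) / n) Filter.atTop (nhds r) := Iff.rfl

lemma hd_union {X Y : Set ℕ} {r s : ℝ} (hd : Disjoint X Y) (hX : HasDensity X r)
    (hY : HasDensity Y s) : HasDensity (X ∪ Y) (r + s) := by
  rw [hd_iff] at *
  have := hX.add hY
  refine this.congr (fun n => ?_)
  have : cnt (X ∪ Y) n = cnt X n + cnt Y n := by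
    unfold cnt
    rw [Set.union_inter_distrib_right, Set.ncard_union_eq _ (fin_icc _ _) (fin_icc _ _)]
    exact hd.mono Set.inter_subset_left Set.inter_subset_left
  rw [this]; push_cast; ring

lemma hd_diff {X Y : Set ℕ} {r s : ℝ} (hs : Y ⊆ X) (hX : HasDensity X r)
    (hY : HasDensity Y s) : HasDensity (X \ Y) (r - s) := by
  rw [hd_iff] at *
  have := hX.sub hY
  refine this.congr (fun n => ?_)
  have : cnt X n = cnt (X \ Y) n + cnt Y n := by
    unfold cnt
    rw [← Set.ncard_union_eq _ (fin_icc _ _) (fin_icc _ _), ← Set.union_inter_distrib_right,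
      Set.sdiff_union_of_subset hs]
    exact Set.disjoint_sdiff_left.mono Set.inter_subset_left Set.inter_subset_left
  rw [this]; push_cast; ring

lemma hd_finite {X : Set ℕ} (h : X.Finite) : HasDensity X 0 := by
  rw [hd_iff]
  refine squeeze_zero (fun n => by positivity) (g := fun n : ℕ => (X.ncard : ℝ) / n) (fun n => ?_)
    (tendsto_const_div_atTop_nhds_zero_nat _)
  gcongr
  exact Set.ncard_le_ncard Set.inter_subset_left h

lemma hd_congr {X Y : Set ℕ} {r : ℝ} (h : (symmDiff X Y).Finite) (hX : HasDensity X r) :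
    HasDensity Y r := by
  have h1 : (X \ Y).Finite := h.subset (by intro x hx; simp only [Set.mem_symmDiff]; exact Or.inl hx)
  have h2 : (Y \ X).Finite := h.subset (by intro x hx; simp only [Set.mem_symmDiff]; exact Or.inr hx)
  have h3 := hd_diff (Set.sdiff_subset) hX (hd_finite h1)
  have h4 := hd_union (Y := Y \ X) (by
    rw [Set.disjoint_left]; intro x hx hy; exact hy.2 hx.1) h3 (hd_finite h2)
  have e : X \ (X \ Y) ∪ Y \ X = Y := by
    ext x; simp only [Set.mem_union, Set.mem_sdiff]; tauto
  rw [e] at h4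
  simpa using h4

lemma hd_unique {X : Set ℕ} {r s : ℝ} (h1 : HasDensity X r) (h2 : HasDensity X s) : r = s :=
  tendsto_nhds_unique h1 h2

lemma exists_sub {C : Set ℕ} {c θ : ℝ} (hC : HasDensity C c) (h0 : 0 ≤ θ) (h1 : θ ≤ 1) :
    ∃ Y ⊆ C, HasDensity Y (θ * c) ∧ (θ = 1 → (C \ Y).Finite) ∧ (θ = 0 → Y.Finite) := by
  set u : ℕ → ℕ := fun n => ⌊θ * (cnt C n : ℝ)⌋₊ with hu
  set Y : Set ℕ := {n | 1 ≤ n ∧ u (n-1) < u n} with hY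
  have hYC : Y ⊆ C := by
    rintro n ⟨hn, hlt⟩
    obtain ⟨k, rfl⟩ : ∃ k, n = k + 1 := ⟨n-1, by omega⟩
    by_contra h
    simp only [hu, Nat.add_sub_cancel, cnt_succ_notMem h] at hlt
    exact lt_irrefl _ hlt
  have hcnt : ∀ n, cnt Y n = u n := by
    intro n
    induction n with
    | zero => simp [hu, cnt_zero]
    | succ n ih =>
      by_cases h : n + 1 ∈ Y
      · rw [cnt_succ_mem h, ih]
        have h2 : u n < u (n+1) := by simpa using h.2
        have h3 : u (n+1) ≤ u n + 1 := by
          have : u n + 1 = ⌊θ * (cnt C n : ℝ) + 1⌋₊ := by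
            rw [Nat.floor_add_one (by positivity)]
          rw [this]
          apply Nat.floor_le_floor
          rw [cnt_succ_mem (hYC h)]; push_cast; nlinarith
        omega
      · rw [cnt_succ_notMem h, ih]
        have h2 : ¬ u n < u (n+1) := by
          intro h3; exact h ⟨by omega, by simpa using h3⟩
        have h3 : u n ≤ u (n+1) := by
          apply Nat.floor_le_floor
          have : cnt C n ≤ cnt C (n+1) := by
            by_cases h : n + 1 ∈ C
            · rw [cnt_succ_mem h]; omega
            · rw [cnt_succ_notMem h]
          gcongr
        omega
  refine ⟨Y, hYC, ?_, ?_, ?_⟩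
  · rw [hd_iff] at *
    have hm := hC.const_mul θ
    have hl := hm.sub (tendsto_const_div_atTop_nhds_zero_nat (1:ℝ))
    rw [sub_zero] at hl
    refine tendsto_of_tendsto_of_tendsto_of_le_of_le hl hm (fun n => ?_) (fun n => ?_)
    · simp only [hcnt]
      rw [← mul_div_assoc, ← sub_div]
      gcongr
      exact (Nat.sub_one_lt_floor _).le
    · simp only [hcnt]
      rw [← mul_div_assoc]
      gcongr
      exact Nat.floor_le (by positivity)
  · intro h
    refine (Set.finite_singleton 0).subset ?_
    rintro n ⟨hn, hn'⟩
    by_contra h0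
    obtain ⟨k, rfl⟩ : ∃ k, n = k + 1 := ⟨n-1, by simp at h0; omega⟩
    apply hn'
    refine ⟨by omega, ?_⟩
    simp only [hu, h, one_mul, Nat.floor_natCast, Nat.add_sub_cancel, cnt_succ_mem hn]
    omega
  · intro h
    convert Set.finite_empty (α := ℕ)
    ext n
    simp [hY, hu, h]

lemma glue (X B : ℕ → Set ℕ) (r : ℕ → ℝ) (P : ℕ → ℕ → Prop → Prop)
    (hd : ∀ n, ∀ i < n, HasDensity (X n ∩ B i) (r i))
    (hP : ∀ n, ∀ i < n, ∀ᶠ m in Filter.atTop, P i m (m ∈ X n)) :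
    ∃ Y : Set ℕ, (∀ i, HasDensity (Y ∩ B i) (r i)) ∧
      ∀ i, ∀ᶠ m in Filter.atTop, P i m (m ∈ Y) := by
  have hK : ∀ n, ∃ K : ℕ, ∀ m ≥ K, ∀ i < n, P i m (m ∈ X n) ∧
      |(cnt (X n ∩ B i) m : ℝ) - r i * m| ≤ m / (n + 1) := by
    intro n
    have : ∀ᶠ m in Filter.atTop, ∀ i ∈ Finset.range n, P i m (m ∈ X n) ∧
      |(cnt (X n ∩ B i) m : ℝ) - r i * m| ≤ m / (n + 1) := by
      rw [Filter.eventually_all_finset]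
      intro i hi
      have hi' := Finset.mem_range.1 hi
      refine (hP n i hi').and ?_
      have h1 := Metric.tendsto_nhds.1 (hd_iff.1 (hd n i hi')) (1 / ((n:ℝ)+1)) (by positivity)
      filter_upwards [h1, Filter.eventually_ge_atTop 1] with m hm hm1
      have hmp : (0:ℝ) < m := by exact_mod_cast hm1
      rw [Real.dist_eq] at hm
      have e : (cnt (X n ∩ B i) m : ℝ) - r i * m = ((cnt (X n ∩ B i) m : ℝ) / m - r i) * m := by
        field_simp
      rw [e, abs_mul, abs_of_pos hmp]
      calc _ ≤ 1 / ((n:ℝ)+1) * m := by gcongr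
        _ = _ := by ring
    obtain ⟨K, hK⟩ := Filter.eventually_atTop.1 this
    exact ⟨K, fun m hm i hi => hK m hm i (Finset.mem_range.2 hi)⟩
  choose K hK using hK
  obtain ⟨k, k0, ks⟩ : ∃ k : ℕ → ℕ, k 0 = K 0 ∧
      ∀ n, k (n+1) = max (K (n+1)) ((n+1) * (k n + 1) + k n + 1) :=
    ⟨fun n => Nat.rec (K 0) (fun n kn => max (K (n+1)) ((n+1) * (kn + 1) + kn + 1)) n,
      rfl, fun n => rfl⟩
  have kK : ∀ n, K n ≤ k n := by
    intro n; cases n with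
    | zero => exact k0.ge
    | succ n => rw [ks]; exact le_max_left _ _
  have kbig : ∀ n, (n+1) * (k n + 1) + k n + 1 ≤ k (n+1) := by
    intro n; rw [ks]; exact le_max_right _ _
  have kmul : ∀ n, (n+1) * k n ≤ k (n+1) := by
    intro n; have := kbig n; nlinarith
  have kmono : StrictMono k := strictMono_nat_of_lt_succ (fun n => by
    have := kbig n; omega)
  have kid : ∀ n, n ≤ k n := fun n => kmono.le_apply
  let N : ℕ → ℕ := fun m => Nat.findGreatest (fun n => k n < m) m
  have hN : ∀ n m, k n < m → m ≤ k (n+1) → N m = n := by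
    intro n m h1 h2
    rw [Nat.findGreatest_eq_iff]
    refine ⟨by have := kid n; omega, fun _ => h1, fun j hj _ hk => ?_⟩
    have : k (n+1) ≤ k j := kmono.monotone hj
    omega
  have hex : ∀ n0 m, k n0 < m → ∃ n, n0 ≤ n ∧ k n < m ∧ m ≤ k (n+1) := by
    intro n0 m hm
    have hle : n0 ≤ m := by have := kid n0; omega
    refine ⟨N m, Nat.le_findGreatest hle hm, ?_, ?_⟩
    · exact Nat.findGreatest_spec (P := fun n => k n < m) hle hm
    · by_contra h
      push Not at h
      have h2 : N m + 1 ≤ m := by have := kid (N m + 1); omega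
      have := Nat.le_findGreatest (P := fun n => k n < m) h2 h
      have e : Nat.findGreatest (fun n => k n < m) m = N m := rfl
      omega
  let Y : Set ℕ := {m | m ∈ X (N m)}
  have hY : ∀ n m, k n < m → m ≤ k (n+1) → (m ∈ Y ↔ m ∈ X n) := by
    intro n m h1 h2
    show m ∈ X (N m) ↔ _
    rw [hN n m h1 h2]
  refine ⟨Y, fun i => ?_, fun i => ?_⟩
  · have step : ∀ n m, i < n → k n ≤ m → m ≤ k (n+1) →
        |(cnt (Y ∩ B i) m : ℝ) - r i * m| ≤
          |(cnt (Y ∩ B i) (k n) : ℝ) - r i * (k n : ℝ)| + 2 * m / (n+1) := by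
      intro n m hin h1 h2
      have hb := cnt_block (X := Y ∩ B i) (Y := X n ∩ B i) h1 (fun j hj1 hj2 => by
        simp only [Set.mem_inter_iff, hY n j hj1 (hj2.trans h2)])
      have hb' : (cnt (Y ∩ B i) m : ℝ) + cnt (X n ∩ B i) (k n)
        = cnt (X n ∩ B i) m + cnt (Y ∩ B i) (k n) := by exact_mod_cast hb
      have e1 := (hK n m ((kK n).trans h1) i hin).2
      have e2 := (hK n (k n) (kK n) i hin).2
      have e3 : ((k n : ℕ) : ℝ) / (n+1) ≤ m / (n+1) := by gcongr
      have e : (cnt (Y ∩ B i) m : ℝ) - r i * m = ((cnt (Y ∩ B i) (k n) : ℝ) - r i * (k n : ℝ))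
        + ((cnt (X n ∩ B i) m : ℝ) - r i * m) - ((cnt (X n ∩ B i) (k n) : ℝ) - r i * (k n : ℝ)) := by
        linarith
      rw [e]
      have e4 : (2 * (m:ℝ)) / (n+1) = m / (n+1) + m / (n+1) := by ring
      refine (abs_sub _ _).trans ?_
      have := abs_add_le ((cnt (Y ∩ B i) (k n) : ℝ) - r i * (k n : ℝ))
        ((cnt (X n ∩ B i) m : ℝ) - r i * m)
      linarith
    have main : ∀ n m, i < n → k (n+1) ≤ m → m ≤ k (n+2) →
        |(cnt (Y ∩ B i) m : ℝ) - r i * m| ≤ (5 + |r i|) / (n+1) * m := by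
      intro n m hin h1 h2
      have s1 := step (n+1) m (by omega) h1 h2
      have s2 := step n (k (n+1)) hin (kmono.monotone (by omega)) le_rfl
      have s3 : |(cnt (Y ∩ B i) (k n) : ℝ) - r i * (k n : ℝ)| ≤ (1 + |r i|) * k n := by
        refine (abs_sub _ _).trans ?_
        rw [abs_mul, Nat.abs_cast, Nat.abs_cast]
        have : (cnt (Y ∩ B i) (k n) : ℝ) ≤ k n := by exact_mod_cast cnt_le _ _
        linarith
      have s4 : (k n : ℝ) ≤ m / (n+1) := by
        rw [le_div_iff₀ (by positivity)]
        have := (kmul n).trans h1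
        have : (((n+1) * k n : ℕ) : ℝ) ≤ m := by exact_mod_cast this
        push_cast at this; linarith
      have s5 : 2 * (k (n+1) : ℝ) / (n+1) ≤ 2 * m / (n+1) := by gcongr
      have s6 : 2 * (m : ℝ) / ((n+1 : ℕ)+1) ≤ 2 * m / (n+1) := by
        push_cast; gcongr; linarith
      have s7 : (1 + |r i|) * k n ≤ (1 + |r i|) * (m / (n+1)) := by gcongr
      have : (5 + |r i|) / (n+1) * m = (1 + |r i|) * (m / (n+1)) + 2 * m / (n+1) + 2 * m / (n+1) := by
        ring
      linarith
    rw [hd_iff, Metric.tendsto_atTop]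
    intro ε hε
    obtain ⟨n0, hn0⟩ := exists_nat_gt ((5 + |r i|) / ε)
    refine ⟨k (n0 + i + 2) + 1, fun m hm => ?_⟩
    obtain ⟨n', hn1, hn2, hn3⟩ := hex (n0 + i + 2) m (by omega)
    obtain ⟨n, rfl⟩ : ∃ n, n' = n + 1 := ⟨n' - 1, by omega⟩
    have hmm := main n m (by omega) hn2.le hn3
    have hmp : (0:ℝ) < m := by exact_mod_cast (by omega : 0 < m)
    rw [Real.dist_eq]
    have e : (cnt (Y ∩ B i) m : ℝ) / m - r i = ((cnt (Y ∩ B i) m : ℝ) - r i * m) / m := by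
      field_simp
    rw [e, abs_div, abs_of_pos hmp, div_lt_iff₀ hmp]
    refine hmm.trans_lt ?_
    gcongr
    rw [div_lt_iff₀ (by positivity)]
    rw [div_lt_iff₀ hε] at hn0
    have : (n0 : ℝ) ≤ n + 1 := by exact_mod_cast (by omega : n0 ≤ n + 1)
    nlinarith
  · filter_upwards [Filter.eventually_gt_atTop (k (i+1))] with m hm
    obtain ⟨n, hn1, hn2, hn3⟩ := hex (i+1) m hm
    have := (hK n m ((kK n).trans hn2.le) i (by omega)).1
    have e : (m ∈ Y) = (m ∈ X n) := propext (hY n m hn2 hn3)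
    rw [e]; exact this

def iInf (A B : ISet) : ISet := ⟨(A : Set ℝ) ∩ (B : Set ℝ),
        ⟨A.2.1.inter B.2.1, fun _ hx => A.2.2 hx.1⟩⟩
def iSup (A B : ISet) : ISet := ⟨(A : Set ℝ) ∪ (B : Set ℝ),
        ⟨A.2.1.union B.2.1, Set.union_subset A.2.2 B.2.2⟩⟩
def iCompl (A : ISet) : ISet := ⟨Set.Ioc (0 : ℝ) 1 \ (A : Set ℝ),
        ⟨measurableSet_Ioc.diff A.2.1, Set.sdiff_subset⟩⟩
def iBot : ISet := ⟨∅, ⟨MeasurableSet.empty, Set.empty_subset _⟩⟩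
def iTop : ISet := ⟨Set.Ioc (0 : ℝ) 1, ⟨measurableSet_Ioc, subset_rfl⟩⟩
/-- the element `(A ∩ S) ∪ (A' \ S)` -/
def iMix (S A A' : ISet) : ISet := ⟨((A : Set ℝ) ∩ S) ∪ ((A' : Set ℝ) \ S),
  ⟨(A.2.1.inter S.2.1).union (A'.2.1.diff S.2.1),
    Set.union_subset (fun _ hx => A.2.2 hx.1) (fun _ hx => A'.2.2 hx.1)⟩⟩

lemma mk_eq_iff_s17 (A B : ISet) : MAlgI.mk A = MAlgI.mk B ↔
    volume (symmDiff (A : Set ℝ) (B : Set ℝ)) = 0 := Quotient.eq (r := measSetoidI)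

lemma pmk_eq_iff (X Y : Set ℕ) : PFin.mk X = PFin.mk Y ↔ (symmDiff X Y).Finite :=
  Quotient.eq (r := finSetoid ℕ)

lemma vol_ne_top (A : ISet) : volume (A : Set ℝ) ≠ ⊤ :=
  ne_top_of_le_ne_top (by simp) (measure_mono A.2.2 : _ ≤ volume (Set.Ioc (0:ℝ) 1))

/-- `A` represents an element of `L` and `B` represents its image -/
def IR (L : Set MAlgI) (φ : MAlgI → PFin ℕ) (A : ISet) (B : Set ℕ) : Prop :=
  MAlgI.mk A ∈ L ∧ PFin.mk B = φ (MAlgI.mk A)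

section
variable {L : Set MAlgI} {φ : MAlgI → PFin ℕ}

lemma IR.inf (hL : IsSubalgebra L) (hφ : IsEmbeddingOn L φ) {A A' : ISet} {B B' : Set ℕ}
    (h : IR L φ A B) (h' : IR L φ A' B') : IR L φ (iInf A A') (B ∩ B') := by
  refine ⟨hL.inf_mem _ h.1 _ h'.1, ?_⟩
  have := hφ.map_inf _ h.1 _ h'.1
  rw [← h.2, ← h'.2] at this
  exact this.symm

lemma IR.sup (hL : IsSubalgebra L) (hφ : IsEmbeddingOn L φ) {A A' : ISet} {B B' : Set ℕ}
    (h : IR L φ A B) (h' : IR L φ A' B') : IR L φ (iSup A A') (B ∪ B') := by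
  refine ⟨hL.sup_mem _ h.1 _ h'.1, ?_⟩
  have := hφ.map_sup _ h.1 _ h'.1
  rw [← h.2, ← h'.2] at this
  exact this.symm

lemma IR.compl (hL : IsSubalgebra L) (hφ : IsEmbeddingOn L φ) {A : ISet} {B : Set ℕ}
    (h : IR L φ A B) : IR L φ (iCompl A) Bᶜ := by
  refine ⟨hL.compl_mem _ h.1, ?_⟩
  have := hφ.map_compl _ h.1
  rw [← h.2] at this
  exact this.symm

lemma IR.bot (hL : IsSubalgebra L) (hφ : IsEmbeddingOn L φ) : IR L φ iBot ∅ :=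
  ⟨hL.bot_mem, hφ.map_bot.symm⟩

lemma IR.top (hL : IsSubalgebra L) (hφ : IsEmbeddingOn L φ) : IR L φ iTop Set.univ :=
  ⟨hL.top_mem, hφ.map_top.symm⟩

lemma IR.dens (hmp : MeasurePreservingOn L φ) {A : ISet} {B : Set ℕ}
    (h : IR L φ A B) : HasDensity B (volume (A : Set ℝ)).toReal :=
  hmp _ h.1 B h.2

lemma IR.fin (hφ : IsEmbeddingOn L φ) {A : ISet} {B : Set ℕ}
    (h : IR L φ A B) (h0 : volume (A : Set ℝ) = 0) : B.Finite := by
  have e : MAlgI.mk A = MAlgI.bot := (mk_eq_iff_s17 _ _).2 (by simpa using h0)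
  have h2 := h.2
  rw [e, hφ.map_bot] at h2
  refine ((pmk_eq_iff B ∅).1 h2).subset ?_
  intro x hx
  simp only [Set.mem_symmDiff, Set.mem_empty_iff_false]
  tauto

def Good (S A : Set ℝ) (B X : Set ℕ) : Prop :=
  HasDensity X (volume (A ∩ S)).toReal ∧ (volume (A \ S) = 0 → (B \ X).Finite) ∧
    (volume (A ∩ S) = 0 → X.Finite)

lemma Good.union {S : ISet} {A A' : Set ℝ} {B B' X X' : Set ℕ}
    (hA : MeasurableSet A') (hAA : Disjoint A A') (hXX : Disjoint X X')
    (h : Good S A B X) (h' : Good S A' B' X') : Good S (A ∪ A') (B ∪ B') (X ∪ X') := by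
  have hf : ∀ C : Set ℝ, volume (C ∩ S) ≠ ⊤ := fun C =>
    ne_top_of_le_ne_top (vol_ne_top S) (measure_mono Set.inter_subset_right)
  refine ⟨?_, fun h0 => ?_, fun h0 => ?_⟩
  · rw [Set.union_inter_distrib_right, measure_union (hAA.mono Set.inter_subset_left
      Set.inter_subset_left) (hA.inter S.2.1), ENNReal.toReal_add (hf _) (hf _)]
    exact hd_union hXX h.1 h'.1
  · have h1 := h.2.1 (measure_mono_null (Set.sdiff_subset_sdiff_left Set.subset_union_left) h0)
    have h2 := h'.2.1 (measure_mono_null (Set.sdiff_subset_sdiff_left Set.subset_union_right) h0)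
    refine (h1.union h2).subset ?_
    intro x hx
    simp only [Set.mem_union, Set.mem_sdiff] at *
    tauto
  · exact (h.2.2 (measure_mono_null (Set.inter_subset_inter_left _ Set.subset_union_left) h0)).union
      (h'.2.2 (measure_mono_null (Set.inter_subset_inter_left _ Set.subset_union_right) h0))

lemma base (hφ : IsEmbeddingOn L φ) (hmp : MeasurePreservingOn L φ)
    (S : ISet) {A : ISet} {B : Set ℕ} (h : IR L φ A B) : ∃ X ⊆ B, Good S A B X := by
  by_cases h0 : volume (A : Set ℝ) = 0
  · have hB := h.fin hφ h0
    refine ⟨∅, Set.empty_subset _, ?_, fun _ => by simpa using hB, fun _ => Set.finite_empty⟩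
    rw [measure_mono_null Set.inter_subset_left h0]
    exact hd_finite Set.finite_empty
  · have hc : 0 < (volume (A : Set ℝ)).toReal := ENNReal.toReal_pos h0 (vol_ne_top A)
    have hle : (volume ((A : Set ℝ) ∩ S)).toReal ≤ (volume (A : Set ℝ)).toReal :=
      ENNReal.toReal_mono (vol_ne_top A) (measure_mono Set.inter_subset_left)
    obtain ⟨X, hX, h1, h2, h3⟩ := exists_sub (h.dens hmp)
      (θ := (volume ((A : Set ℝ) ∩ S)).toReal / (volume (A : Set ℝ)).toReal)
      (by positivity) (div_le_one_of_le₀ hle hc.le)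
    refine ⟨X, hX, ?_, fun h0 => h2 ?_, fun h0 => h3 ?_⟩
    · rwa [div_mul_cancel₀ _ hc.ne'] at h1
    · have := measure_inter_add_sdiff (μ := volume) (A : Set ℝ) S.2.1
      rw [h0, add_zero] at this
      rw [this, div_self hc.ne']
    · rw [h0]; simp

lemma finite_stage (hL : IsSubalgebra L) (hφ : IsEmbeddingOn L φ) (hmp : MeasurePreservingOn L φ)
    (S : ISet) (l : List (ISet × Set ℕ)) : (∀ p ∈ l, IR L φ p.1 p.2) →
    ∀ (A : ISet) (B : Set ℕ), IR L φ A B → ∃ X ⊆ B, Good S A B X ∧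
      ∀ p ∈ l, Good S ((A : Set ℝ) ∩ p.1) (B ∩ p.2) (X ∩ p.2) := by
  induction l with
  | nil =>
    intro _ A B h
    obtain ⟨X, h1, h2⟩ := base hφ hmp S h
    exact ⟨X, h1, h2, by simp⟩
  | cons q l ih =>
    intro hl A B h
    have hq := hl q (by simp)
    have ih' := ih (fun p hp => hl p (by simp [hp]))
    obtain ⟨X1, hX1, g1, G1⟩ := ih' _ _ (h.inf hL hφ hq)
    obtain ⟨X2, hX2, g2, G2⟩ := ih' _ _ (h.inf hL hφ (hq.compl hL hφ))
    have m2 := (iInf A (iCompl q.1)).2.1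
    have eA : ((iInf A q.1 : ISet) : Set ℝ) ∪ (iInf A (iCompl q.1) : ISet) = A := by
      ext x
      have := @A.2.2 x
      simp only [iInf, iCompl, Set.mem_union, Set.mem_inter_iff, Set.mem_sdiff] at *
      tauto
    have dA : Disjoint ((iInf A q.1 : ISet) : Set ℝ) (iInf A (iCompl q.1) : ISet) := by
      rw [Set.disjoint_left]
      intro x hx hy
      exact hy.2.2 hx.2
    have dX : Disjoint X1 X2 := by
      rw [Set.disjoint_left]
      intro x hx hy
      exact (hX2 hy).2 (hX1 hx).2
    have eB : B ∩ q.2 ∪ B ∩ q.2ᶜ = B := Set.inter_union_compl B q.2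
    refine ⟨X1 ∪ X2, ?_, ?_, ?_⟩
    · rw [← eB]; exact Set.union_subset_union hX1 hX2
    · have := g1.union m2 dA dX g2
      rwa [eA, eB] at this
    · intro p hp
      rcases List.mem_cons.1 hp with rfl | hp
      · have : (X1 ∪ X2) ∩ p.2 = X1 := by
          ext x
          have a1 := @hX1 x
          have a2 := @hX2 x
          simp only [Set.mem_union, Set.mem_inter_iff, Set.mem_compl_iff] at *
          tauto
        rw [this]; exact g1
      · have := (G1 p hp).union (m2.inter p.1.2.1)
          (dA.mono Set.inter_subset_left Set.inter_subset_left)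
          (dX.mono Set.inter_subset_left Set.inter_subset_left) (G2 p hp)
        rwa [← Set.union_inter_distrib_right, ← Set.union_inter_distrib_right,
          ← Set.union_inter_distrib_right, eA, eB] at this

lemma exists_X (hL : IsSubalgebra L) (hcount : L.Countable) (hφ : IsEmbeddingOn L φ)
    (hmp : MeasurePreservingOn L φ) (S : ISet) :
    ∃ X : Set ℕ, ∀ A B, IR L φ A B → Good S A B (X ∩ B) := by
  obtain ⟨e, he⟩ := hcount.exists_eq_range ⟨_, hL.bot_mem⟩
  have hrep : ∀ n, ∃ p : ISet × Set ℕ, IR L φ p.1 p.2 ∧ MAlgI.mk p.1 = e n := by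
    intro n
    obtain ⟨A, hA⟩ : ∃ A, MAlgI.mk A = e n := Quotient.exists_rep (e n)
    obtain ⟨B, hB⟩ : ∃ B, PFin.mk B = φ (e n) := Quotient.exists_rep (φ (e n))
    exact ⟨(A, B), ⟨by rw [hA, he]; exact ⟨n, rfl⟩, by rw [hA]; exact hB⟩, hA⟩
  choose p hp hpe using hrep
  have hst : ∀ n : ℕ, ∃ X : Set ℕ, ∀ i < n, Good S (p i).1 (p i).2 (X ∩ (p i).2) := by
    intro n
    obtain ⟨X, -, -, hX⟩ := finite_stage hL hφ hmp S ((List.range n).map p)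
      (by simpa using fun i _ => hp i) _ _ (IR.top hL hφ)
    refine ⟨X, fun i hi => ?_⟩
    have := hX (p i) (by simpa using ⟨i, hi, rfl⟩)
    rwa [Set.univ_inter, Set.inter_eq_right.2 (show ((p i).1 : Set ℝ) ⊆ iTop from (p i).1.2.2)]
      at this
  choose X hX using hst
  have ev : ∀ s : Set ℕ, s.Finite → ∀ᶠ m in Filter.atTop, m ∉ s := by
    intro s hs
    rw [← Nat.cofinite_eq_atTop]
    exact hs.eventually_cofinite_notMem
  have ev' : ∀ s : Set ℕ, (∀ᶠ m in Filter.atTop, m ∉ s) → s.Finite := by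
    intro s hs
    rw [← Nat.cofinite_eq_atTop] at hs
    simpa [Filter.eventually_cofinite] using hs
  obtain ⟨Y, hY1, hY2⟩ := glue X (fun i => (p i).2)
    (fun i => (volume (((p i).1 : Set ℝ) ∩ S)).toReal)
    (fun i m q => (volume (((p i).1 : Set ℝ) \ S) = 0 → m ∈ (p i).2 → q) ∧
      (volume (((p i).1 : Set ℝ) ∩ S) = 0 → m ∈ (p i).2 → ¬ q))
    (fun n i hi => (hX n i hi).1)
    (fun n i hi => by
      refine Filter.Eventually.and ?_ ?_
      · rw [Filter.eventually_imp_distrib_left]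
        intro h0
        filter_upwards [ev _ ((hX n i hi).2.1 h0)] with m hm
        simp only [Set.mem_sdiff, Set.mem_inter_iff] at hm
        tauto
      · rw [Filter.eventually_imp_distrib_left]
        intro h0
        filter_upwards [ev _ ((hX n i hi).2.2 h0)] with m hm
        simp only [Set.mem_inter_iff] at hm
        tauto)
  refine ⟨Y, fun A B hAB => ?_⟩
  obtain ⟨i, hi⟩ : MAlgI.mk A ∈ Set.range e := he ▸ hAB.1
  have eA : MAlgI.mk (p i).1 = MAlgI.mk A := (hpe i).trans hi
  have eB : (symmDiff (p i).2 B).Finite := by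
    rw [← pmk_eq_iff, (hp i).2, hAB.2, eA]
  have hae : ((p i).1 : Set ℝ) =ᵐ[volume] (A : Set ℝ) :=
    measure_symmDiff_eq_zero_iff.1 ((mk_eq_iff_s17 _ _).1 eA)
  have v1 : volume (((p i).1 : Set ℝ) ∩ S) = volume ((A : Set ℝ) ∩ S) :=
    measure_congr (hae.inter (Filter.EventuallyEq.refl _ _))
  have v2 : volume (((p i).1 : Set ℝ) \ S) = volume ((A : Set ℝ) \ S) :=
    measure_congr (hae.diff (Filter.EventuallyEq.refl _ _))
  refine ⟨?_, fun h0 => ?_, fun h0 => ?_⟩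
  · rw [← v1]
    refine hd_congr (eB.subset ?_) (hY1 i)
    intro x hx
    simp only [Set.mem_symmDiff, Set.mem_inter_iff] at *
    tauto
  · rw [← v2] at h0
    have h1 : ((p i).2 \ Y).Finite := ev' _ (by
      filter_upwards [hY2 i] with m hm
      have := hm.1 h0
      simp only [Set.mem_sdiff, Set.mem_inter_iff]; tauto)
    refine (h1.union eB).subset ?_
    intro x hx
    simp only [Set.mem_symmDiff, Set.mem_inter_iff, Set.mem_union, Set.mem_sdiff] at *
    tauto
  · rw [← v1] at h0
    have h1 : ((p i).2 ∩ Y).Finite := ev' _ (by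
      filter_upwards [hY2 i] with m hm
      have := hm.2 h0
      simp only [Set.mem_sdiff, Set.mem_inter_iff]; tauto)
    refine (h1.union eB).subset ?_
    intro x hx
    simp only [Set.mem_symmDiff, Set.mem_inter_iff, Set.mem_union] at *
    tauto

/-- the graph of the extension -/
def Ext (L : Set MAlgI) (φ : MAlgI → PFin ℕ) (S : ISet) (X : Set ℕ)
    (z : MAlgI) (w : PFin ℕ) : Prop :=
  ∃ A B A' B', IR L φ A B ∧ IR L φ A' B' ∧ z = MAlgI.mk (iMix S A A') ∧
    w = PFin.mk ((B ∩ X) ∪ (B' \ X))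

variable {S : ISet} {X : Set ℕ}

lemma Ext.sup (hL : IsSubalgebra L) (hφ : IsEmbeddingOn L φ) {z z' : MAlgI} {w w' : PFin ℕ}
    (h : Ext L φ S X z w) (h' : Ext L φ S X z' w') :
    Ext L φ S X (MAlgI.sup z z') (PFin.sup w w') := by
  obtain ⟨A, B, A', B', r, r', rfl, rfl⟩ := h
  obtain ⟨C, D, C', D', s, s', rfl, rfl⟩ := h'
  refine ⟨_, _, _, _, r.sup hL hφ s, r'.sup hL hφ s', ?_, ?_⟩
  · refine congrArg MAlgI.mk (Subtype.ext ?_)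
    ext x
    simp only [iMix, iSup, Set.mem_union, Set.mem_inter_iff, Set.mem_sdiff]
    tauto
  · refine congrArg PFin.mk ?_
    ext x
    simp only [Set.mem_union, Set.mem_inter_iff, Set.mem_sdiff]
    tauto

lemma Ext.inf (hL : IsSubalgebra L) (hφ : IsEmbeddingOn L φ) {z z' : MAlgI} {w w' : PFin ℕ}
    (h : Ext L φ S X z w) (h' : Ext L φ S X z' w') :
    Ext L φ S X (MAlgI.inf z z') (PFin.inf w w') := by
  obtain ⟨A, B, A', B', r, r', rfl, rfl⟩ := h
  obtain ⟨C, D, C', D', s, s', rfl, rfl⟩ := h'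
  refine ⟨_, _, _, _, r.inf hL hφ s, r'.inf hL hφ s', ?_, ?_⟩
  · refine congrArg MAlgI.mk (Subtype.ext ?_)
    ext x
    simp only [iMix, iInf, Set.mem_union, Set.mem_inter_iff, Set.mem_sdiff]
    tauto
  · refine congrArg PFin.mk ?_
    ext x
    simp only [Set.mem_union, Set.mem_inter_iff, Set.mem_sdiff]
    tauto

lemma Ext.compl (hL : IsSubalgebra L) (hφ : IsEmbeddingOn L φ) {z : MAlgI} {w : PFin ℕ}
    (h : Ext L φ S X z w) : Ext L φ S X (MAlgI.compl z) (PFin.compl w) := by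
  obtain ⟨A, B, A', B', r, r', rfl, rfl⟩ := h
  refine ⟨_, _, _, _, r.compl hL hφ, r'.compl hL hφ, ?_, ?_⟩
  · refine congrArg MAlgI.mk (Subtype.ext ?_)
    ext x
    simp only [iMix, iCompl, Set.mem_union, Set.mem_inter_iff, Set.mem_sdiff]
    tauto
  · refine congrArg PFin.mk ?_
    ext x
    simp only [Set.mem_union, Set.mem_inter_iff, Set.mem_sdiff, Set.mem_compl_iff]
    tauto

lemma Ext.of_mem {b : MAlgI} (hb : b ∈ L) : Ext L φ S X b (φ b) := by
  obtain ⟨A, rfl⟩ : ∃ A, MAlgI.mk A = b := Quotient.exists_rep b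
  obtain ⟨B, hB⟩ : ∃ B, PFin.mk B = φ (MAlgI.mk A) := Quotient.exists_rep _
  refine ⟨A, B, A, B, ⟨hb, hB⟩, ⟨hb, hB⟩, ?_, ?_⟩
  · refine congrArg MAlgI.mk (Subtype.ext ?_)
    exact (Set.inter_union_sdiff _ _).symm
  · rw [← hB, Set.inter_union_sdiff]

lemma Ext.self (hL : IsSubalgebra L) (hφ : IsEmbeddingOn L φ) :
    ∃ w, Ext L φ S X (MAlgI.mk S) w := by
  refine ⟨_, _, _, _, _, IR.top hL hφ, IR.bot hL hφ, ?_, rfl⟩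
  refine congrArg MAlgI.mk (Subtype.ext ?_)
  ext x
  have := @S.2.2 x
  simp only [iMix, iTop, iBot, Set.mem_union, Set.mem_inter_iff, Set.mem_sdiff,
    Set.mem_empty_iff_false] at *
  tauto

lemma Ext.dens (hmp : MeasurePreservingOn L φ) (hX : ∀ A B, IR L φ A B → Good S A B (X ∩ B))
    {z : MAlgI} {w : PFin ℕ} (h : Ext L φ S X z w) (Y : Set ℕ) (hY : PFin.mk Y = w) :
    HasDensity Y (mval z).toReal := by
  obtain ⟨A, B, A', B', r, r', rfl, rfl⟩ := h
  have hs := (pmk_eq_iff _ _).1 hY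
  rw [symmDiff_comm] at hs
  refine hd_congr hs ?_
  have e : mval (MAlgI.mk (iMix S A A')) = volume ((A : Set ℝ) ∩ S) + volume ((A' : Set ℝ) \ S) := by
    refine measure_union ?_ (A'.2.1.diff S.2.1)
    rw [Set.disjoint_left]
    intro x hx hy
    exact hy.2 hx.2
  have f1 : volume ((A : Set ℝ) ∩ S) ≠ ⊤ := vol_ne_top (iInf A S)
  have f1' : volume ((A' : Set ℝ) ∩ S) ≠ ⊤ := vol_ne_top (iInf A' S)
  have f2 : volume ((A' : Set ℝ) \ S) ≠ ⊤ :=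
    ne_top_of_le_ne_top (vol_ne_top A') (measure_mono Set.sdiff_subset)
  rw [e, ENNReal.toReal_add f1 f2]
  refine hd_union ?_ ?_ ?_
  · rw [Set.disjoint_left]
    intro x hx hy
    exact hy.2 hx.2
  · have := (hX _ _ r).1
    rwa [Set.inter_comm] at this
  · have h1 := hd_diff Set.inter_subset_right (r'.dens hmp) (hX _ _ r').1
    have e2 : B' \ (X ∩ B') = B' \ X := by
      ext x; simp only [Set.mem_sdiff, Set.mem_inter_iff]; tauto
    rw [e2] at h1
    have e3 := measure_inter_add_sdiff (μ := volume) (A' : Set ℝ) S.2.1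
    rw [← e3, ENNReal.toReal_add f1' f2, add_sub_cancel_left] at h1
    exact h1

lemma mval_eq_zero {z : MAlgI} : mval z = 0 ↔ z = MAlgI.bot := by
  obtain ⟨A, rfl⟩ : ∃ A, MAlgI.mk A = z := Quotient.exists_rep z
  have : MAlgI.mk A = MAlgI.bot ↔ _ := mk_eq_iff_s17 A iBot
  rw [this]
  show volume (A : Set ℝ) = 0 ↔ _
  simp [iBot]

lemma mval_ne_top (z : MAlgI) : mval z ≠ ⊤ := by
  obtain ⟨A, rfl⟩ : ∃ A, MAlgI.mk A = z := Quotient.exists_rep z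
  exact vol_ne_top A

lemma Ext.bot_iff (hmp : MeasurePreservingOn L φ) (hX : ∀ A B, IR L φ A B → Good S A B (X ∩ B))
    {z : MAlgI} {w : PFin ℕ} (h : Ext L φ S X z w) : z = MAlgI.bot ↔ w = PFin.bot := by
  constructor
  · intro hz
    obtain ⟨A, B, A', B', r, r', rfl, rfl⟩ := h
    rw [← mval_eq_zero] at hz
    have hz' : volume (((A : Set ℝ) ∩ S) ∪ ((A' : Set ℝ) \ S)) = 0 := hz
    have h1 := (hX _ _ r).2.2 (measure_mono_null Set.subset_union_left hz')
    have h2 := (hX _ _ r').2.1 (measure_mono_null Set.subset_union_right hz')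
    refine (pmk_eq_iff _ _).2 ((h1.union h2).subset ?_)
    intro x hx
    simp only [Set.mem_symmDiff, Set.mem_inter_iff, Set.mem_union, Set.mem_sdiff,
      Set.mem_empty_iff_false] at *
    tauto
  · intro hw
    have h1 := h.dens hmp hX ∅ hw.symm
    have h2 := hd_unique h1 (hd_finite Set.finite_empty)
    rw [← mval_eq_zero]
    rcases (ENNReal.toReal_eq_zero_iff _).1 h2 with h3 | h3
    · exact h3
    · exact absurd h3 (mval_ne_top z)

lemma malg_eq_iff (z z' : MAlgI) : z = z' ↔
    MAlgI.sup (MAlgI.inf z (MAlgI.compl z')) (MAlgI.inf z' (MAlgI.compl z)) = MAlgI.bot := by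
  obtain ⟨A, rfl⟩ : ∃ A, MAlgI.mk A = z := Quotient.exists_rep z
  obtain ⟨B, rfl⟩ : ∃ A, MAlgI.mk A = z' := Quotient.exists_rep z'
  rw [← mval_eq_zero, mk_eq_iff_s17]
  show _ ↔ volume (((A : Set ℝ) ∩ (Set.Ioc 0 1 \ (B : Set ℝ))) ∪
    ((B : Set ℝ) ∩ (Set.Ioc 0 1 \ (A : Set ℝ)))) = 0
  have : ((A : Set ℝ) ∩ (Set.Ioc 0 1 \ (B : Set ℝ))) ∪
    ((B : Set ℝ) ∩ (Set.Ioc 0 1 \ (A : Set ℝ))) = symmDiff (A : Set ℝ) B := by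
    ext x
    have h1 := @A.2.2 x
    have h2 := @B.2.2 x
    simp only [Set.mem_symmDiff, Set.mem_inter_iff, Set.mem_union, Set.mem_sdiff] at *
    tauto
  rw [this]

lemma pfin_eq_iff (z z' : PFin ℕ) : z = z' ↔
    PFin.sup (PFin.inf z (PFin.compl z')) (PFin.inf z' (PFin.compl z)) = PFin.bot := by
  obtain ⟨A, rfl⟩ : ∃ A, PFin.mk A = z := Quotient.exists_rep z
  obtain ⟨B, rfl⟩ : ∃ A, PFin.mk A = z' := Quotient.exists_rep z'
  have : PFin.sup (PFin.inf (PFin.mk A) (PFin.compl (PFin.mk B)))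
      (PFin.inf (PFin.mk B) (PFin.compl (PFin.mk A))) = PFin.bot ↔ _ :=
    pmk_eq_iff ((A ∩ Bᶜ) ∪ (B ∩ Aᶜ)) ∅
  rw [this, pmk_eq_iff]
  have : symmDiff ((A ∩ Bᶜ) ∪ (B ∩ Aᶜ)) ∅ = symmDiff A B := by
    ext x
    simp only [Set.mem_symmDiff, Set.mem_inter_iff, Set.mem_union, Set.mem_compl_iff,
      Set.mem_empty_iff_false]
    tauto
  rw [this]

lemma Ext.eq_iff (hL : IsSubalgebra L) (hφ : IsEmbeddingOn L φ)
    (hmp : MeasurePreservingOn L φ) (hX : ∀ A B, IR L φ A B → Good S A B (X ∩ B))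
    {z z' : MAlgI} {w w' : PFin ℕ} (h : Ext L φ S X z w) (h' : Ext L φ S X z' w') :
    z = z' ↔ w = w' := by
  rw [malg_eq_iff, pfin_eq_iff]
  exact ((h.inf hL hφ (h'.compl hL hφ)).sup hL hφ (h'.inf hL hφ (h.compl hL hφ))).bot_iff hmp hX

end

/-- every measure-preserving embedding of a countable subalgebra `𝕃` of `ℳ`
into `P(ℕ)/fin` extends over one more element to a measure-preserving embedding of the
subalgebra generated by `𝕃 ∪ {a}`. -/
theorem measure_preserving_extension_countable
    (L : Set MAlgI) (hL : IsSubalgebra L) (hcount : L.Countable)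
    (a : MAlgI) (ha : a ∉ L)
    (φ : MAlgI → PFin ℕ) (hφ : IsEmbeddingOn L φ) (hmp : MeasurePreservingOn L φ) :
    ∃ ψ : MAlgI → PFin ℕ, (∀ b ∈ L, ψ b = φ b) ∧
      IsEmbeddingOn (genBy (insert a L)) ψ ∧
      MeasurePreservingOn (genBy (insert a L)) ψ := by
  classical
  obtain ⟨S, rfl⟩ : ∃ A, MAlgI.mk A = a := Quotient.exists_rep a
  obtain ⟨X, hX⟩ := exists_X hL hcount hφ hmp S
  let ψ : MAlgI → PFin ℕ := fun z => if h : ∃ w, Ext L φ S X z w then h.choose else φ z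
  have hψ : ∀ z w, Ext L φ S X z w → ψ z = w := by
    intro z w h
    have hex : ∃ w, Ext L φ S X z w := ⟨w, h⟩
    have e : ψ z = hex.choose := dif_pos hex
    rw [e]
    exact (Ext.eq_iff hL hφ hmp hX hex.choose_spec h).1 rfl
  have hsub : genBy (insert (MAlgI.mk S) L) ⊆ {z | ∃ w, Ext L φ S X z w} := by
    apply Set.sInter_subset_of_mem
    refine ⟨⟨⟨_, Ext.of_mem hL.bot_mem⟩, ⟨_, Ext.of_mem hL.top_mem⟩, ?_, ?_, ?_⟩, ?_⟩
    · rintro z ⟨w, h⟩ z' ⟨w', h'⟩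
      exact ⟨_, h.sup hL hφ h'⟩
    · rintro z ⟨w, h⟩ z' ⟨w', h'⟩
      exact ⟨_, h.inf hL hφ h'⟩
    · rintro z ⟨w, h⟩
      exact ⟨_, h.compl hL hφ⟩
    · rintro z (rfl | hz)
      · exact Ext.self hL hφ
      · exact ⟨_, Ext.of_mem hz⟩
  have hE : ∀ z ∈ genBy (insert (MAlgI.mk S) L), Ext L φ S X z (ψ z) := by
    intro z hz
    obtain ⟨w, hw⟩ := hsub hz
    rw [hψ z w hw]; exact hw
  refine ⟨ψ, fun b hb => hψ _ _ (Ext.of_mem hb), ⟨?_, ?_, ?_, ?_, ?_, ?_⟩, ?_⟩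
  · intro z hz z' hz' h
    exact (Ext.eq_iff hL hφ hmp hX (hE z hz) (hE z' hz')).2 h
  · intro z hz z' hz'
    exact hψ _ _ ((hE z hz).sup hL hφ (hE z' hz'))
  · intro z hz z' hz'
    exact hψ _ _ ((hE z hz).inf hL hφ (hE z' hz'))
  · intro z hz
    exact hψ _ _ ((hE z hz).compl hL hφ)
  · rw [hψ _ _ (Ext.of_mem hL.bot_mem), hφ.map_bot]
  · rw [hψ _ _ (Ext.of_mem hL.top_mem), hφ.map_top]
  · intro z hz Y hY
    exact (hE z hz).dens hmp hX Y hY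

end Paper
end
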